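/- arXiv:2103.10547 — 6 statements merged into one kernel-verified Lean document; each statement's English description precedes it below -/
import Mathlib

section
/- Let d and p be positive integers. There exists a constant k (depending only on d and p) such that no collection of k distinct algebraic hypersurfaces of degree at most d in ℝ^p can be shattered by axis-aligned line segments. That is, for every collection 𝒞 of k such hypersurfaces there is a subset S ⊆ 𝒞 that is not hit by any axis-aligned line segment. -/
/-- An algebraic hypersurface of degree at most `d` in `ℝ^p`: the zero set of a
nonzero real polynomial in `p` variables of total degree at most `d`. -/
def IsAlgHypersurface (d p : ℕ) (H : Set (Fin p → ℝ)) : Prop :=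
  ∃ f : MvPolynomial (Fin p) ℝ, f ≠ 0 ∧ f.totalDegree ≤ d ∧
    H = {x : Fin p → ℝ | MvPolynomial.eval x f = 0}

/-- An axis-aligned line segment in `ℝ^p`. -/
def IsAxisSegment (p : ℕ) (s : Set (Fin p → ℝ)) : Prop :=
  ∃ (x : Fin p → ℝ) (i : Fin p) (ℓ : ℝ), 0 ≤ ℓ ∧
    s = {y : Fin p → ℝ | ∃ t ∈ Set.Icc (0 : ℝ) ℓ, y = x + t • (Pi.single i 1 : Fin p → ℝ)}

namespace SegVC

open Polynomial

/-! ### Real polynomial facts -/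

lemma strict_of_deriv_ne (P : ℝ[X]) {α β : ℝ} (h : α < β)
    (hd : ∀ s, α < s → s < β → P.derivative.eval s ≠ 0) :
    StrictMonoOn (fun t => P.eval t) (Set.Icc α β) ∨
      StrictAntiOn (fun t => P.eval t) (Set.Icc α β) := by
  refine ContinuousOn.strictMonoOn_of_injOn_Icc' h.le P.continuous.continuousOn ?_
  have key : ∀ s ∈ Set.Icc α β, ∀ t ∈ Set.Icc α β, s < t → P.eval s ≠ P.eval t := by
    intro s hs t ht hst heq
    obtain ⟨c, hc, hc0⟩ := exists_deriv_eq_zero (f := fun t => P.eval t) hst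
      P.continuous.continuousOn heq
    rw [Polynomial.deriv] at hc0
    exact hd c (lt_of_le_of_lt hs.1 hc.1) (lt_of_lt_of_le hc.2 ht.2) hc0
  intro s hs t ht heq
  rcases lt_trichotomy s t with h1 | h1 | h1
  · exact absurd heq (key s hs t ht h1)
  · exact h1
  · exact absurd heq.symm (key t ht s hs h1)

lemma ends_neg (P : ℝ[X]) {α β v : ℝ} (h1 : α < v) (h2 : v < β) (hv : P.eval v = 0)
    (hd : ∀ s, α < s → s < β → P.derivative.eval s ≠ 0) :
    P.eval α * P.eval β < 0 := by
  have hα : α ∈ Set.Icc α β := ⟨le_rfl, (h1.trans h2).le⟩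
  have hβ : β ∈ Set.Icc α β := ⟨(h1.trans h2).le, le_rfl⟩
  have hvm : v ∈ Set.Icc α β := ⟨h1.le, h2.le⟩
  rcases strict_of_deriv_ne P (h1.trans h2) hd with h | h
  · have a1 := h hα hvm h1
    have a2 := h hvm hβ h2
    simp only [hv] at a1 a2
    exact mul_neg_of_neg_of_pos a1 a2
  · have a1 := h hα hvm h1
    have a2 := h hvm hβ h2
    simp only [hv] at a1 a2
    exact mul_neg_of_pos_of_neg a1 a2

lemma exists_root (P : ℝ[X]) {α β : ℝ} (h : α < β) (hn : P.eval α * P.eval β < 0) :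
    ∃ t, α < t ∧ t < β ∧ P.eval t = 0 := by
  rcases mul_neg_iff.1 hn with ⟨h1, h2⟩ | ⟨h1, h2⟩
  · obtain ⟨t, ht, h0⟩ := intermediate_value_Ioo' h.le (f := fun t => P.eval t)
      P.continuous.continuousOn (show (0 : ℝ) ∈ Set.Ioo _ _ from ⟨h2, h1⟩)
    exact ⟨t, ht.1, ht.2, h0⟩
  · obtain ⟨t, ht, h0⟩ := intermediate_value_Ioo h.le (f := fun t => P.eval t)
      P.continuous.continuousOn (show (0 : ℝ) ∈ Set.Ioo _ _ from ⟨h1, h2⟩)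
    exact ⟨t, ht.1, ht.2, h0⟩

lemma compare_root (P : ℝ[X]) {α β v w : ℝ} (h1 : α < v) (h2 : v < β) (hv : P.eval v = 0)
    (hd : ∀ s, α < s → s < β → P.derivative.eval s ≠ 0) (hw1 : α ≤ w) (hw2 : w ≤ β) :
    (w < v ↔ 0 < P.eval w * P.eval α) ∧ (v < w ↔ P.eval w * P.eval α < 0) := by
  have hα : α ∈ Set.Icc α β := ⟨le_rfl, (h1.trans h2).le⟩
  have hvm : v ∈ Set.Icc α β := ⟨h1.le, h2.le⟩
  have hwm : w ∈ Set.Icc α β := ⟨hw1, hw2⟩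
  rcases strict_of_deriv_ne P (h1.trans h2) hd with h | h
  · have a1 := h hα hvm h1
    simp only [hv] at a1
    have b1 := h.lt_iff_lt hwm hvm
    have b2 := h.lt_iff_lt hvm hwm
    simp only [hv] at b1 b2
    rw [← b1, ← b2]
    exact ⟨(pos_iff_neg_of_mul_pos' a1), (neg_iff' a1)⟩
  · have a1 := h hα hvm h1
    simp only [hv] at a1
    have b1 := h.lt_iff_gt hwm hvm
    have b2 := h.lt_iff_gt hvm hwm
    simp only [hv] at b1 b2
    rw [← b1, ← b2]
    exact ⟨(mul_pos_iff_of_pos_right a1).symm, by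
      constructor
      · intro h; exact mul_neg_of_neg_of_pos h a1
      · intro h; by_contra h'; push Not at h'; nlinarith [mul_nonneg h' a1.le]⟩
where
  pos_iff_neg_of_mul_pos' {x y : ℝ} (hy : y < 0) : x < 0 ↔ 0 < x * y := by
    constructor
    · intro h; exact mul_pos_of_neg_of_neg h hy
    · intro h; by_contra h'; push Not at h'; nlinarith [mul_nonneg h' (neg_nonneg.2 hy.le)]
  neg_iff' {x y : ℝ} (hy : y < 0) : 0 < x ↔ x * y < 0 := by
    constructor
    · intro h; exact mul_neg_of_pos_of_neg h hy
    · intro h; by_contra h'; push Not at h'; nlinarith [mul_nonneg (neg_nonneg.2 h') (neg_nonneg.2 hy.le)]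

lemma root_unique (P : ℝ[X]) {α β v w : ℝ} (h1 : α < v) (h2 : v < β) (hv : P.eval v = 0)
    (hd : ∀ s, α < s → s < β → P.derivative.eval s ≠ 0) (hw1 : α < w) (hw2 : w < β)
    (hw : P.eval w = 0) : w = v := by
  have := compare_root P h1 h2 hv hd hw1.le hw2.le
  rw [hw, zero_mul] at this
  rcases lt_trichotomy w v with h | h | h
  · exact absurd (this.1.1 h) (lt_irrefl _)
  · exact h
  · exact absurd (this.2.1 h) (lt_irrefl _)

lemma sign_const (Q : ℝ[X]) {α β s t : ℝ} (hs1 : α < s) (hs2 : s < β) (ht1 : α < t) (ht2 : t < β)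
    (h0 : ∀ w, α < w → w < β → Q.eval w ≠ 0) (hs : 0 < Q.eval s) : 0 < Q.eval t := by
  by_contra hn
  push Not at hn
  have : (0 : ℝ) ∈ (fun t => Q.eval t) '' Set.Ioo α β :=
    (isPreconnected_Ioo.image _ Q.continuous.continuousOn).ordConnected.out
      ⟨t, ⟨ht1, ht2⟩, rfl⟩ ⟨s, ⟨hs1, hs2⟩, rfl⟩ ⟨hn, hs.le⟩
  obtain ⟨w, hw, hw0⟩ := this
  exact h0 w hw.1 hw.2 hw0

lemma exists_nearest {ι : Type*} (W : Finset ι) (f : ι → ℝ) (t : ℝ)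
    (h1 : ∃ w ∈ W, f w < t) (h2 : ∃ w ∈ W, t < f w) :
    ∃ w1 ∈ W, ∃ w2 ∈ W, f w1 < t ∧ t < f w2 ∧
      (∀ w ∈ W, f w < t → f w ≤ f w1) ∧ (∀ w ∈ W, t < f w → f w2 ≤ f w) := by
  classical
  obtain ⟨x, hx, hxt⟩ := h1
  obtain ⟨y, hy, hyt⟩ := h2
  obtain ⟨w1, hw1, hm1⟩ := Finset.exists_max_image (W.filter (fun w => f w < t)) f
    ⟨x, by simp [hx, hxt]⟩
  obtain ⟨w2, hw2, hm2⟩ := Finset.exists_min_image (W.filter (fun w => t < f w)) f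
    ⟨y, by simp [hy, hyt]⟩
  simp only [Finset.mem_filter, and_imp] at hw1 hm1 hw2 hm2
  exact ⟨w1, hw1.1, w2, hw2.1, hw1.2, hw2.2, hm1, hm2⟩

/-! ### Boolean algebras of predicates -/

structure BA {X : Type*} (B : (X → Prop) → Prop) : Prop where
  tru : B (fun _ => True)
  not : ∀ p, B p → B (fun x => ¬ p x)
  and : ∀ p q, B p → B q → B (fun x => p x ∧ q x)

section
variable {X : Type*} {B : (X → Prop) → Prop}

lemma BA.or (h : BA B) (p q : X → Prop) (hp : B p) (hq : B q) : B (fun x => p x ∨ q x) := by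
  have := h.not _ (h.and _ _ (h.not _ hp) (h.not _ hq))
  convert this using 2
  tauto

lemma BA.imp (h : BA B) (p q : X → Prop) (hp : B p) (hq : B q) : B (fun x => p x → q x) := by
  have := h.or _ _ (h.not _ hp) hq
  convert this using 2
  tauto

lemma BA.all (h : BA B) {ι : Type*} (L : Finset ι) (p : ι → X → Prop) (hp : ∀ i ∈ L, B (p i)) :
    B (fun x => ∀ i ∈ L, p i x) := by
  classical
  induction L using Finset.induction_on with
  | empty => simpa using h.tru
  | insert a s ha ih =>
    have := h.and _ _ (hp a (by simp)) (ih (fun i hi => hp i (by simp [hi])))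
    convert this using 2
    simp

lemma BA.ex (h : BA B) {ι : Type*} (L : Finset ι) (p : ι → X → Prop) (hp : ∀ i ∈ L, B (p i)) :
    B (fun x => ∃ i ∈ L, p i x) := by
  have := h.not _ (h.all L (fun i x => ¬ p i x) (fun i hi => h.not _ (hp i hi)))
  convert this using 2
  push Not
  rfl

/-! ### Maximal tame rings -/

/-- evaluation at a point -/
def ev (R : Subring (X → ℝ)) (x : X) : R →+* ℝ := (Pi.evalRingHom (fun _ => ℝ) x).comp R.subtype

lemma ev_apply (R : Subring (X → ℝ)) (x : X) (r : R) : ev R x r = r.1 x := rfl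

lemma aeval_apply' (R : Subring (X → ℝ)) (x : X) (v : X → ℝ) (q : R[X]) :
    (aeval v q : X → ℝ) x = (q.map (ev R x)).eval (v x) := by
  rw [eval_map, aeval_def]
  exact hom_eval₂ q (algebraMap R (X → ℝ)) (Pi.evalRingHom (fun _ => ℝ) x) v

lemma ev_eval (R : Subring (X → ℝ)) (x : X) (u : R) (q : R[X]) :
    (q.map (ev R x)).eval (ev R x u) = ev R x (q.eval u) := by
  rw [eval_map, eval₂_at_apply]

structure MaxTame (B : (X → Prop) → Prop) (R : Subring (X → ℝ)) : Prop where
  ba : BA B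
  pos : ∀ r : R, B (fun x => 0 < ev R x r)
  max : ∀ v : X → ℝ, (∀ q : R[X], B (fun x => 0 < (q.map (ev R x)).eval (v x))) → v ∈ R

lemma exists_maxTame (hB : BA B) (R₀ : Subring (X → ℝ)) (h₀ : ∀ r ∈ R₀, B (fun x => 0 < r x)) :
    ∃ R, R₀ ≤ R ∧ MaxTame B R := by
  obtain ⟨R, hR, hmax⟩ := zorn_le_nonempty₀ {R : Subring (X → ℝ) | ∀ r ∈ R, B (fun x => 0 < r x)}
    (by
      intro c hc hch R hR
      refine ⟨sSup c, ?_, fun z hz => le_sSup hz⟩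
      intro r hr
      rw [Subring.mem_sSup_of_directedOn ⟨R, hR⟩ hch.directedOn] at hr
      obtain ⟨S, hS, hrS⟩ := hr
      exact hc hS r hrS) R₀ h₀
  refine ⟨R, hR, hB, fun r => hmax.prop r.1 r.2, ?_⟩
  intro v hv
  let S : Subring (X → ℝ) := (aeval v : R[X] →ₐ[R] (X → ℝ)).toRingHom.range
  have hS : R ≤ S := by
    intro r hr
    exact ⟨C ⟨r, hr⟩, by simp; rfl⟩
  have := hmax.le_of_ge (y := S) (by
    rintro _ ⟨q, rfl⟩
    have := hv q
    convert this using 3 with x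
    exact aeval_apply' R x v q) hS
  exact this ⟨Polynomial.X, by simp⟩

variable {R : Subring (X → ℝ)}

lemma MaxTame.lt (h : MaxTame B R) (r s : R) : B (fun x => ev R x r < ev R x s) := by
  have := h.pos (s - r)
  simpa only [map_sub, sub_pos] using this

lemma MaxTame.le (h : MaxTame B R) (r s : R) : B (fun x => ev R x r ≤ ev R x s) := by
  have := h.ba.not _ (h.lt s r)
  simpa only [not_lt] using this

lemma MaxTame.zero (h : MaxTame B R) (r : R) : B (fun x => ev R x r = 0) := by
  have := h.ba.and _ _ (h.le r 0) (h.le 0 r)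
  convert this using 2 with x
  rw [map_zero]
  exact le_antisymm_iff

lemma MaxTame.inv (h : MaxTame B R) (u : R) : (u.1)⁻¹ ∈ R := by
  apply h.max
  intro q
  have h1 := h.ba.or _ _ (h.ba.and _ _ (h.zero u) (h.pos (q.eval 0)))
    (h.ba.and _ _ (h.ba.not _ (h.zero u)) (h.pos (q.reverse.eval u * u ^ q.natDegree)))
  convert h1 using 2 with x
  have e1 : (u.1)⁻¹ x = (ev R x u)⁻¹ := rfl
  rw [e1, map_mul, map_pow, ← ev_eval, ← ev_eval, map_zero]
  by_cases hu : ev R x u = 0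
  · simp [hu]
  · simp only [hu, false_and, false_or, not_false_eq_true, true_and]
    let _ : Invertible (ev R x u)⁻¹ := invertibleOfNonzero (inv_ne_zero hu)
    have := eval₂_reverse_mul_pow (ev R x) (ev R x u)⁻¹ q
    rw [invOf_eq_inv, inv_inv] at this
    rw [eval_map, eval_map, ← this]
    set y := eval₂ (ev R x) (ev R x u) q.reverse
    have hy : 0 < (ev R x u ^ q.natDegree) ^ 2 := by positivity
    have hz : y * ev R x u ^ q.natDegree
        = (y * (ev R x u)⁻¹ ^ q.natDegree) * (ev R x u ^ q.natDegree) ^ 2 := by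
      rw [inv_pow]; field_simp
    rw [hz, mul_pos_iff_of_pos_right hy]

def RootsIn (a b : R) (p : R[X]) (L : Finset R) : Prop :=
  ∀ x, p.map (ev R x) ≠ 0 → ∀ t, ev R x a < t → t < ev R x b → (p.map (ev R x)).eval t = 0 →
    ∃ u ∈ L, ev R x u = t

open Classical in
/-- the predicate under which there is a unique root in the interval -/
def Dom (a b : R) (p : R[X]) (L : Finset R) (u1 u2 : R) (x : X) : Prop :=
  ev R x u1 < ev R x u2 ∧ ev R x a ≤ ev R x u1 ∧ ev R x u2 ≤ ev R x b ∧
  (∀ u ∈ L, ev R x u1 < ev R x u → ev R x u < ev R x u2 → ¬ ev R x (p.derivative.eval u) = 0) ∧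
  ev R x (p.eval u1 * p.eval u2) < ev R x 0

lemma MaxTame.dom (h : MaxTame B R) (a b : R) (p : R[X]) (L : Finset R) (u1 u2 : R) :
    B (Dom a b p L u1 u2) := by
  refine h.ba.and _ _ (h.lt _ _) (h.ba.and _ _ (h.le _ _) (h.ba.and _ _ (h.le _ _)
    (h.ba.and _ _ ?_ (h.lt _ _))))
  exact h.ba.all _ _ (fun u _ => h.ba.imp _ _ (h.lt _ _) (h.ba.imp _ _ (h.lt _ _)
    (h.ba.not _ (h.zero _))))

lemma deriv_map_ne [Nonempty X] (x : X) (d : ℕ) (p : R[X]) (hp : p.Monic)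
    (hpd : p.natDegree = d + 1) : p.derivative.map (ev R x) ≠ 0 := by
  intro h0
  have := congrArg (fun q => q.coeff d) h0
  simp only [coeff_map, coeff_derivative, coeff_zero] at this
  have h1 : p.coeff (d + 1) = 1 := by rw [← hpd]; exact hp
  rw [h1] at this
  simp at this
  have h2 : (d : ℝ) + 1 ≠ 0 := by positivity
  exact h2 this

lemma dom_deriv [Nonempty X] (a b : R) (d : ℕ) (p : R[X]) (hp : p.Monic)
    (hpd : p.natDegree = d + 1) (L : Finset R) (hL : RootsIn a b p.derivative L)
    (u1 u2 : R) (x : X) (h1 : ev R x a ≤ ev R x u1) (h2 : ev R x u2 ≤ ev R x b)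
    (h3 : ∀ u ∈ L, ev R x u1 < ev R x u → ev R x u < ev R x u2 →
      ¬ ev R x (p.derivative.eval u) = 0) (s : ℝ) (hs1 : ev R x u1 < s) (hs2 : s < ev R x u2) :
    (derivative (p.map (ev R x))).eval s ≠ 0 := by
  intro h0
  rw [derivative_map] at h0
  obtain ⟨u, hu, hus⟩ := hL x (deriv_map_ne x d p hp hpd) s (h1.trans_lt hs1) (hs2.trans_le h2) h0
  subst hus
  exact h3 u hu hs1 hs2 (by rw [← ev_eval]; exact h0)

open Classical in
noncomputable def vroot (a b : R) (p : R[X]) (L : Finset R) (u1 u2 : R) (x : X) : ℝ :=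
  if h : ∃ t, Dom a b p L u1 u2 x ∧ ev R x u1 < t ∧ t < ev R x u2 ∧ (p.map (ev R x)).eval t = 0
  then h.choose else 0

lemma vroot_spec (a b : R) (p : R[X]) (L : Finset R) (u1 u2 : R) (x : X)
    (hD : Dom a b p L u1 u2 x) :
    ev R x u1 < vroot a b p L u1 u2 x ∧ vroot a b p L u1 u2 x < ev R x u2 ∧
      (p.map (ev R x)).eval (vroot a b p L u1 u2 x) = 0 := by
  have hn := hD.2.2.2.2
  rw [map_mul, ← ev_eval, ← ev_eval, map_zero] at hn
  obtain ⟨t, ht⟩ := exists_root _ hD.1 hn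
  have h : ∃ t, Dom a b p L u1 u2 x ∧ ev R x u1 < t ∧ t < ev R x u2 ∧
    (p.map (ev R x)).eval t = 0 := ⟨t, hD, ht⟩
  rw [vroot, dif_pos h]
  exact h.choose_spec.2

lemma MaxTame.vroot_mem [Nonempty X] (h : MaxTame B R) (a b : R) (d : ℕ)
    (ih : ∀ p : R[X], p.natDegree ≤ d → ∃ L, RootsIn a b p L)
    (p : R[X]) (hp : p.Monic) (hpd : p.natDegree = d + 1)
    (L : Finset R) (hL : RootsIn a b p.derivative L) (u1 u2 : R) :
    vroot a b p L u1 u2 ∈ R := by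
  classical
  apply h.max
  intro q
  obtain ⟨Lq, hLq⟩ := ih (q %ₘ p) (by
    have := natDegree_modByMonic_lt q hp (by intro h1; simp [h1] at hpd)
    omega)
  set q1 := q %ₘ p with hq1
  let W : Finset R := insert u1 (insert u2 Lq)
  let half : R := ⟨_, h.inv 2⟩
  have hhalf : ∀ x, ev R x half = 1 / 2 := by
    intro x
    have : ev R x half = (ev R x 2)⁻¹ := rfl
    rw [this, map_ofNat]; norm_num
  have hB1 : B (fun x => Dom a b p L u1 u2 x ∧ ∃ w1 ∈ W, ∃ w2 ∈ W,
      ev R x u1 ≤ ev R x w1 ∧ ev R x w1 ≤ ev R x u2 ∧ ev R x u1 ≤ ev R x w2 ∧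
      ev R x w2 ≤ ev R x u2 ∧
      ev R x 0 < ev R x (p.eval w1 * p.eval u1) ∧ ev R x (p.eval w2 * p.eval u1) < ev R x 0 ∧
      (∀ w ∈ Lq, ev R x w1 < ev R x w → ev R x w < ev R x w2 → ¬ ev R x (q1.eval w) = 0) ∧
      0 < ev R x (q1.eval ((w1 + w2) * half))) := by
    refine h.ba.and _ _ (h.dom ..) (h.ba.ex _ _ fun w1 _ => h.ba.ex _ _ fun w2 _ => ?_)
    refine h.ba.and _ _ (h.le _ _) (h.ba.and _ _ (h.le _ _) (h.ba.and _ _ (h.le _ _)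
      (h.ba.and _ _ (h.le _ _) (h.ba.and _ _ (h.lt _ _) (h.ba.and _ _ (h.lt _ _)
        (h.ba.and _ _ ?_ (h.pos _)))))))
    exact h.ba.all _ _ (fun u _ => h.ba.imp _ _ (h.lt _ _) (h.ba.imp _ _ (h.lt _ _)
      (h.ba.not _ (h.zero _))))
  have hB2 := h.ba.or _ _ hB1 (h.ba.and _ _ (h.ba.not _ (h.dom a b p L u1 u2)) (h.pos (q.eval 0)))
  convert hB2 using 2 with x
  by_cases hD : Dom a b p L u1 u2 x
  swap
  · have : vroot a b p L u1 u2 x = ev R x 0 := by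
      rw [vroot, dif_neg, map_zero]
      rintro ⟨t, ht, _⟩
      exact hD ht
    simp only [hD, false_and, false_or, not_false_eq_true, true_and]
    rw [this, ev_eval]
  simp only [hD, true_and, not_true_eq_false, false_and, or_false]
  obtain ⟨hv1, hv2, hv0⟩ := vroot_spec a b p L u1 u2 x hD
  set v := vroot a b p L u1 u2 x
  have hder := dom_deriv a b d p hp hpd L hL u1 u2 x hD.2.1 hD.2.2.1 hD.2.2.2.1
  have hqv : (q.map (ev R x)).eval v = (q1.map (ev R x)).eval v := by
    conv_lhs => rw [← modByMonic_add_div q p]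
    rw [Polynomial.map_add, Polynomial.map_mul, eval_add, eval_mul, hv0, zero_mul, add_zero]
  have hcmp : ∀ w : R, ev R x u1 ≤ ev R x w → ev R x w ≤ ev R x u2 →
      (ev R x w < v ↔ ev R x 0 < ev R x (p.eval w * p.eval u1)) ∧
      (v < ev R x w ↔ ev R x (p.eval w * p.eval u1) < ev R x 0) := by
    intro w hw1 hw2
    rw [map_mul, ← ev_eval, ← ev_eval, map_zero]
    exact compare_root _ hv1 hv2 hv0 hder hw1 hw2
  have hmid : ∀ w1 w2 : R, ev R x ((w1 + w2) * half) = (ev R x w1 + ev R x w2) * (1 / 2) := by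
    intro w1 w2; rw [map_mul, map_add, hhalf]
  -- absence of roots
  have hno : ∀ w1 w2 : R, ev R x u1 ≤ ev R x w1 → ev R x w2 ≤ ev R x u2 →
      q1.map (ev R x) ≠ 0 →
      (∀ w ∈ Lq, ev R x w1 < ev R x w → ev R x w < ev R x w2 → ¬ ev R x (q1.eval w) = 0) →
      ∀ t, ev R x w1 < t → t < ev R x w2 → (q1.map (ev R x)).eval t ≠ 0 := by
    intro w1 w2 hw1 hw2 hq0 hw t ht1 ht2 ht0
    obtain ⟨w, hwL, rfl⟩ := hLq x hq0 t ((hD.2.1.trans hw1).trans_lt ht1)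
      (ht2.trans_le (hw2.trans hD.2.2.1)) ht0
    exact hw w hwL ht1 ht2 (by rw [← ev_eval]; exact ht0)
  rw [hqv]
  constructor
  · intro hpos
    have hq0 : q1.map (ev R x) ≠ 0 := by
      intro h0; rw [h0] at hpos; simp at hpos
    obtain ⟨w1, hw1, w2, hw2, hlt1, hlt2, hm1, hm2⟩ := exists_nearest W (fun w => ev R x w) v
      ⟨u1, by simp [W], hv1⟩ ⟨u2, by simp [W], hv2⟩
    have c1 : ev R x u1 ≤ ev R x w1 := hm1 u1 (by simp [W]) hv1
    have c2 : ev R x w2 ≤ ev R x u2 := hm2 u2 (by simp [W]) hv2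
    have c3 : ev R x w1 ≤ ev R x u2 := (hlt1.trans hv2).le
    have c4 : ev R x u1 ≤ ev R x w2 := (hv1.trans hlt2).le
    have c5 : ∀ w ∈ Lq, ev R x w1 < ev R x w → ev R x w < ev R x w2 →
        ¬ ev R x (q1.eval w) = 0 := by
      intro w hw ha hb h0
      have hwW : w ∈ W := by simp [W, hw]
      rcases lt_trichotomy (ev R x w) v with hh | hh | hh
      · exact absurd (hm1 w hwW hh) (not_le.2 ha)
      · rw [← ev_eval, hh] at h0
        rw [h0] at hpos
        exact lt_irrefl _ hpos
      · exact absurd (hm2 w hwW hh) (not_le.2 hb)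
    refine ⟨w1, hw1, w2, hw2, c1, c3, c4, c2, ((hcmp w1 c1 c3).1).1 hlt1,
      ((hcmp w2 c4 c2).2).1 hlt2, c5, ?_⟩
    rw [← ev_eval, hmid]
    exact sign_const _ hlt1 hlt2 (by linarith) (by linarith) (hno w1 w2 c1 c2 hq0 c5) hpos
  · rintro ⟨w1, hw1, w2, hw2, c1, c3, c4, c2, e1, e2, c5, hpos⟩
    have hlt1 := ((hcmp w1 c1 c3).1).2 e1
    have hlt2 := ((hcmp w2 c4 c2).2).2 e2
    rw [← ev_eval, hmid] at hpos
    have hq0 : q1.map (ev R x) ≠ 0 := by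
      intro h0; rw [h0] at hpos; simp at hpos
    exact sign_const _ (by linarith) (by linarith) hlt1 hlt2 (hno w1 w2 c1 c2 hq0 c5) hpos

lemma MaxTame.roots_monic [Nonempty X] (h : MaxTame B R) (a b : R) (d : ℕ)
    (ih : ∀ p : R[X], p.natDegree ≤ d → ∃ L, RootsIn a b p L)
    (p : R[X]) (hp : p.Monic) (hpd : p.natDegree = d + 1) :
    ∃ L, RootsIn a b p L := by
  classical
  obtain ⟨L', hL'⟩ := ih p.derivative (by have := natDegree_derivative_le p; omega)
  let L : Finset R := insert a (insert b L')
  let V : R × R → R := fun u => ⟨_, h.vroot_mem a b d ih p hp hpd L' hL' u.1 u.2⟩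
  refine ⟨L ∪ (L ×ˢ L).image V, ?_⟩
  intro x hx t hat htb ht0
  by_cases htL : ∃ u ∈ L, ev R x u = t
  · obtain ⟨u, hu, hut⟩ := htL
    exact ⟨u, by simp [hu], hut⟩
  push Not at htL
  obtain ⟨u1, hu1, u2, hu2, hlt1, hlt2, hm1, hm2⟩ := exists_nearest L (fun w => ev R x w) t
      ⟨a, by simp [L], hat⟩ ⟨b, by simp [L], htb⟩
  have c1 : ev R x a ≤ ev R x u1 := hm1 a (by simp [L]) hat
  have c2 : ev R x u2 ≤ ev R x b := hm2 b (by simp [L]) htb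
  have c5 : ∀ w ∈ L', ev R x u1 < ev R x w → ev R x w < ev R x u2 →
      ¬ ev R x (p.derivative.eval w) = 0 := by
    intro w hw ha hb h0
    have hwW : w ∈ L := by simp [L, hw]
    rcases lt_trichotomy (ev R x w) t with hh | hh | hh
    · exact absurd (hm1 w hwW hh) (not_le.2 ha)
    · exact htL w hwW hh
    · exact absurd (hm2 w hwW hh) (not_le.2 hb)
  have hder := dom_deriv a b d p hp hpd L' hL' u1 u2 x c1 c2 c5
  have hD : Dom a b p L' u1 u2 x := by
    refine ⟨hlt1.trans hlt2, c1, c2, c5, ?_⟩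
    rw [map_mul, ← ev_eval, ← ev_eval, map_zero]
    exact ends_neg _ hlt1 hlt2 ht0 hder
  obtain ⟨hv1, hv2, hv0⟩ := vroot_spec a b p L' u1 u2 x hD
  refine ⟨V (u1, u2), Finset.mem_union_right _ (Finset.mem_image_of_mem V (by simp [hu1, hu2])), ?_⟩
  exact root_unique _ hlt1 hlt2 ht0 hder hv1 hv2 hv0

lemma MaxTame.roots [Nonempty X] (h : MaxTame B R) (a b : R) (d : ℕ) :
    ∀ p : R[X], p.natDegree ≤ d → ∃ L, RootsIn a b p L := by
  classical
  induction d with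
  | zero =>
    intro p hp
    refine ⟨∅, ?_⟩
    intro x hx t _ _ ht0
    rw [eq_C_of_natDegree_le_zero hp] at ht0 hx
    rw [map_C, eval_C] at ht0
    rw [map_C, ht0] at hx
    simp at hx
  | succ d ih =>
    intro p hp
    let c := p.coeff (d + 1)
    let ci : R := ⟨_, h.inv c⟩
    let low : R[X] := p.erase (d + 1)
    have hlow : low.natDegree ≤ d := by
      rw [natDegree_le_iff_coeff_eq_zero]
      intro N hN
      rw [show low = p.erase (d + 1) from rfl, coeff_erase]
      split_ifs with h1
      · rfl
      · exact coeff_eq_zero_of_natDegree_lt (by omega)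
    have hdec : p = C c * Polynomial.X ^ (d + 1) + low := by
      have := monomial_add_erase p (d + 1)
      rw [← C_mul_X_pow_eq_monomial] at this
      exact this.symm
    let P : R[X] := Polynomial.X ^ (d + 1) + C ci * low
    have hl2 : (C ci * low).degree < ((d + 1 : ℕ) : WithBot ℕ) := by
      have : (C ci * low).natDegree ≤ d := (natDegree_C_mul_le _ _).trans hlow
      exact (natDegree_le_iff_degree_le.1 this).trans_lt (by exact_mod_cast Nat.lt_succ_self d)
    have hPm : P.Monic := monic_X_pow_add hl2
    have hPd : P.natDegree = d + 1 := by
      have h3 : P.degree = ((d + 1 : ℕ) : WithBot ℕ) := by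
        have : Nontrivial R := inferInstance
        rw [show P = Polynomial.X ^ (d + 1) + C ci * low from rfl,
          degree_add_eq_left_of_degree_lt (by rw [degree_X_pow]; exact hl2), degree_X_pow]
      exact natDegree_eq_of_degree_eq_some h3
    obtain ⟨L1, hL1⟩ := ih low hlow
    obtain ⟨L2, hL2⟩ := h.roots_monic a b d ih P hPm hPd
    refine ⟨L1 ∪ L2, ?_⟩
    intro x hx t hat htb ht0
    by_cases hc : ev R x c = 0
    · have e : p.map (ev R x) = low.map (ev R x) := by
        conv_lhs => rw [hdec]
        simp [hc]
      rw [e] at hx ht0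
      obtain ⟨u, hu, hut⟩ := hL1 x hx t hat htb ht0
      exact ⟨u, by simp [hu], hut⟩
    · have e : p.map (ev R x) = C (ev R x c) * P.map (ev R x) := by
        conv_lhs => rw [hdec]
        have : ev R x ci = (ev R x c)⁻¹ := rfl
        simp only [P, Polynomial.map_add, Polynomial.map_mul, map_C, Polynomial.map_pow, map_X, this]
        rw [mul_add, ← mul_assoc, ← C_mul, mul_inv_cancel₀ hc, C_1, one_mul]
      rw [e] at hx ht0
      rw [eval_mul, eval_C] at ht0
      obtain ⟨u, hu, hut⟩ := hL2 x (right_ne_zero_of_mul hx) t hat htb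
        ((mul_eq_zero.1 ht0).resolve_left hc)
      exact ⟨u, by simp [hu], hut⟩

/-- Elimination of one bounded quantifier. -/
lemma MaxTame.elim [Nonempty X] (h : MaxTame B R) (l : R) (p : R[X]) :
    B (fun x => ∃ t, 0 ≤ t ∧ t ≤ ev R x l ∧ (p.map (ev R x)).eval t = 0) := by
  obtain ⟨L, hL⟩ := h.roots (-1) (l + 1) p.natDegree p le_rfl
  have h1 := h.ba.or _ _
    (h.ba.and _ _ (h.le 0 l) (h.ba.all p.support (fun i x => ev R x (p.coeff i) = 0)
      (fun i _ => h.zero _)))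
    (h.ba.ex L (fun u x => ev R x 0 ≤ ev R x u ∧ ev R x u ≤ ev R x l ∧ ev R x (p.eval u) = 0)
      (fun u _ => h.ba.and _ _ (h.le _ _) (h.ba.and _ _ (h.le _ _) (h.zero _))))
  convert h1 using 2 with x
  simp only [map_zero]
  constructor
  · rintro ⟨t, ht0, htl, hpt⟩
    by_cases hp : p.map (ev R x) = 0
    · left
      refine ⟨ht0.trans htl, fun i _ => ?_⟩
      rw [← coeff_map, hp, coeff_zero]
    · right
      obtain ⟨u, hu, rfl⟩ := hL x hp t (by simp; linarith) (by simp; linarith) hpt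
      exact ⟨u, hu, ht0, htl, by rw [← ev_eval]; exact hpt⟩
  · rintro (⟨hl, hc⟩ | ⟨u, hu, h0, h1, h2⟩)
    · have : p.map (ev R x) = 0 := by
        ext i
        rw [coeff_map, coeff_zero]
        by_cases hi : i ∈ p.support
        · exact hc i hi
        · rw [notMem_support_iff.1 hi, map_zero]
      exact ⟨0, le_rfl, hl, by simp [this]⟩
    · exact ⟨_, h0, h1, by rw [ev_eval]; exact h2⟩

end

/-! ### Counting traces -/

section
variable {α Θ : Type*}

open Classical in
/-- traces of the relation `b` on the finite set `A` -/
noncomputable def pat (b : α × Θ → Prop) (A : Finset α) : Finset (Finset α) :=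
  A.powerset.filter (fun T => ∃ θ, ∀ a ∈ A, (a ∈ T ↔ b (a, θ)))

lemma mem_pat (b : α × Θ → Prop) (A T : Finset α) :
    T ∈ pat b A ↔ T ⊆ A ∧ ∃ θ, ∀ a ∈ A, (a ∈ T ↔ b (a, θ)) := by
  simp [pat]

/-- polynomially many traces -/
def Few (b : α × Θ → Prop) : Prop := ∃ N : ℕ, ∀ A : Finset α, (pat b A).card ≤ (A.card + 1) ^ N

lemma few_ba : BA (Few (α := α) (Θ := Θ)) := by
  classical
  refine ⟨⟨0, fun A => ?_⟩, ?_, ?_⟩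
  · rw [pow_zero, Finset.card_le_one]
    intro S hS T hT
    rw [mem_pat] at hS hT
    obtain ⟨h1, θ, h2⟩ := hS
    obtain ⟨h3, θ', h4⟩ := hT
    ext a
    constructor
    · intro h; exact (h4 a (h1 h)).2 trivial
    · intro h; exact (h2 a (h3 h)).2 trivial
  · rintro p ⟨N, hN⟩
    refine ⟨N, fun A => le_trans ?_ (hN A)⟩
    refine (Finset.card_le_card ?_).trans (Finset.card_image_le (f := fun T => A \ T))
    intro T hT
    rw [mem_pat] at hT
    obtain ⟨h1, θ, h2⟩ := hT
    rw [Finset.mem_image]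
    refine ⟨A \ T, (mem_pat _ _ _).2 ⟨Finset.sdiff_subset, θ, fun a ha => ?_⟩, ?_⟩
    · have := h2 a ha
      simp only [Finset.mem_sdiff, ha, true_and]
      tauto
    · simp [h1]
  · rintro p q ⟨N, hN⟩ ⟨M, hM⟩
    refine ⟨N + M, fun A => ?_⟩
    have h1 : pat (fun x => p x ∧ q x) A ⊆
        (pat p A ×ˢ pat q A).image (fun T => T.1 ∩ T.2) := by
      intro T hT
      rw [mem_pat] at hT
      obtain ⟨h1, θ, h2⟩ := hT
      rw [Finset.mem_image]
      refine ⟨(A.filter (fun a => p (a, θ)), A.filter (fun a => q (a, θ))), ?_, ?_⟩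
      · rw [Finset.mem_product]
        exact ⟨(mem_pat _ _ _).2 ⟨Finset.filter_subset _ _, θ, fun a ha => by simp [ha]⟩,
          (mem_pat _ _ _).2 ⟨Finset.filter_subset _ _, θ, fun a ha => by simp [ha]⟩⟩
      · ext a
        simp only [Finset.mem_inter, Finset.mem_filter]
        constructor
        · rintro ⟨⟨ha, hp⟩, _, hq⟩
          exact (h2 a ha).2 ⟨hp, hq⟩
        · intro ha
          have := (h2 a (h1 ha)).1 ha
          exact ⟨⟨h1 ha, this.1⟩, h1 ha, this.2⟩
    calc _ ≤ _ := Finset.card_le_card h1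
      _ ≤ _ := Finset.card_image_le
      _ = (pat p A).card * (pat q A).card := Finset.card_product _ _
      _ ≤ _ := by rw [pow_add]; exact Nat.mul_le_mul (hN A) (hM A)

/-- functions of finite rank -/
def FinRank (h : α × Θ → ℝ) : Prop :=
  ∃ (ι : Type) (_ : Fintype ι) (u : ι → α → ℝ) (v : ι → Θ → ℝ),
    ∀ a θ, h (a, θ) = ∑ i, u i a * v i θ

def finRankRing (α Θ : Type*) : Subring (α × Θ → ℝ) where
  carrier := {h | FinRank h}
  zero_mem' := ⟨Empty, inferInstance, fun _ _ => 0, fun _ _ => 0, by simp⟩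
  one_mem' := ⟨Unit, inferInstance, fun _ _ => 1, fun _ _ => 1, by simp⟩
  add_mem' := by
    rintro f g ⟨ι, _, u, v, h⟩ ⟨κ, _, u', v', h'⟩
    exact ⟨ι ⊕ κ, inferInstance, Sum.elim u u', Sum.elim v v', by simp [h, h']⟩
  mul_mem' := by
    rintro f g ⟨ι, _, u, v, h⟩ ⟨κ, _, u', v', h'⟩
    refine ⟨ι × κ, inferInstance, fun i a => u i.1 a * u' i.2 a, fun i a => v i.1 a * v' i.2 a, ?_⟩
    intro a θ
    rw [Pi.mul_apply, h, h', Finset.sum_mul_sum, Fintype.sum_prod_type]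
    refine Finset.sum_congr rfl fun i _ => Finset.sum_congr rfl fun j _ => ?_
    ring
  neg_mem' := by
    rintro f ⟨ι, _, u, v, h⟩
    exact ⟨ι, inferInstance, fun i a => - u i a, v, by simp [h]⟩

lemma finRank_left (f : α → ℝ) : (fun x : α × Θ => f x.1) ∈ finRankRing α Θ :=
  ⟨Unit, inferInstance, fun _ => f, fun _ _ => 1, by simp⟩

lemma finRank_right (f : Θ → ℝ) : (fun x : α × Θ => f x.2) ∈ finRankRing α Θ :=
  ⟨Unit, inferInstance, fun _ _ => 1, fun _ => f, by simp⟩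

lemma sum_choose_le (n N : ℕ) : ∑ i ∈ Finset.range (N + 1), n.choose i ≤ (n + 1) ^ N := by
  rw [add_pow]
  refine Finset.sum_le_sum fun i hi => ?_
  rw [Finset.mem_range] at hi
  have h1 : n.choose i ≤ n ^ i := Nat.choose_le_pow n i
  have h2 : 0 < N.choose i := Nat.choose_pos (by omega)
  simp only [one_pow, mul_one, Nat.cast_id]
  exact h1.trans (Nat.le_mul_of_pos_right _ h2)

lemma few_pos (h : α × Θ → ℝ) (hh : FinRank h) : Few (fun x => 0 < h x) := by
  classical
  obtain ⟨ι, _, u, v, huv⟩ := hh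
  refine ⟨Fintype.card ι, fun A => ?_⟩
  refine (Finset.card_le_card_shatterer _).trans ?_
  have key : (pat (fun x => 0 < h x) A).shatterer ⊆
      (Finset.range (Fintype.card ι + 1)).biUnion (fun i => A.powersetCard i) := by
    intro S hS
    rw [Finset.mem_shatterer] at hS
    have hSA : S ⊆ A := by
      obtain ⟨T, hT, hST⟩ := hS.exists_superset
      exact hST.trans ((mem_pat _ _ _).1 hT).1
    simp only [Finset.mem_biUnion, Finset.mem_range, Finset.mem_powersetCard]
    refine ⟨S.card, ?_, hSA, rfl⟩
    by_contra hcard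
    have hlt : Fintype.card ι < Fintype.card S := by simp; omega
    have hdep : ¬ LinearIndependent ℝ (fun a : S => fun i => u i a.1) := by
      intro hli
      have := hli.fintype_card_le_finrank
      rw [Module.finrank_fintype_fun_eq_card] at this
      omega
    rw [Fintype.not_linearIndependent_iff] at hdep
    obtain ⟨g, hg, a0, ha0⟩ := hdep
    have main : ∀ g : S → ℝ, ∑ a, g a • (fun i => u i a.1) = 0 → ¬ ∃ a, 0 < g a := by
      rintro g hg ⟨a0, ha0⟩
      have hsh := hS (t := (Finset.univ.filter (fun a : S => 0 < g a)).map
        (Function.Embedding.subtype _)) (by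
          intro a ha
          simp at ha
          exact ha.1)
      obtain ⟨T, hT, hST⟩ := hsh
      obtain ⟨hTA, θ, hθ⟩ := (mem_pat _ _ _).1 hT
      have hiff : ∀ a : S, 0 < g a ↔ 0 < h (a.1, θ) := by
        intro a
        rw [← hθ a.1 (hSA a.2)]
        have h1 : a.1 ∈ S ∩ T ↔ 0 < g a := by rw [hST]; simp
        rw [← h1]
        simp
      have hz : ∑ a : S, g a * h (a.1, θ) = 0 := by
        have h1 : ∀ i, ∑ a : S, g a * u i a.1 = 0 := by
          intro i
          have := congrFun hg i
          simpa using this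
        calc ∑ a : S, g a * h (a.1, θ) = ∑ a : S, ∑ i, g a * u i a.1 * v i θ := by
              refine Finset.sum_congr rfl fun a _ => ?_
              rw [huv, Finset.mul_sum]
              refine Finset.sum_congr rfl fun i _ => ?_
              ring
          _ = ∑ i, (∑ a : S, g a * u i a.1) * v i θ := by
              rw [Finset.sum_comm]
              refine Finset.sum_congr rfl fun i _ => ?_
              rw [Finset.sum_mul]
          _ = 0 := by simp only [h1, zero_mul, Finset.sum_const_zero]
      have hp : 0 < ∑ a : S, g a * h (a.1, θ) := by
        refine Finset.sum_pos' (fun a _ => ?_) ⟨a0, Finset.mem_univ _, mul_pos ha0 ((hiff a0).1 ha0)⟩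
        by_cases hga : 0 < g a
        · exact (mul_pos hga ((hiff a).1 hga)).le
        · have h2 := hga
          rw [hiff] at h2
          exact mul_nonneg_of_nonpos_of_nonpos (not_lt.1 hga) (not_lt.1 h2)
      exact hp.ne' hz
    rcases lt_or_gt_of_ne ha0 with hlt0 | hgt0
    · refine main (-g) ?_ ⟨a0, by simpa using hlt0⟩
      simp only [Pi.neg_apply, neg_smul, Finset.sum_neg_distrib, hg, neg_zero]
    · exact main g hg ⟨a0, hgt0⟩
  refine (Finset.card_le_card key).trans (Finset.card_biUnion_le.trans ?_)
  simp only [Finset.card_powersetCard]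
  exact sum_choose_le _ _

end

/-! ### Application to hypersurfaces and segments -/

/-- parametrization of segments: base point, direction, length -/
abbrev Par (p : ℕ) := (Fin p → ℝ) × (Fin p → ℝ) × ℝ

abbrev Pol (d p : ℕ) := {f : MvPolynomial (Fin p) ℝ // f.totalDegree ≤ d}

def Hit (d p : ℕ) (x : Pol d p × Par p) : Prop :=
  ∃ t, 0 ≤ t ∧ t ≤ x.2.2.2 ∧ MvPolynomial.eval (x.2.1 + t • x.2.2.1) x.1.1 = 0

lemma few_hit (d p : ℕ) : Few (Hit d p) := by
  classical
  obtain ⟨R, hR0, hR⟩ := exists_maxTame (few_ba (α := Pol d p) (Θ := Par p))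
    (finRankRing _ _) (fun r hr => few_pos r hr)
  have : Nonempty (Pol d p × Par p) := ⟨⟨⟨0, by simp⟩, 0⟩⟩
  let l : R := ⟨fun x => x.2.2.2, hR0 (finRank_right (fun θ : Par p => θ.2.2))⟩
  let bx : Fin p → R := fun j => ⟨fun x => x.2.1 j, hR0 (finRank_right (fun θ : Par p => θ.1 j))⟩
  let dx : Fin p → R := fun j => ⟨fun x => x.2.2.1 j,
    hR0 (finRank_right (fun θ : Par p => θ.2.1 j))⟩
  let cf : (Fin p →₀ ℕ) → R := fun m => ⟨fun x => MvPolynomial.coeff m x.1.1,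
    hR0 (finRank_left (fun f : Pol d p => MvPolynomial.coeff m f.1))⟩
  let M : Finset (Fin p →₀ ℕ) := Finset.Iic (Finsupp.equivFunOnFinite.symm (fun _ => d))
  let P : R[X] := ∑ m ∈ M, C (cf m) * ∏ j, (C (bx j) + C (dx j) * Polynomial.X) ^ m j
  have h := hR.elim l P
  convert h using 2 with x
  unfold Hit
  refine exists_congr fun t => and_congr_right fun _ => and_congr_right fun _ => ?_
  have e : (P.map (ev R x)).eval t = MvPolynomial.eval (x.2.1 + t • x.2.2.1) x.1.1 := by
    rw [MvPolynomial.eval_eq']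
    simp only [P, Polynomial.map_sum, Polynomial.map_mul, Polynomial.map_prod, Polynomial.map_pow,
      Polynomial.map_add, map_C, map_X, eval_finsetSum, eval_mul, eval_C, eval_prod, eval_pow,
      eval_add, eval_X]
    symm
    refine (Finset.sum_subset (s₂ := M) ?_ ?_).trans ?_
    · intro m hm
      rw [Finset.mem_Iic]
      intro j
      have h1 := MvPolynomial.le_totalDegree hm
      have h2 : m j ≤ m.sum fun _ e => e := by
        by_cases hj : m j = 0
        · omega
        · exact Finset.single_le_sum (f := fun j => m j) (fun _ _ => Nat.zero_le _)
            (Finsupp.mem_support_iff.2 hj)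
      exact h2.trans (h1.trans x.1.2)
    · intro m _ hm
      rw [MvPolynomial.notMem_support_iff.1 hm, zero_mul]
    · refine Finset.sum_congr rfl fun m _ => ?_
      congr 1
      refine Finset.prod_congr rfl fun j _ => ?_
      congr 1
      simp only [Pi.add_apply, Pi.smul_apply, smul_eq_mul, ev_apply, bx, dx]
      ring
  rw [e]

lemma exists_big (N : ℕ) : ∃ k : ℕ, (k + 1) ^ N < 2 ^ k := by
  have h := tendsto_pow_const_div_const_pow_of_one_lt N (r := (2 : ℝ)) (by norm_num)
  have h1 := (h.eventually (gt_mem_nhds (show (0 : ℝ) < 1 / 2 by norm_num))).and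
    (Filter.eventually_ge_atTop 1)
  obtain ⟨n, hn, hn1⟩ := h1.exists
  obtain ⟨k, rfl⟩ : ∃ k, n = k + 1 := ⟨n - 1, by omega⟩
  refine ⟨k, ?_⟩
  rw [div_lt_iff₀ (by positivity), pow_succ (2 : ℝ)] at hn
  have : (((k + 1 : ℕ) : ℝ)) ^ N < 2 ^ k := by linarith
  exact_mod_cast this

end SegVC

/-- There is a constant `k` depending only on `d` and `p` such that axis-aligned line
segments in `ℝ^p` cannot shatter any collection of `k` algebraic hypersurfaces of
degree at most `d`: some subset `S` of the collection is hit by no axis-aligned segment. -/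
theorem axis_segments_cannot_shatter_hypersurfaces (d p : ℕ) (hd : 0 < d) (hp : 0 < p) :
    ∃ k : ℕ, ∀ 𝒞 : Finset (Set (Fin p → ℝ)), 𝒞.card = k →
      (∀ H ∈ 𝒞, IsAlgHypersurface d p H) →
      ∃ S ⊆ 𝒞, ∀ s : Set (Fin p → ℝ), IsAxisSegment p s →
        ¬ (∀ H ∈ 𝒞, (H ∈ S ↔ (H ∩ s).Nonempty)) := by
  classical
  obtain ⟨N, hN⟩ := SegVC.few_hit d p
  obtain ⟨k, hk⟩ := SegVC.exists_big N
  refine ⟨k, fun 𝒞 hcard hC => ?_⟩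
  by_contra hcon
  push Not at hcon
  have hch : ∀ H : Set (Fin p → ℝ), ∃ f : SegVC.Pol d p, H ∈ 𝒞 →
      H = {x : Fin p → ℝ | MvPolynomial.eval x f.1 = 0} := by
    intro H
    by_cases hH : H ∈ 𝒞
    · obtain ⟨f, _, hf, he⟩ := hC H hH
      exact ⟨⟨f, hf⟩, fun _ => he⟩
    · exact ⟨⟨0, by simp⟩, fun h => absurd h hH⟩
  choose F hF using hch
  have hinj : Set.InjOn F 𝒞 := by
    intro H hH K hK h
    rw [hF H hH, hF K hK, h]
  have hA : (𝒞.image F).card = k := by rw [Finset.card_image_of_injOn hinj, hcard]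
  have hsub : (𝒞.image F).powerset ⊆ SegVC.pat (SegVC.Hit d p) (𝒞.image F) := by
    intro T hT
    rw [Finset.mem_powerset] at hT
    refine (SegVC.mem_pat _ _ _).2 ⟨hT, ?_⟩
    obtain ⟨s, ⟨x, i, l, hl, rfl⟩, hs⟩ := hcon (𝒞.filter (fun H => F H ∈ T))
      (Finset.filter_subset _ _)
    refine ⟨(x, Pi.single i 1, l), ?_⟩
    intro a ha
    obtain ⟨H, hH, rfl⟩ := Finset.mem_image.1 ha
    have h1 := hs H hH
    rw [Finset.mem_filter, and_iff_right hH] at h1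
    rw [h1]
    constructor
    · rintro ⟨y, hy, t, ht, rfl⟩
      rw [hF H hH] at hy
      exact ⟨t, ht.1, ht.2, hy⟩
    · rintro ⟨t, ht0, ht1, h0⟩
      refine ⟨x + t • Pi.single i 1, ?_, t, ⟨ht0, ht1⟩, rfl⟩
      rw [hF H hH]
      exact h0
  have := (Finset.card_le_card hsub).trans (hN _)
  rw [Finset.card_powerset, hA] at this
  omega
end

section
/- Let X and Y be real-valued random variables on a common probability space, taking values almost surely in [m, m+M] and [m', m'+M'] respectively, where m, m' ∈ ℝ and M, M' > 0, and suppose the joint law of (X, Y) has a density with respect to Lebesgue measure on ℝ² bounded above by κ. Then the random variable Z = X + Y has a density with respect to Lebesgue measure on ℝ bounded almost everywhere by K₁·κ, where K₁ = min{M, M'}. -/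
open MeasureTheory

lemma aux_vol_fst (a L : ℝ) (A : Set ℝ) (hA : MeasurableSet A) :
    (volume : Measure (ℝ × ℝ)) {z | z.1 ∈ Set.Icc a (a + L) ∧ z.1 + z.2 ∈ A}
      = ENNReal.ofReal L * volume A := by
  have hm : MeasurableSet {z : ℝ × ℝ | z.1 ∈ Set.Icc a (a + L) ∧ z.1 + z.2 ∈ A} :=
    (measurable_fst measurableSet_Icc).inter ((measurable_fst.add measurable_snd) hA)
  rw [Measure.volume_eq_prod, Measure.prod_apply hm]
  have : ∀ x : ℝ, volume (Prod.mk x ⁻¹' {z : ℝ × ℝ | z.1 ∈ Set.Icc a (a + L) ∧ z.1 + z.2 ∈ A})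
      = (Set.Icc a (a + L)).indicator (fun _ => volume A) x := by
    intro x
    by_cases hx : x ∈ Set.Icc a (a + L)
    · rw [Set.indicator_of_mem hx, ← measure_preimage_add volume x A]
      congr 1
      ext y
      simp only [Set.mem_preimage, Set.mem_setOf_eq, hx, true_and]
    · rw [Set.indicator_of_notMem hx]
      have : Prod.mk x ⁻¹' {z : ℝ × ℝ | z.1 ∈ Set.Icc a (a + L) ∧ z.1 + z.2 ∈ A} = ∅ := by
        ext y
        simp only [Set.mem_preimage, Set.mem_setOf_eq, hx, false_and, Set.mem_empty_iff_false]
      rw [this, measure_empty]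
  simp_rw [this]
  rw [lintegral_indicator measurableSet_Icc, setLIntegral_const, Real.volume_Icc, mul_comm]
  congr 2
  ring

lemma aux_vol_snd (a L : ℝ) (A : Set ℝ) (hA : MeasurableSet A) :
    (volume : Measure (ℝ × ℝ)) {z | z.2 ∈ Set.Icc a (a + L) ∧ z.1 + z.2 ∈ A}
      = ENNReal.ofReal L * volume A := by
  have hm : MeasurableSet {z : ℝ × ℝ | z.1 ∈ Set.Icc a (a + L) ∧ z.1 + z.2 ∈ A} :=
    (measurable_fst measurableSet_Icc).inter ((measurable_fst.add measurable_snd) hA)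
  rw [← aux_vol_fst a L A hA]
  have h : MeasurePreserving (Prod.swap : ℝ × ℝ → ℝ × ℝ) volume volume :=
    Measure.measurePreserving_swap
  rw [← h.measure_preimage hm.nullMeasurableSet]
  congr 1
  ext z
  simp [add_comm]

/-- If `(X, Y)` has a joint density on `ℝ²` bounded by `κ`, with `X ∈ [m, m+M]` and
`Y ∈ [m', m'+M']` almost surely, then `Z = X + Y` has a density on `ℝ` bounded
almost everywhere by `min{M, M'}·κ`. -/
theorem sum_of_kappa_bounded_is_bounded
    (Ω : Type*) [MeasurableSpace Ω] (μ : Measure Ω) [IsProbabilityMeasure μ]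
    (X Y : Ω → ℝ) (hXY : Measurable fun ω => (X ω, Y ω))
    (m m' M M' κ : ℝ) (hM : 0 < M) (hM' : 0 < M')
    (hX : ∀ᵐ ω ∂μ, X ω ∈ Set.Icc m (m + M))
    (hY : ∀ᵐ ω ∂μ, Y ω ∈ Set.Icc m' (m' + M'))
    (hjoint : ∃ ρ : ℝ × ℝ → ENNReal,
      Measure.map (fun ω => (X ω, Y ω)) μ = (volume : Measure (ℝ × ℝ)).withDensity ρ ∧
      ∀ᵐ z ∂(volume : Measure (ℝ × ℝ)), ρ z ≤ ENNReal.ofReal κ) :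
    ∃ g : ℝ → ENNReal,
      Measure.map (fun ω => X ω + Y ω) μ = (volume : Measure ℝ).withDensity g ∧
      ∀ᵐ t ∂(volume : Measure ℝ), g t ≤ ENNReal.ofReal (min M M' * κ) := by
  obtain ⟨ρ, hρ, hb⟩ := hjoint
  have hle : Measure.map (fun ω => (X ω, Y ω)) μ
      ≤ ENNReal.ofReal κ • (volume : Measure (ℝ × ℝ)) := by
    rw [hρ, ← withDensity_const]
    exact withDensity_mono hb
  have hXm : Measurable X := measurable_fst.comp hXY
  have hYm : Measurable Y := measurable_snd.comp hXY
  have hZ : Measurable fun ω => X ω + Y ω := hXm.add hYm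
  have key : ∀ A : Set ℝ, MeasurableSet A → Measure.map (fun ω => X ω + Y ω) μ A
      ≤ ENNReal.ofReal (min M M' * κ) * volume A := by
    intro A hA
    rw [Measure.map_apply hZ hA]
    rw [ENNReal.ofReal_mul (le_min hM.le hM'.le)]
    rcases le_total M M' with h | h
    · rw [min_eq_left h]
      have hm : MeasurableSet {z : ℝ × ℝ | z.1 ∈ Set.Icc m (m + M) ∧ z.1 + z.2 ∈ A} :=
        (measurable_fst measurableSet_Icc).inter ((measurable_fst.add measurable_snd) hA)
      have h1 := hle {z : ℝ × ℝ | z.1 ∈ Set.Icc m (m + M) ∧ z.1 + z.2 ∈ A}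
      rw [Measure.map_apply hXY hm, Measure.smul_apply, aux_vol_fst m M A hA, smul_eq_mul,
        ← mul_assoc, mul_comm (ENNReal.ofReal κ)] at h1
      refine le_trans (measure_mono_ae ?_) h1
      filter_upwards [hX] with ω h2 h3
      exact ⟨h2, h3⟩
    · rw [min_eq_right h]
      have hm : MeasurableSet {z : ℝ × ℝ | z.2 ∈ Set.Icc m' (m' + M') ∧ z.1 + z.2 ∈ A} :=
        (measurable_snd measurableSet_Icc).inter ((measurable_fst.add measurable_snd) hA)
      have h1 := hle {z : ℝ × ℝ | z.2 ∈ Set.Icc m' (m' + M') ∧ z.1 + z.2 ∈ A}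
      rw [Measure.map_apply hXY hm, Measure.smul_apply, aux_vol_snd m' M' A hA, smul_eq_mul,
        ← mul_assoc, mul_comm (ENNReal.ofReal κ)] at h1
      refine le_trans (measure_mono_ae ?_) h1
      filter_upwards [hY] with ω h2 h3
      exact ⟨h2, h3⟩
  have hprob : IsProbabilityMeasure (Measure.map (fun ω => X ω + Y ω) μ) :=
    Measure.isProbabilityMeasure_map hZ.aemeasurable
  have hac : Measure.map (fun ω => X ω + Y ω) μ ≪ volume := by
    refine Measure.AbsolutelyContinuous.mk fun A hA h0 => ?_
    have := key A hA
    rw [h0, mul_zero] at this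
    exact le_antisymm this bot_le
  have hg := Measure.withDensity_rnDeriv_eq _ _ hac
  refine ⟨(Measure.map (fun ω => X ω + Y ω) μ).rnDeriv volume, hg.symm, ?_⟩
  refine ae_le_of_forall_setLIntegral_le_of_sigmaFinite (Measure.measurable_rnDeriv _ _) ?_
  intro s hs _
  rw [← withDensity_apply _ hs, hg, setLIntegral_const]
  exact key s hs
end

section
/- Let X and Y be real-valued random variables on a common probability space, taking values almost surely in [m, m+M] and [m', m'+M'] respectively, where m, m' > 0 and M, M' > 0, and suppose the joint law of (X, Y) has a density with respect to Lebesgue measure on ℝ² bounded above by κ. Then the random variable Z = X·Y has a density with respect to Lebesgue measure on ℝ bounded almost everywhere by K₂·κ, where K₂ = min{M/m, M'/m'}. -/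
open MeasureTheory

lemma mul_strip_volume_le (m M : ℝ) (hm : 0 < m) (hM : 0 < M) (s : Set ℝ)
    (hs : MeasurableSet s) :
    volume ((fun p : ℝ × ℝ => p.1 * p.2) ⁻¹' s ∩ Prod.fst ⁻¹' Set.Icc m (m + M))
      ≤ ENNReal.ofReal (M / m) * volume s := by
  have hmul : Measurable (fun p : ℝ × ℝ => p.1 * p.2) := measurable_fst.mul measurable_snd
  have hA : MeasurableSet
      ((fun p : ℝ × ℝ => p.1 * p.2) ⁻¹' s ∩ Prod.fst ⁻¹' Set.Icc m (m + M)) :=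
    (hmul hs).inter (measurable_fst measurableSet_Icc)
  rw [Measure.volume_eq_prod, Measure.prod_apply hA]
  calc _ ≤ ∫⁻ x : ℝ, (Set.Icc m (m + M)).indicator
        (fun _ => ENNReal.ofReal m⁻¹ * volume s) x := by
        apply lintegral_mono
        intro x
        by_cases hx : x ∈ Set.Icc m (m + M)
        · have hx0 : 0 < x := lt_of_lt_of_le hm hx.1
          rw [Set.indicator_of_mem hx]
          calc _ ≤ volume ((fun y => x * y) ⁻¹' s) := measure_mono fun y hy => hy.1
            _ = ENNReal.ofReal |x⁻¹| * volume s := Real.volume_preimage_mul_left hx0.ne' s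
            _ ≤ _ := by
              rw [abs_of_pos (inv_pos.2 hx0)]
              gcongr
              exact hx.1
        · rw [Set.indicator_of_notMem hx]
          refine le_of_eq ?_
          convert measure_empty (μ := (volume : Measure ℝ))
          ext y
          simp only [Set.mem_preimage, Set.mem_inter_iff, Set.mem_empty_iff_false, iff_false]
          exact fun h => hx h.2
    _ = _ := by
      rw [lintegral_indicator_const measurableSet_Icc, Real.volume_Icc, add_sub_cancel_left,
        div_eq_mul_inv, ENNReal.ofReal_mul hM.le]
      ring

lemma mul_strip_volume_le_snd (m M : ℝ) (hm : 0 < m) (hM : 0 < M) (s : Set ℝ)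
    (hs : MeasurableSet s) :
    volume ((fun p : ℝ × ℝ => p.1 * p.2) ⁻¹' s ∩ Prod.snd ⁻¹' Set.Icc m (m + M))
      ≤ ENNReal.ofReal (M / m) * volume s := by
  have hmul : Measurable (fun p : ℝ × ℝ => p.1 * p.2) := measurable_fst.mul measurable_snd
  refine le_trans (le_of_eq ?_) (mul_strip_volume_le m M hm hM s hs)
  have hA : MeasurableSet
      ((fun p : ℝ × ℝ => p.1 * p.2) ⁻¹' s ∩ Prod.fst ⁻¹' Set.Icc m (m + M)) :=
    (hmul hs).inter (measurable_fst measurableSet_Icc)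
  have h := (Measure.measurePreserving_swap (μ := (volume : Measure ℝ))
    (ν := (volume : Measure ℝ))).measure_preimage hA.nullMeasurableSet
  rw [← Measure.volume_eq_prod] at h
  rw [← h]
  congr 1
  ext p
  simp [mul_comm]

/-- If `(X, Y)` has a joint density on `ℝ²` bounded by `κ`, with `X ∈ [m, m+M]` and
`Y ∈ [m', m'+M']` almost surely for `m, m' > 0`, then `Z = X·Y` has a density on `ℝ`
bounded almost everywhere by `min{M/m, M'/m'}·κ`. -/
theorem product_of_kappa_bounded_is_bounded
    (Ω : Type*) [MeasurableSpace Ω] (μ : Measure Ω) [IsProbabilityMeasure μ]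
    (X Y : Ω → ℝ) (hXY : Measurable fun ω => (X ω, Y ω))
    (m m' M M' κ : ℝ) (hm : 0 < m) (hm' : 0 < m') (hM : 0 < M) (hM' : 0 < M')
    (hX : ∀ᵐ ω ∂μ, X ω ∈ Set.Icc m (m + M))
    (hY : ∀ᵐ ω ∂μ, Y ω ∈ Set.Icc m' (m' + M'))
    (hjoint : ∃ ρ : ℝ × ℝ → ENNReal,
      Measure.map (fun ω => (X ω, Y ω)) μ = (volume : Measure (ℝ × ℝ)).withDensity ρ ∧
      ∀ᵐ z ∂(volume : Measure (ℝ × ℝ)), ρ z ≤ ENNReal.ofReal κ) :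
    ∃ g : ℝ → ENNReal,
      Measure.map (fun ω => X ω * Y ω) μ = (volume : Measure ℝ).withDensity g ∧
      ∀ᵐ t ∂(volume : Measure ℝ), g t ≤ ENNReal.ofReal (min (M / m) (M' / m') * κ) := by
  obtain ⟨ρ, hρ, hb⟩ := hjoint
  have hmul : Measurable (fun p : ℝ × ℝ => p.1 * p.2) := measurable_fst.mul measurable_snd
  have hZ : Measurable (fun ω => X ω * Y ω) := hmul.comp hXY
  set K := min (M / m) (M' / m') with hK
  have hK0 : 0 ≤ K := le_min (by positivity) (by positivity)
  have key : ∀ s, MeasurableSet s → Measure.map (fun ω => X ω * Y ω) μ s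
      ≤ ENNReal.ofReal (K * κ) * volume s := by
    intro s hs
    set B : Set (ℝ × ℝ) := (fun p : ℝ × ℝ => p.1 * p.2) ⁻¹' s ∩
      (Prod.fst ⁻¹' Set.Icc m (m + M) ∩ Prod.snd ⁻¹' Set.Icc m' (m' + M')) with hB
    have hBm : MeasurableSet B := (hmul hs).inter
      ((measurable_fst measurableSet_Icc).inter (measurable_snd measurableSet_Icc))
    have hvol : volume B ≤ ENNReal.ofReal K * volume s := by
      rcases min_choice (M / m) (M' / m') with h | h
      · rw [hK, h]
        refine le_trans (measure_mono fun p hp => ?_)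
          (mul_strip_volume_le m M hm hM s hs)
        exact ⟨hp.1, hp.2.1⟩
      · rw [hK, h]
        refine le_trans (measure_mono fun p hp => ?_)
          (mul_strip_volume_le_snd m' M' hm' hM' s hs)
        exact ⟨hp.1, hp.2.2⟩
    calc _ = μ ((fun ω => X ω * Y ω) ⁻¹' s) := Measure.map_apply hZ hs
      _ ≤ μ ((fun ω => (X ω, Y ω)) ⁻¹' B) := by
        apply measure_mono_ae
        filter_upwards [hX, hY] with ω h1 h2 h3
        exact ⟨h3, h1, h2⟩
      _ = ∫⁻ z in B, ρ z := by
        rw [← Measure.map_apply hXY hBm, hρ, withDensity_apply _ hBm]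
      _ ≤ ∫⁻ _ in B, ENNReal.ofReal κ := lintegral_mono_ae (ae_restrict_of_ae hb)
      _ = ENNReal.ofReal κ * volume B := setLIntegral_const _ _
      _ ≤ ENNReal.ofReal κ * (ENNReal.ofReal K * volume s) := by gcongr
      _ = _ := by rw [ENNReal.ofReal_mul hK0]; ring
  have hac : Measure.map (fun ω => X ω * Y ω) μ ≪ volume := by
    refine Measure.AbsolutelyContinuous.mk fun s hs h0 => ?_
    have := key s hs
    rw [h0, mul_zero] at this
    exact le_antisymm this bot_le
  have : IsProbabilityMeasure (Measure.map (fun ω => X ω * Y ω) μ) :=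
    Measure.isProbabilityMeasure_map hZ.aemeasurable
  refine ⟨(Measure.map (fun ω => X ω * Y ω) μ).rnDeriv volume,
    (Measure.withDensity_rnDeriv_eq _ _ hac).symm, ?_⟩
  refine ae_le_of_forall_setLIntegral_le_of_sigmaFinite
    (Measure.measurable_rnDeriv _ _) fun s hs _ => ?_
  rw [setLIntegral_const, Measure.setLIntegral_rnDeriv hac]
  exact key s hs
end

section
/- Let n ≥ 1 and m ≥ 1. For each i ∈ {1,…,m}, let V_i be a set with n elements, let d_i : V_i × V_i → ℝ≥0 be a symmetric function, and let L_i be an arbitrary real-valued function on the set of all edge sets (sets of unordered pairs of distinct elements) of V_i. For r ≥ 0 define h_r(i) = L_i(E_r(d_i)), where E_r(d) = {{u, v} : u ≠ v, d(u, v) ≤ r} is the threshold graph at parameter r. Suppose there exist witnesses w_1,…,w_m ∈ ℝ such that for every b ∈ {0,1}^m there exists r ≥ 0 with (h_r(i) > w_i ⟺ b_i = 1) for all i ∈ {1,…,m}. Then 2^m ≤ m·(n(n−1)/2) + 1. (Consequently, the pseudo-dimension of the class {r ↦ h_r} is O(log n).) -/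
/-- The edge set of the threshold graph at parameter `r`, for a (symmetric) distance
function `d` on the vertex set `V`: pairs of distinct vertices at distance at most `r`. -/
def thresholdEdges {V : Type*} (d : V → V → ℝ) (r : ℝ) : Set (V × V) :=
  {e : V × V | e.1 ≠ e.2 ∧ d e.1 e.2 ≤ r}

/-- If `m` threshold-graph instances on `n`-point sets are pseudo-shattered by the
one-parameter family `r ↦ L_i(E_r(d_i))` (with witnesses `w_i`), then
`2^m ≤ m·(n(n−1)/2) + 1`; consequently the pseudo-dimension is `O(log n)`. -/
theorem pseudo_shattering_bound_threshold_graphs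
    (n m : ℕ) (hn : 1 ≤ n) (hm : 1 ≤ m)
    (V : Fin m → Type*) [∀ i, Fintype (V i)]
    (hcard : ∀ i, Fintype.card (V i) = n)
    (d : ∀ i, V i → V i → ℝ)
    (hd0 : ∀ i u v, 0 ≤ d i u v)
    (hdsymm : ∀ i u v, d i u v = d i v u)
    (L : ∀ i, Set (V i × V i) → ℝ)
    (w : Fin m → ℝ)
    (hshatter : ∀ bvec : Fin m → Bool, ∃ r : ℝ, 0 ≤ r ∧
      ∀ i, (w i < L i (thresholdEdges (d i) r) ↔ bvec i = true)) :
    2 ^ m ≤ m * (n * (n - 1) / 2) + 1 := by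
  classical
  let D : ∀ i, Sym2 (V i) → ℝ := fun i => Sym2.lift ⟨d i, hdsymm i⟩
  let S : ∀ i, Finset ℝ := fun i =>
    (Finset.univ : Finset {a : Sym2 (V i) // ¬ a.IsDiag}).image (fun a => D i a.1)
  have hS : ∀ i, (S i).card ≤ n * (n - 1) / 2 := by
    intro i
    refine Finset.card_image_le.trans ?_
    rw [Finset.card_univ, Sym2.card_subtype_not_diag, hcard i, Nat.choose_two_right]
  let T : Finset ℝ := Finset.univ.biUnion S
  have hT : T.card ≤ m * (n * (n - 1) / 2) := by
    have h := Finset.card_biUnion_le_card_mul (Finset.univ : Finset (Fin m)) S _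
      (fun i _ => hS i)
    simpa using h
  have hmem : ∀ i u v, u ≠ v → d i u v ∈ T := by
    intro i u v huv
    refine Finset.mem_biUnion.2 ⟨i, Finset.mem_univ _, ?_⟩
    exact Finset.mem_image.2 ⟨⟨s(u, v), by simpa using huv⟩, Finset.mem_univ _, rfl⟩
  let c : ℝ → ℕ := fun r => (T.filter (fun t => t ≤ r)).card
  have key : ∀ r r', r ≤ r' → c r = c r' →
      ∀ i, thresholdEdges (d i) r = thresholdEdges (d i) r' := by
    intro r r' hr hc i
    have hsub : T.filter (fun t => t ≤ r) ⊆ T.filter (fun t => t ≤ r') := by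
      intro t ht
      rw [Finset.mem_filter] at ht ⊢
      exact ⟨ht.1, ht.2.trans hr⟩
    have heq := Finset.eq_of_subset_of_card_le hsub hc.ge
    ext ⟨u, v⟩
    constructor
    · rintro ⟨h1, h2⟩
      exact ⟨h1, le_trans h2 hr⟩
    · rintro ⟨h1, h2⟩
      refine ⟨h1, ?_⟩
      have : d i u v ∈ T.filter (fun t => t ≤ r') :=
        Finset.mem_filter.2 ⟨hmem i u v h1, h2⟩
      rw [← heq] at this
      exact (Finset.mem_filter.1 this).2
  choose R _ hR using hshatter
  have hinj : Function.Injective (fun b => c (R b)) := by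
    intro b b' hb
    have hb' : c (R b) = c (R b') := hb
    have hE : ∀ i, thresholdEdges (d i) (R b) = thresholdEdges (d i) (R b') := by
      rcases le_total (R b) (R b') with h | h
      · exact key _ _ h hb'
      · exact fun i => (key _ _ h hb'.symm i).symm
    funext i
    rw [Bool.eq_iff_iff, ← hR b i, ← hR b' i, hE i]
  have hle : (Finset.univ : Finset (Fin m → Bool)).card ≤ (Finset.range (T.card + 1)).card := by
    refine Finset.card_le_card_of_injOn (fun b => c (R b)) ?_ hinj.injOn
    intro b _
    have : c (R b) ≤ T.card := Finset.card_filter_le _ _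
    simp only [Finset.coe_range, Set.mem_Iio]
    omega
  simp at hle
  omega
end

section
/- Let d and p be positive integers. There exists a constant C depending only on d and p such that for every positive integer k and every collection 𝒞 of k algebraic hypersurfaces of degree at most d in ℝ^p, the number of distinct subsets of 𝒞 that are hit by some axis-aligned line segment is at most C·k^(2^p + 1). -/
open Polynomial in
lemma sgn_const (g : ℝ[X]) (s t : ℝ) (hst : s ≤ t) (h : ∀ r ∈ Set.Icc s t, g.eval r ≠ 0) :
    SignType.sign (g.eval s) = SignType.sign (g.eval t) := by
  have hc : ContinuousOn (fun x => g.eval x) (Set.Icc s t) := g.continuous.continuousOn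
  have hs := h s ⟨le_rfl, hst⟩
  have ht := h t ⟨hst, le_rfl⟩
  rcases lt_or_gt_of_ne hs with h1 | h1 <;> rcases lt_or_gt_of_ne ht with h2 | h2
  · rw [sign_neg h1, sign_neg h2]
  · obtain ⟨r, hr, h0⟩ := intermediate_value_Icc hst hc ⟨h1.le, h2.le⟩
    exact absurd h0 (h r hr)
  · obtain ⟨r, hr, h0⟩ := intermediate_value_Icc' hst hc ⟨h2.le, h1.le⟩
    exact absurd h0 (h r hr)
  · rw [sign_pos h1, sign_pos h2]

/-- gluing two order isomorphisms at a point -/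
lemma glue_iso (e₁ e₂ : ℝ ≃o ℝ) (m : ℝ) (h : e₁ m = e₂ m) :
    ∃ e : ℝ ≃o ℝ, (∀ t ≤ m, e t = e₁ t) ∧ (∀ t, m ≤ t → e t = e₂ t) := by
  have hm : StrictMono (fun t => if t ≤ m then e₁ t else e₂ t) := by
    intro s t hst
    dsimp only
    split_ifs with h1 h2 h2
    · exact e₁.strictMono hst
    · calc e₁ s ≤ e₁ m := e₁.monotone h1
        _ = e₂ m := h
        _ < e₂ t := e₂.strictMono (not_le.mp h2)
    · exact absurd (hst.le.trans h2) h1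
    · exact e₂.strictMono hst
  have hs : Function.Surjective (fun t => if t ≤ m then e₁ t else e₂ t) := by
    intro y
    by_cases hy : y ≤ e₁ m
    · refine ⟨e₁.symm y, ?_⟩
      have : e₁.symm y ≤ m := by rwa [OrderIso.symm_apply_le]
      simp [this]
    · refine ⟨e₂.symm y, ?_⟩
      have : ¬ e₂.symm y ≤ m := by rw [OrderIso.symm_apply_le, ← h]; exact hy
      simp [this]
  refine ⟨StrictMono.orderIsoOfSurjective _ hm hs, ?_, ?_⟩
  · intro t ht
    simp [ht]
  · intro t ht
    rcases ht.eq_or_lt with rfl | h'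
    · simp [h]
    · simp [not_le.mpr h']

lemma exists_line (a a' b b' : ℝ) (h : a < b) (h' : a' < b') :
    ∃ e : ℝ ≃o ℝ, e a = a' ∧ e b = b' := by
  have hk : 0 < (b' - a') / (b - a) := div_pos (by linarith) (by linarith)
  set k := (b' - a') / (b - a) with hkd
  have hkk : k * (b - a) = b' - a' := by rw [hkd]; field_simp [(sub_pos.mpr h).ne']
  have hm : StrictMono (fun t => a' + k * (t - a)) := by
    intro s t hst
    dsimp only
    nlinarith
  have hs : Function.Surjective (fun t => a' + k * (t - a)) := by
    intro y
    refine ⟨a + (y - a') / k, ?_⟩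
    dsimp only
    field_simp
    ring
  refine ⟨StrictMono.orderIsoOfSurjective _ hm hs, ?_, ?_⟩
  · simp
  · simp [hkk]

lemma extend_iso (T : Finset ℝ) (f : ℝ → ℝ) (hf : StrictMonoOn f (T : Set ℝ)) :
    ∃ e : ℝ ≃o ℝ, ∀ t ∈ T, e t = f t := by
  induction T using Finset.induction_on_max with
  | empty => exact ⟨OrderIso.refl ℝ, by simp⟩
  | insert m T hT ih =>
    obtain ⟨e, he⟩ := ih (hf.mono (by simp))
    rcases T.eq_empty_or_nonempty with rfl | hne
    · obtain ⟨e', h1, -⟩ := exists_line m (f m) (m + 1) (f m + 1) (by linarith) (by linarith)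
      exact ⟨e', by simp [h1]⟩
    · have hmax := T.max'_mem hne
      set a := T.max' hne with ha
      have hlt : f a < f m := hf (by simp [hmax]) (by simp) (hT a hmax)
      obtain ⟨e', h1, h2⟩ := exists_line a (f a) m (f m) (hT a hmax) hlt
      obtain ⟨e'', h3, h4⟩ := glue_iso e e' a (by rw [he a hmax, h1])
      refine ⟨e'', ?_⟩
      intro t ht
      rcases Finset.mem_insert.mp ht with rfl | ht
      · rw [h4 t (hT a hmax).le, h2]
      · rw [h3 t (T.le_max' t ht), he t ht]

/-- sign matching on a bounded monotone interval -/
lemma local_match_mono (u v : ℝ → ℝ) (a b : ℝ) (hab : a < b)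
    (hu : ContinuousOn u (Set.Icc a b)) (hv : ContinuousOn v (Set.Icc a b))
    (mu : StrictMonoOn u (Set.Icc a b)) (mv : StrictMonoOn v (Set.Icc a b))
    (ha : SignType.sign (u a) = SignType.sign (v a))
    (hb : SignType.sign (u b) = SignType.sign (v b)) :
    ∃ e : ℝ ≃o ℝ, e a = a ∧ e b = b ∧
      ∀ t ∈ Set.Icc a b, SignType.sign (u t) = SignType.sign (v (e t)) := by
  have haI : a ∈ Set.Icc a b := ⟨le_rfl, hab.le⟩
  have hbI : b ∈ Set.Icc a b := ⟨hab.le, le_rfl⟩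
  by_cases h1 : u a < 0
  · have h1' : v a < 0 := by rwa [← sign_eq_neg_one_iff, ← ha, sign_eq_neg_one_iff]
    by_cases h2 : 0 < u b
    · have h2' : 0 < v b := by rwa [← sign_eq_one_iff, ← hb, sign_eq_one_iff]
      obtain ⟨w, hw, hw0⟩ := intermediate_value_Icc hab.le hu ⟨h1.le, h2.le⟩
      obtain ⟨w', hw', hw0'⟩ := intermediate_value_Icc hab.le hv ⟨h1'.le, h2'.le⟩
      have l1 : a < w := lt_of_le_of_ne hw.1 (by rintro rfl; linarith)
      have l2 : w < b := lt_of_le_of_ne hw.2 (by rintro rfl; linarith)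
      have l1' : a < w' := lt_of_le_of_ne hw'.1 (by rintro rfl; linarith)
      have l2' : w' < b := lt_of_le_of_ne hw'.2 (by rintro rfl; linarith)
      obtain ⟨e1, h3, h4⟩ := exists_line a a w w' l1 l1'
      obtain ⟨e2, h5, h6⟩ := exists_line w w' b b l2 l2'
      obtain ⟨e, h7, h8⟩ := glue_iso e1 e2 w (by rw [h4, h5])
      have ea : e a = a := by rw [h7 a l1.le, h3]
      have eb : e b = b := by rw [h8 b l2.le, h6]
      have ew : e w = w' := by rw [h7 w le_rfl, h4]
      refine ⟨e, ea, eb, ?_⟩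
      intro t ht
      have het : e t ∈ Set.Icc a b := by
        constructor
        · rw [← ea]; exact e.monotone ht.1
        · rw [← eb]; exact e.monotone ht.2
      rcases lt_trichotomy t w with h | h | h
      · have q1 := mu ht hw h
        have q2 := mv het hw' (by rw [← ew]; exact e.strictMono h)
        rw [sign_neg (by linarith), sign_neg (by linarith)]
      · subst h
        rw [ew, hw0, hw0']
      · have q1 := mu hw ht h
        have q2 := mv hw' het (by rw [← ew]; exact e.strictMono h)
        rw [sign_pos (by linarith), sign_pos (by linarith)]
    · have h2' : ¬ 0 < v b := by rwa [← sign_eq_one_iff, ← hb, sign_eq_one_iff]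
      refine ⟨OrderIso.refl ℝ, rfl, rfl, ?_⟩
      intro t ht
      simp only [OrderIso.refl_apply]
      rcases ht.2.eq_or_lt with rfl | h
      · exact hb
      · have q1 := mu ht hbI h
        have q2 := mv ht hbI h
        rw [sign_neg (by linarith), sign_neg (by linarith)]
  · have h1' : ¬ v a < 0 := by rwa [← sign_eq_neg_one_iff, ← ha, sign_eq_neg_one_iff]
    refine ⟨OrderIso.refl ℝ, rfl, rfl, ?_⟩
    intro t ht
    simp only [OrderIso.refl_apply]
    rcases ht.1.eq_or_lt with rfl | h
    · exact ha
    · have q1 := mu haI ht h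
      have q2 := mv haI ht h
      rw [sign_pos (by linarith), sign_pos (by linarith)]

/-- gluing local matchings along a finite set of points -/
lemma glue_match (u v : ℝ → ℝ) (Z : Finset ℝ) :
    ∀ hne : Z.Nonempty,
    (∀ z ∈ Z, SignType.sign (u z) = SignType.sign (v z)) →
    (∀ t, t ≤ Z.min' hne → SignType.sign (u t) = SignType.sign (v t)) →
    (∀ a ∈ Z, ∀ b ∈ Z, a < b → (∀ z ∈ Z, z ≤ a ∨ b ≤ z) →
      ∃ e : ℝ ≃o ℝ, e a = a ∧ e b = b ∧
        ∀ t ∈ Set.Icc a b, SignType.sign (u t) = SignType.sign (v (e t))) →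
    ∃ e : ℝ ≃o ℝ, (∀ z ∈ Z, e z = z) ∧
      ∀ t ≤ Z.max' hne, SignType.sign (u t) = SignType.sign (v (e t)) := by
  induction Z using Finset.induction_on_max with
  | empty => intro h; simp at h
  | insert m T hT ih =>
    intro hne hz hmin hgap
    rcases T.eq_empty_or_nonempty with rfl | hT'
    · refine ⟨OrderIso.refl ℝ, by simp, ?_⟩
      intro t ht
      exact hmin t (by simpa using ht)
    · have hmem := T.max'_mem hT'
      set a := T.max' hT' with ha
      have ham := hT a hmem
      obtain ⟨e, he, he'⟩ := ih hT' (fun z h => hz z (Finset.mem_insert_of_mem h))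
        (fun t ht => hmin t (by
          apply Finset.le_min'
          intro y hy
          rcases Finset.mem_insert.mp hy with rfl | hy
          · exact ht.trans ((T.min'_le a hmem).trans ham.le)
          · exact ht.trans (T.min'_le y hy)))
        (fun x hx y hy hxy h => hgap x (Finset.mem_insert_of_mem hx) y
          (Finset.mem_insert_of_mem hy) hxy (by
            intro z hz
            rcases Finset.mem_insert.mp hz with rfl | hz
            · exact Or.inr (hT y hy).le
            · exact h z hz))
      obtain ⟨e2, h1, h2, h3⟩ := hgap a (Finset.mem_insert_of_mem hmem) m (Finset.mem_insert_self _ _) ham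
        (by
          intro z hz
          rcases Finset.mem_insert.mp hz with rfl | hz
          · exact Or.inr le_rfl
          · exact Or.inl (T.le_max' z hz))
      obtain ⟨e3, h4, h5⟩ := glue_iso e e2 a (by rw [he a hmem, h1])
      refine ⟨e3, ?_, ?_⟩
      · intro z hz
        rcases Finset.mem_insert.mp hz with rfl | hz
        · rw [h5 z ham.le, h2]
        · rw [h4 z (T.le_max' z hz), he z hz]
      · intro t ht
        have ht' : t ≤ m := ht.trans (by
          apply Finset.max'_le
          intro y hy
          rcases Finset.mem_insert.mp hy with rfl | hy
          · exact le_rfl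
          · exact (hT y hy).le)
        rcases le_total t a with h | h
        · rw [h4 t h]; exact he' t h
        · rw [h5 t h]; exact h3 t ⟨h, ht'⟩

lemma glue_match' (u v : ℝ → ℝ) (Z : Finset ℝ) (hne : Z.Nonempty)
    (hz : ∀ z ∈ Z, SignType.sign (u z) = SignType.sign (v z))
    (hmin : ∀ t, t ≤ Z.min' hne → SignType.sign (u t) = SignType.sign (v t))
    (hmax : ∀ t, Z.max' hne ≤ t → SignType.sign (u t) = SignType.sign (v t))
    (hgap : ∀ a ∈ Z, ∀ b ∈ Z, a < b → (∀ z ∈ Z, z ≤ a ∨ b ≤ z) →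
      ∃ e : ℝ ≃o ℝ, e a = a ∧ e b = b ∧
        ∀ t ∈ Set.Icc a b, SignType.sign (u t) = SignType.sign (v (e t))) :
    ∃ e : ℝ ≃o ℝ, (∀ z ∈ Z, e z = z) ∧
      ∀ t, SignType.sign (u t) = SignType.sign (v (e t)) := by
  obtain ⟨e, h1, h2⟩ := glue_match u v Z hne hz hmin hgap
  obtain ⟨e', h3, h4⟩ := glue_iso e (OrderIso.refl ℝ) (Z.max' hne)
    (by rw [h1 _ (Z.max'_mem hne)]; rfl)
  refine ⟨e', ?_, ?_⟩
  · intro z hz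
    rw [h3 z (Z.le_max' z hz), h1 z hz]
  · intro t
    rcases le_total t (Z.max' hne) with h | h
    · rw [h3 t h]; exact h2 t h
    · rw [h4 t h]; exact hmax t h

open Polynomial in
lemma sgn_top (P : ℝ[X]) : ∃ B : ℝ, ∀ t, B ≤ t →
    SignType.sign (P.eval t) = SignType.sign P.leadingCoeff := by
  by_cases hd : P.natDegree = 0
  · rw [natDegree_eq_zero] at hd
    obtain ⟨c, rfl⟩ := hd
    exact ⟨0, by simp⟩
  · have hdeg : 0 < P.degree := natDegree_pos_iff_degree_pos.mp (Nat.pos_of_ne_zero hd)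
    have hP : P.leadingCoeff ≠ 0 := by
      rw [leadingCoeff_ne_zero]; rintro rfl; simp at hd
    rcases lt_or_gt_of_ne hP with h | h
    · have := (tendsto_atBot_of_leadingCoeff_nonpos P hdeg h.le).eventually
        (Filter.eventually_lt_atBot 0)
      obtain ⟨B, hB⟩ := Filter.eventually_atTop.mp this
      exact ⟨B, fun t ht => by rw [sign_neg h, sign_neg (hB t ht)]⟩
    · have := (tendsto_atTop_of_leadingCoeff_nonneg P hdeg h.le).eventually
        (Filter.eventually_gt_atTop 0)
      obtain ⟨B, hB⟩ := Filter.eventually_atTop.mp this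
      exact ⟨B, fun t ht => by rw [sign_pos h, sign_pos (hB t ht)]⟩

open Polynomial in
lemma sgn_top_deriv (P : ℝ[X]) (hP : 1 ≤ P.natDegree) : ∃ B : ℝ, ∀ t, B ≤ t →
    SignType.sign (P.eval t) = SignType.sign (P.derivative.eval t) := by
  obtain ⟨B, hB⟩ := sgn_top P
  obtain ⟨B', hB'⟩ := sgn_top P.derivative
  refine ⟨max B B', fun t ht => ?_⟩
  rw [hB t ((le_max_left _ _).trans ht), hB' t ((le_max_right _ _).trans ht)]
  have hn : P.derivative.natDegree = P.natDegree - 1 := natDegree_derivative P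
  have : P.derivative.leadingCoeff = P.leadingCoeff * (P.natDegree : ℝ) := by
    rw [leadingCoeff, hn, coeff_derivative, leadingCoeff]
    have h1 : P.natDegree - 1 + 1 = P.natDegree := by omega
    have h2 : ((P.natDegree - 1 : ℕ) : ℝ) + 1 = P.natDegree := by exact_mod_cast h1
    rw [h1, h2]
  have hpos : (0 : ℝ) < P.natDegree := by exact_mod_cast hP
  rw [this, sign_mul, sign_pos hpos, mul_one]

open Polynomial in
lemma sgn_bot_deriv (P : ℝ[X]) (hP : 1 ≤ P.natDegree) : ∃ B : ℝ, ∀ t, t ≤ B →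
    SignType.sign (P.eval t) = - SignType.sign (P.derivative.eval t) := by
  obtain ⟨B, hB⟩ := sgn_top_deriv (P.comp (-X)) (by rw [natDegree_comp]; simpa using hP)
  refine ⟨-B, fun t ht => ?_⟩
  have := hB (-t) (by linarith)
  simpa [derivative_comp, Left.sign_neg] using this

/-- an order isomorphism fixing the roots preserves signs -/
lemma fix_sign (g : Polynomial ℝ) (e : ℝ ≃o ℝ) (he : g ≠ 0 → ∀ z, g.eval z = 0 → e z = z) (t : ℝ) :
    SignType.sign (g.eval t) = SignType.sign (g.eval (e t)) := by
  by_cases hg : g = 0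
  · simp [hg]
  by_cases ht : g.eval t = 0
  · rw [he hg t ht]
  have he := he hg
  have het : g.eval (e t) ≠ 0 := by
    intro h
    have := he _ h
    have h2 := e.injective this
    rw [h2] at h
    exact ht h
  rcases le_total t (e t) with h | h
  · apply sgn_const g _ _ h
    intro r hr h0
    have h1 := e.monotone hr.1
    rw [he r h0] at h1
    have : r = e t := le_antisymm hr.2 h1
    rw [this] at h0
    exact het h0
  · symm
    apply sgn_const g _ _ h
    intro r hr h0
    have h1 := e.monotone hr.2
    rw [he r h0] at h1
    have : r = e t := le_antisymm h1 hr.1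
    rw [this] at h0
    exact het h0

open Polynomial in
lemma mono_of_sign (P : ℝ[X]) (a b : ℝ)
    (h : ∀ t ∈ Set.Ioo a b, 0 < P.derivative.eval t) :
    StrictMonoOn (fun t => P.eval t) (Set.Icc a b) := by
  apply strictMonoOn_of_deriv_pos (convex_Icc a b) P.continuous.continuousOn
  intro x hx
  rw [interior_Icc] at hx
  rw [Polynomial.deriv]
  exact h x hx

open Polynomial in
lemma gap_match_pos (f g : ℝ[X]) (θ : ℝ ≃o ℝ) (a b : ℝ) (hab : a < b)
    (hd : ∀ t, SignType.sign (f.derivative.eval t) = SignType.sign (g.derivative.eval (θ t)))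
    (hp : ∀ t ∈ Set.Ioo a b, 0 < f.derivative.eval t)
    (ha : SignType.sign (f.eval a) = SignType.sign (g.eval (θ a)))
    (hb : SignType.sign (f.eval b) = SignType.sign (g.eval (θ b))) :
    ∃ e : ℝ ≃o ℝ, e a = a ∧ e b = b ∧
      ∀ t ∈ Set.Icc a b, SignType.sign (f.eval t) = SignType.sign (g.eval (θ (e t))) := by
  have hc : Continuous (fun t => g.eval (θ t)) := g.continuous.comp θ.continuous
  apply local_match_mono (fun t => f.eval t) (fun t => g.eval (θ t)) a b hab
    f.continuous.continuousOn hc.continuousOn (mono_of_sign f a b hp) _ ha hb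
  have := mono_of_sign g (θ a) (θ b) (by
    intro s hs
    have h1 := hd (θ.symm s)
    rw [θ.apply_symm_apply] at h1
    rw [← sign_eq_one_iff, ← h1, sign_eq_one_iff]
    apply hp
    constructor
    · rw [OrderIso.lt_symm_apply]; exact hs.1
    · rw [OrderIso.symm_apply_lt]; exact hs.2)
  intro s hs t ht hst
  exact this ⟨θ.monotone hs.1, θ.monotone hs.2⟩ ⟨θ.monotone ht.1, θ.monotone ht.2⟩
    (θ.strictMono hst)

open Polynomial in
lemma gap_match (f g : ℝ[X]) (θ : ℝ ≃o ℝ) (a b : ℝ) (hab : a < b)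
    (hd : ∀ t, SignType.sign (f.derivative.eval t) = SignType.sign (g.derivative.eval (θ t)))
    (hp : ∀ t ∈ Set.Ioo a b, f.derivative.eval t ≠ 0)
    (ha : SignType.sign (f.eval a) = SignType.sign (g.eval (θ a)))
    (hb : SignType.sign (f.eval b) = SignType.sign (g.eval (θ b))) :
    ∃ e : ℝ ≃o ℝ, e a = a ∧ e b = b ∧
      ∀ t ∈ Set.Icc a b, SignType.sign (f.eval t) = SignType.sign (g.eval (θ (e t))) := by
  have hm : (a + b) / 2 ∈ Set.Ioo a b := ⟨by linarith, by linarith⟩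
  have hsame : ∀ t ∈ Set.Ioo a b, SignType.sign (f.derivative.eval t)
      = SignType.sign (f.derivative.eval ((a + b) / 2)) := by
    intro t ht
    rcases le_total t ((a + b) / 2) with h | h
    · exact sgn_const _ _ _ h (fun r hr => hp r ⟨ht.1.trans_le hr.1, hr.2.trans_lt hm.2⟩)
    · exact (sgn_const _ _ _ h (fun r hr => hp r ⟨hm.1.trans_le hr.1, hr.2.trans_lt ht.2⟩)).symm
  rcases lt_or_gt_of_ne (hp _ hm) with h | h
  · obtain ⟨e, h1, h2, h3⟩ := gap_match_pos (-f) (-g) θ a b hab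
      (by intro t; simp [Left.sign_neg, hd t])
      (by
        intro t ht
        have := hsame t ht
        rw [sign_neg h, sign_eq_neg_one_iff] at this
        simpa using this)
      (by simp [Left.sign_neg, ha]) (by simp [Left.sign_neg, hb])
    refine ⟨e, h1, h2, ?_⟩
    intro t ht
    have := h3 t ht
    simpa [Left.sign_neg] using this
  · apply gap_match_pos f g θ a b hab hd _ ha hb
    intro t ht
    have := hsame t ht
    rwa [sign_pos h, sign_eq_one_iff] at this

open Polynomial in
lemma key_step {ι : Type*} (K : Finset ι) (a b : ι → ℝ[X]) (f g : ℝ[X]) (θ : ℝ ≃o ℝ)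
    (hθ : ∀ i ∈ K, ∀ t, SignType.sign ((a i).eval t) = SignType.sign ((b i).eval (θ t)))
    (hd : ∀ t, SignType.sign (f.derivative.eval t) = SignType.sign (g.derivative.eval (θ t)))
    (hf : 1 ≤ f.natDegree) (hg : 1 ≤ g.natDegree)
    (hroot : ∀ i ∈ K, a i ≠ 0 → ∀ z, (a i).eval z = 0 →
      SignType.sign (f.eval z) = SignType.sign (g.eval (θ z)))
    (hroot' : ∀ z, f.derivative.eval z = 0 →
      SignType.sign (f.eval z) = SignType.sign (g.eval (θ z))) :
    ∃ θ' : ℝ ≃o ℝ,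
      (∀ i ∈ K, ∀ t, SignType.sign ((a i).eval t) = SignType.sign ((b i).eval (θ' t))) ∧
      ∀ t, SignType.sign (f.eval t) = SignType.sign (g.eval (θ' t)) := by
  classical
  obtain ⟨B1, hB1⟩ := sgn_top_deriv f hf
  obtain ⟨B2, hB2⟩ := sgn_top_deriv g hg
  obtain ⟨B3, hB3⟩ := sgn_bot_deriv f hf
  obtain ⟨B4, hB4⟩ := sgn_bot_deriv g hg
  set T := max B1 (θ.symm B2) with hT
  set T' := min B3 (θ.symm B4) with hT'
  have htop : ∀ t, T ≤ t → SignType.sign (f.eval t) = SignType.sign (g.eval (θ t)) := by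
    intro t ht
    rw [hB1 t ((le_max_left _ _).trans ht), hd t, hB2 (θ t)]
    rw [← OrderIso.symm_apply_le]
    exact (le_max_right _ _).trans ht
  have hbot : ∀ t, t ≤ T' → SignType.sign (f.eval t) = SignType.sign (g.eval (θ t)) := by
    intro t ht
    rw [hB3 t (ht.trans (min_le_left _ _)), hd t, hB4 (θ t)]
    rw [← OrderIso.le_symm_apply]
    exact ht.trans (min_le_right _ _)
  have hf' : f.derivative ≠ 0 := by
    intro h
    have := derivative_eq_zero.mp h
    omega
  let Z : Finset ℝ := insert T (insert T' (f.derivative.roots.toFinset ∪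
    K.biUnion (fun i => (a i).roots.toFinset)))
  have hTZ : T ∈ Z := Finset.mem_insert_self _ _
  have hTZ' : T' ∈ Z := Finset.mem_insert_of_mem (Finset.mem_insert_self _ _)
  have hdZ : ∀ z, f.derivative.eval z = 0 → z ∈ Z := by
    intro z hz
    simp [Z, hf', hz]
  have hKZ : ∀ i ∈ K, a i ≠ 0 → ∀ z, (a i).eval z = 0 → z ∈ Z := by
    intro i hi h0 z hz
    simp only [Z, Finset.mem_insert, Finset.mem_union, Finset.mem_biUnion]
    refine Or.inr (Or.inr (Or.inr ⟨i, hi, ?_⟩))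
    simp [h0, hz]
  have hne : Z.Nonempty := ⟨T, hTZ⟩
  have hZs : ∀ z ∈ Z, SignType.sign (f.eval z) = SignType.sign (g.eval (θ z)) := by
    intro z hz
    simp only [Z, Finset.mem_insert, Finset.mem_union, Finset.mem_biUnion] at hz
    rcases hz with rfl | rfl | h | ⟨i, hi, h⟩
    · exact htop _ le_rfl
    · exact hbot _ le_rfl
    · rw [Multiset.mem_toFinset, mem_roots'] at h
      exact hroot' z h.2
    · rw [Multiset.mem_toFinset, mem_roots'] at h
      exact hroot i hi h.1 z h.2
  obtain ⟨e, h1, h2⟩ := glue_match' (fun t => f.eval t) (fun t => g.eval (θ t)) Z hne hZs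
    (fun t ht => hbot t (ht.trans (Z.min'_le _ hTZ')))
    (fun t ht => htop t ((Z.le_max' _ hTZ).trans ht))
    (by
      intro x hx y hy hxy hgap
      apply gap_match f g θ x y hxy hd _ (hZs x hx) (hZs y hy)
      intro t ht h0
      rcases hgap t (hdZ t h0) with h | h
      · exact absurd ht.1 (not_lt.mpr h)
      · exact absurd ht.2 (not_lt.mpr h))
  refine ⟨e.trans θ, ?_, ?_⟩
  · intro i hi t
    rw [fix_sign (a i) e (fun h0 z hz => h1 z (hKZ i hi h0 z hz)) t, hθ i hi]
    rfl
  · intro t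
    exact h2 t

/-! ### Pseudo-division and the table lemma -/

open Polynomial in
/-- truncation of a polynomial to degree at most `j` -/
noncomputable def trunc' {A : Type*} [CommRing A] (j : ℕ) (g : A[X]) : A[X] :=
  ∑ i ∈ Finset.range (j + 1), monomial i (g.coeff i)

open Polynomial in
lemma trunc'_coeff {A : Type*} [CommRing A] (j : ℕ) (g : A[X]) (i : ℕ) :
    (trunc' j g).coeff i = if i ≤ j then g.coeff i else 0 := by
  simp only [trunc', finsetSum_coeff, coeff_monomial, Finset.sum_ite_eq', Finset.mem_range,
    Nat.lt_succ_iff]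

open Polynomial in
lemma trunc'_natDegree {A : Type*} [CommRing A] (j : ℕ) (g : A[X]) :
    (trunc' j g).natDegree ≤ j := by
  rw [natDegree_le_iff_coeff_eq_zero]
  intro i hi
  rw [trunc'_coeff, if_neg (by omega)]

open Polynomial in
lemma trunc'_map {A : Type*} [CommRing A] (j : ℕ) (g : A[X]) (φ : A →+* ℝ)
    (h : (g.map φ).natDegree ≤ j) : (trunc' j g).map φ = g.map φ := by
  ext i
  rw [coeff_map, trunc'_coeff]
  split_ifs with hi
  · rw [coeff_map]
  · rw [map_zero, coeff_eq_zero_of_natDegree_lt (by omega)]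

open Polynomial in
lemma pseudo_rem {A : Type*} [CommRing A] (g : A[X]) (j : ℕ) (hj : 1 ≤ j) (m : ℕ) :
    ∀ f : A[X], f.natDegree ≤ m → ∃ r : A[X], r.natDegree < j ∧
      ∀ φ : A →+* ℝ, (g.map φ).natDegree = j → ∀ z, (g.map φ).eval z = 0 →
        SignType.sign ((f.map φ).eval z) = SignType.sign ((r.map φ).eval z) := by
  induction m with
  | zero => intro f hf; exact ⟨f, by omega, fun _ _ _ _ => rfl⟩
  | succ m ih =>
    intro f hf
    by_cases hm : m + 1 < j
    · exact ⟨f, by omega, fun _ _ _ _ => rfl⟩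
    set c := g.coeff j with hc
    set f1 : A[X] := C (c ^ 2) * f - C (c * f.coeff (m + 1)) * X ^ (m + 1 - j) * trunc' j g with hf1
    have hdeg : f1.natDegree ≤ m := by
      rw [natDegree_le_iff_coeff_eq_zero]
      intro i hi
      have e1 : f1.coeff i = c ^ 2 * f.coeff i - c * f.coeff (m + 1) *
          (if m + 1 - j ≤ i then (trunc' j g).coeff (i - (m + 1 - j)) else 0) := by
        rw [hf1, coeff_sub, coeff_C_mul, mul_assoc, coeff_C_mul, coeff_X_pow_mul']
      rw [e1, if_pos (by omega), trunc'_coeff]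
      rcases (show m + 1 ≤ i by omega).eq_or_lt with h | h
      · subst h
        have : m + 1 - (m + 1 - j) = j := by omega
        rw [this, if_pos le_rfl, ← hc]
        ring
      · rw [coeff_eq_zero_of_natDegree_lt (show f.natDegree < i by omega), if_neg (by omega)]
        ring
    obtain ⟨r, hr, hr'⟩ := ih f1 hdeg
    refine ⟨r, hr, ?_⟩
    intro φ hφ z hz
    rw [← hr' φ hφ z hz]
    have hne : φ c ≠ 0 := by
      have : (g.map φ).leadingCoeff ≠ 0 := by
        rw [leadingCoeff_ne_zero]
        intro h
        rw [h] at hφ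
        simp at hφ
        omega
      rwa [leadingCoeff, hφ, coeff_map] at this
    have : (f1.map φ).eval z = (φ c) ^ 2 * (f.map φ).eval z := by
      rw [hf1]
      simp only [Polynomial.map_sub, Polynomial.map_mul, trunc'_map j g φ hφ.le, eval_sub, eval_mul,
        hz, mul_zero, sub_zero, map_C, eval_C]
      rw [map_pow]
    have hpos : 0 < (φ c) ^ 2 := by positivity
    rw [this, sign_mul, sign_pos hpos, one_mul]

open Polynomial in
/-- two specialisations have the same sign table for the family `F` -/
def SameTable {A : Type*} [CommRing A] (F : Finset A[X]) (φ ψ : A →+* ℝ) : Prop :=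
  ∃ θ : ℝ ≃o ℝ, ∀ f ∈ F, ∀ t,
    SignType.sign ((f.map φ).eval t) = SignType.sign ((f.map ψ).eval (θ t))

open Polynomial in
/-- the sign table of `F` is determined by finitely many signs -/
def Tame {A : Type*} [CommRing A] (F : Finset A[X]) : Prop :=
  ∃ G : Finset A, ∀ φ ψ : A →+* ℝ,
    (∀ c ∈ G, SignType.sign (φ c) = SignType.sign (ψ c)) → SameTable F φ ψ

open Polynomial in
lemma natDegree_map_eq_of {A : Type*} [CommRing A] (g : A[X]) (φ ψ : A →+* ℝ)
    (h : ∀ i ≤ g.natDegree, SignType.sign (φ (g.coeff i)) = SignType.sign (ψ (g.coeff i))) :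
    (g.map φ).natDegree = (g.map ψ).natDegree := by
  have key : ∀ φ ψ : A →+* ℝ, (∀ i ≤ g.natDegree,
      SignType.sign (φ (g.coeff i)) = SignType.sign (ψ (g.coeff i))) →
      (g.map φ).natDegree ≤ (g.map ψ).natDegree := by
    intro φ ψ h
    rw [natDegree_le_iff_coeff_eq_zero]
    intro i hi
    rw [coeff_map]
    by_cases hi' : i ≤ g.natDegree
    · have h1 := coeff_eq_zero_of_natDegree_lt hi
      rw [coeff_map] at h1
      have h2 := h i hi'
      rwa [h1, sign_zero, sign_eq_zero_iff] at h2
    · rw [coeff_eq_zero_of_natDegree_lt (by omega), map_zero]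
  exact le_antisymm (key φ ψ h) (key ψ φ (fun i hi => (h i hi).symm))

open Polynomial in
lemma tame_step {A : Type*} [CommRing A] [DecidableEq A[X]] (n : ℕ) (H : Finset A[X]) (f : A[X])
    (hH : ∀ g ∈ H, g.natDegree ≤ n + 1) (hf : f.natDegree ≤ n + 1)
    (ih : ∀ H' : Finset A[X], (∀ g ∈ H', g.natDegree ≤ n) → Tame (H' ∪ H)) :
    Tame (insert f H) := by
  classical
  have hpr : ∀ g : A[X], ∀ j : ℕ, ∃ r : A[X], 1 ≤ j → r.natDegree < j ∧
      ∀ φ : A →+* ℝ, (g.map φ).natDegree = j → ∀ z, (g.map φ).eval z = 0 →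
        SignType.sign ((f.map φ).eval z) = SignType.sign ((r.map φ).eval z) := by
    intro g j
    by_cases hj : 1 ≤ j
    · obtain ⟨r, h1, h2⟩ := pseudo_rem g j hj (n + 1) f hf
      exact ⟨r, fun _ => ⟨h1, h2⟩⟩
    · exact ⟨0, fun h => absurd h hj⟩
  choose rem hrem using hpr
  let K : Finset A[X] := insert (derivative f) H
  have hf'n : (derivative f).natDegree ≤ n := by
    have := natDegree_derivative_le f
    omega
  have hK : ∀ g ∈ K, g.natDegree ≤ n + 1 := by
    intro g hg
    rcases Finset.mem_insert.mp hg with rfl | hg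
    · omega
    · exact hH g hg
  let R : Finset A[X] := K.biUnion (fun g => (Finset.Icc 1 (n + 1)).image (rem g))
  let H' : Finset A[X] := insert (derivative f) (insert (trunc' n f) R)
  obtain ⟨G, hG⟩ := ih H' (by
    intro g hg
    simp only [H', Finset.mem_insert, R, Finset.mem_biUnion, Finset.mem_image, Finset.mem_Icc] at hg
    rcases hg with rfl | rfl | ⟨g', -, j, ⟨hj, hj'⟩, rfl⟩
    · exact hf'n
    · exact trunc'_natDegree n f
    · have := (hrem g' j hj).1
      omega)
  let G' : Finset A := G ∪ (insert f K).biUnion (fun g => (Finset.range (n + 2)).image g.coeff)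
  refine ⟨G', ?_⟩
  intro φ ψ hφψ
  have hcoef : ∀ g ∈ insert f K, ∀ i ≤ n + 1,
      SignType.sign (φ (g.coeff i)) = SignType.sign (ψ (g.coeff i)) := by
    intro g hg i hi
    apply hφψ
    refine Finset.mem_union_right _ (Finset.mem_biUnion.mpr ⟨g, hg, ?_⟩)
    exact Finset.mem_image_of_mem _ (Finset.mem_range.mpr (by omega))
  have hdegs : ∀ g ∈ insert f K, (g.map φ).natDegree = (g.map ψ).natDegree := by
    intro g hg
    apply natDegree_map_eq_of
    intro i hi
    apply hcoef g hg
    rcases Finset.mem_insert.mp hg with rfl | hg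
    · omega
    · have := hK g hg
      omega
  obtain ⟨θ, hθ⟩ := hG φ ψ (fun c hc => hφψ c (Finset.mem_union_left _ hc))
  have hfd := hdegs f (Finset.mem_insert_self _ _)
  have hfle : (f.map φ).natDegree ≤ n + 1 := natDegree_map_le.trans hf
  by_cases hdn : (f.map φ).natDegree ≤ n
  · refine ⟨θ, ?_⟩
    intro g hg t
    rcases Finset.mem_insert.mp hg with rfl | hg
    · have := hθ (trunc' n g) (Finset.mem_union_left _ (by simp [H'])) t
      rwa [trunc'_map n g φ hdn, trunc'_map n g ψ (by omega)] at this
    · exact hθ g (Finset.mem_union_right _ hg) t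
  · have hKθ : ∀ g ∈ K, ∀ t,
        SignType.sign ((g.map φ).eval t) = SignType.sign ((g.map ψ).eval (θ t)) := by
      intro g hg t
      rcases Finset.mem_insert.mp hg with rfl | hg
      · exact hθ _ (Finset.mem_union_left _ (by simp [H'])) t
      · exact hθ g (Finset.mem_union_right _ hg) t
    have hroot : ∀ g ∈ K, g.map φ ≠ 0 → ∀ z, (g.map φ).eval z = 0 →
        SignType.sign ((f.map φ).eval z) = SignType.sign ((f.map ψ).eval (θ z)) := by
      intro g hg hg0 z hz
      have hj : 1 ≤ (g.map φ).natDegree := by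
        by_contra hlt
        have h0 : (g.map φ).natDegree = 0 := by omega
        obtain ⟨c, hc⟩ := natDegree_eq_zero.mp h0
        rw [← hc, eval_C] at hz
        rw [← hc, hz] at hg0
        simp at hg0
      have hj' : (g.map φ).natDegree ≤ n + 1 := natDegree_map_le.trans (hK g hg)
      have hz' : (g.map ψ).eval (θ z) = 0 := by
        have := hKθ g hg z
        rw [hz, sign_zero] at this
        exact sign_eq_zero_iff.mp this.symm
      have hr := (hrem g _ hj).2
      rw [hr φ rfl z hz, hr ψ (hdegs g (Finset.mem_insert_of_mem hg)).symm (θ z) hz']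
      apply hθ
      refine Finset.mem_union_left _ (Finset.mem_insert_of_mem (Finset.mem_insert_of_mem ?_))
      refine Finset.mem_biUnion.mpr ⟨g, hg, ?_⟩
      exact Finset.mem_image_of_mem _ (Finset.mem_Icc.mpr ⟨hj, hj'⟩)
    have hdf : (derivative f).map φ ≠ 0 := by
      rw [← derivative_map]
      intro h
      have := derivative_eq_zero.mp h
      omega
    obtain ⟨θ', h1, h2⟩ := key_step K (fun g => g.map φ) (fun g => g.map ψ) (f.map φ) (f.map ψ) θ hKθ
      (by
        intro t
        rw [derivative_map, derivative_map]
        exact hKθ _ (Finset.mem_insert_self _ _) t)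
      (by omega) (by omega) hroot
      (by
        intro z hz
        rw [derivative_map] at hz
        exact hroot _ (Finset.mem_insert_self _ _) hdf z hz)
    refine ⟨θ', ?_⟩
    intro g hg t
    rcases Finset.mem_insert.mp hg with rfl | hg
    · exact h2 t
    · exact h1 g (Finset.mem_insert_of_mem hg) t

open Polynomial in
lemma tame_all {A : Type*} [CommRing A] (n : ℕ) :
    ∀ F : Finset A[X], (∀ f ∈ F, f.natDegree ≤ n) → Tame F := by
  classical
  induction n with
  | zero =>
    intro F hF
    refine ⟨F.image (fun f => f.coeff 0), ?_⟩
    intro φ ψ h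
    refine ⟨OrderIso.refl ℝ, ?_⟩
    intro f hf t
    have h1 := eq_C_of_natDegree_le_zero (hF f hf)
    have h2 := h (f.coeff 0) (Finset.mem_image_of_mem _ hf)
    rw [h1]
    simpa using h2
  | succ n ih =>
    have key : ∀ F2 : Finset A[X], (∀ f ∈ F2, f.natDegree ≤ n + 1) →
        ∀ F0 : Finset A[X], (∀ f ∈ F0, f.natDegree ≤ n) → Tame (F0 ∪ F2) := by
      intro F2
      induction F2 using Finset.induction_on with
      | empty =>
        intro _ F0 h0
        rw [Finset.union_empty]
        exact ih F0 h0
      | insert f F2 hf ih2 =>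
        intro h2 F0 h0
        rw [Finset.union_insert]
        apply tame_step n
        · intro g hg
          rcases Finset.mem_union.mp hg with hg | hg
          · have := h0 g hg
            omega
          · exact h2 g (Finset.mem_insert_of_mem hg)
        · exact h2 f (Finset.mem_insert_self _ _)
        · intro H' hH'
          rw [← Finset.union_assoc]
          apply ih2 (fun g hg => h2 g (Finset.mem_insert_of_mem hg))
          intro g hg
          rcases Finset.mem_union.mp hg with hg | hg
          · exact hH' g hg
          · exact h0 g hg
    intro F hF
    have := key F hF ∅ (by simp)
    rwa [Finset.empty_union] at this

/-! ### Gluing pairs -/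

lemma iso_fix_aux (g : Polynomial ℝ) (hg : g ≠ 0) (e : ℝ ≃o ℝ)
    (he : ∀ t, g.eval t = 0 → g.eval (e t) = 0) (r : ℝ) (hr : g.eval r = 0) : ¬ r < e r := by
  intro hlt
  have hm : StrictMono (fun n : ℕ => e^[n] r) := by
    apply strictMono_nat_of_lt_succ
    intro n
    rw [Function.iterate_succ_apply]
    exact e.strictMono.iterate n hlt
  have hz : ∀ n : ℕ, g.eval (e^[n] r) = 0 := by
    intro n
    induction n with
    | zero => exact hr
    | succ n ih => rw [Function.iterate_succ_apply']; exact he _ ih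
  have hinf := Set.infinite_of_injective_forall_mem (s := {x | g.IsRoot x}) hm.injective hz
  exact hinf (Polynomial.finite_setOfPred_isRoot hg)

lemma iso_fix (g : Polynomial ℝ) (hg : g ≠ 0) (e : ℝ ≃o ℝ)
    (he : ∀ t, SignType.sign (g.eval t) = SignType.sign (g.eval (e t))) (r : ℝ)
    (hr : g.eval r = 0) : e r = r := by
  have h1 := iso_fix_aux g hg e (by
    intro t ht
    have := he t
    rw [ht, sign_zero] at this
    exact sign_eq_zero_iff.mp this.symm) r hr
  have h2 := iso_fix_aux g hg e.symm (by
    intro t ht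
    have := he (e.symm t)
    rw [e.apply_symm_apply, ht, sign_zero] at this
    exact sign_eq_zero_iff.mp this) r hr
  rw [OrderIso.lt_symm_apply] at h2
  exact le_antisymm (not_lt.mp h1) (not_lt.mp h2)

lemma iso_unique (f g : Polynomial ℝ) (hf : f ≠ 0) (e₁ e₂ : ℝ ≃o ℝ)
    (h₁ : ∀ t, SignType.sign (f.eval t) = SignType.sign (g.eval (e₁ t)))
    (h₂ : ∀ t, SignType.sign (f.eval t) = SignType.sign (g.eval (e₂ t))) (r : ℝ)
    (hr : f.eval r = 0) : e₁ r = e₂ r := by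
  have := iso_fix f hf (e₁.trans e₂.symm) (by
    intro t
    rw [h₂ ((e₁.trans e₂.symm) t), h₁ t]
    simp) r hr
  have h3 : e₂.symm (e₁ r) = r := this
  rw [← h3, e₂.apply_symm_apply, h3]

lemma glue_pairs {ι : Type*} [Fintype ι] (a b : ι → Polynomial ℝ)
    (h : ∀ i j, ∃ θ : ℝ ≃o ℝ,
      (∀ t, SignType.sign ((a i).eval t) = SignType.sign ((b i).eval (θ t))) ∧
      (∀ t, SignType.sign ((a j).eval t) = SignType.sign ((b j).eval (θ t)))) :
    ∃ θ : ℝ ≃o ℝ, ∀ i t, SignType.sign ((a i).eval t) = SignType.sign ((b i).eval (θ t)) := by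
  classical
  choose θ h1 h2 using h
  let T : Finset ℝ := Finset.univ.biUnion (fun i => (a i).roots.toFinset)
  have hT : ∀ r ∈ T, ∃ i, a i ≠ 0 ∧ (a i).eval r = 0 := by
    intro r hr
    obtain ⟨i, -, hi⟩ := Finset.mem_biUnion.mp hr
    rw [Multiset.mem_toFinset, Polynomial.mem_roots'] at hi
    exact ⟨i, hi.1, hi.2⟩
  have hT' : ∀ i r, a i ≠ 0 → (a i).eval r = 0 → r ∈ T := by
    intro i r h0 hr
    refine Finset.mem_biUnion.mpr ⟨i, Finset.mem_univ _, ?_⟩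
    rw [Multiset.mem_toFinset, Polynomial.mem_roots']
    exact ⟨h0, hr⟩
  have hmono : ∀ i j r s, a i ≠ 0 → (a i).eval r = 0 → a j ≠ 0 → (a j).eval s = 0 →
      θ i i r = θ i j r ∧ θ j j s = θ i j s := by
    intro i j r s hi hr hj hs
    exact ⟨iso_unique (a i) (b i) hi _ _ (h1 i i) (h1 i j) r hr,
      iso_unique (a j) (b j) hj _ _ (h1 j j) (h2 i j) s hs⟩
  let f : ℝ → ℝ := fun r => if hr : r ∈ T then θ (hT r hr).choose (hT r hr).choose r else 0
  have hf : ∀ i r, a i ≠ 0 → (a i).eval r = 0 → f r = θ i i r := by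
    intro i r h0 hr
    have hrT := hT' i r h0 hr
    have hsp := (hT r hrT).choose_spec
    have := hmono i _ r r h0 hr hsp.1 hsp.2
    simp only [f, dif_pos hrT]
    rw [this.1, this.2]
  obtain ⟨e, he⟩ := extend_iso T f (by
    intro r hr s hs hrs
    obtain ⟨i, hi, hir⟩ := hT r hr
    obtain ⟨j, hj, hjs⟩ := hT s hs
    rw [hf i r hi hir, hf j s hj hjs]
    have := hmono i j r s hi hir hj hjs
    rw [this.1, this.2]
    exact (θ i j).strictMono hrs)
  refine ⟨e, ?_⟩
  intro i t
  have := fix_sign (a i) (e.trans (θ i i).symm) (by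
    intro h0 z hz
    have h3 : e z = θ i i z := by rw [he z (hT' i z h0 hz), hf i z h0 hz]
    simp [h3]) t
  rw [this, h1 i i]
  simp

/-! ### Position of a point with respect to the roots -/

noncomputable def mpos {ι : Type*} [Fintype ι] (a : ι → Polynomial ℝ) (t : ℝ) : ℕ :=
  ∑ i, (((a i).roots.toFinset.filter (· < t)).card + ((a i).roots.toFinset.filter (· ≤ t)).card)

lemma mpos_le {ι : Type*} [Fintype ι] (a : ι → Polynomial ℝ) (D : ℕ)
    (h : ∀ i, (a i).natDegree ≤ D) (t : ℝ) : mpos a t ≤ Fintype.card ι * (2 * D) := by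
  unfold mpos
  rw [← smul_eq_mul, ← Finset.card_univ]
  apply Finset.sum_le_card_nsmul
  intro i _
  have h1 : (a i).roots.toFinset.card ≤ D :=
    (Multiset.toFinset_card_le _).trans ((Polynomial.card_roots' _).trans (h i))
  have h2 := Finset.card_filter_le (a i).roots.toFinset (· < t)
  have h3 := Finset.card_filter_le (a i).roots.toFinset (· ≤ t)
  omega

lemma mpos_lt {ι : Type*} [Fintype ι] (a : ι → Polynomial ℝ) (s t r : ℝ) (i : ι) (hst : s < t)
    (h0 : a i ≠ 0) (hr : (a i).eval r = 0) (h1 : s ≤ r) (h2 : r ≤ t) : mpos a s < mpos a t := by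
  have hmono : ∀ j, ((a j).roots.toFinset.filter (· < s)) ⊆ ((a j).roots.toFinset.filter (· < t)) := by
    intro j
    exact Finset.monotone_filter_right _ (fun x _ hx => lt_trans hx hst)
  have hmono' : ∀ j, ((a j).roots.toFinset.filter (· ≤ s)) ⊆ ((a j).roots.toFinset.filter (· ≤ t)) := by
    intro j
    exact Finset.monotone_filter_right _ (fun x _ hx => le_trans hx hst.le)
  have hmem : r ∈ (a i).roots.toFinset := by
    rw [Multiset.mem_toFinset, Polynomial.mem_roots']
    exact ⟨h0, hr⟩
  unfold mpos
  apply Finset.sum_lt_sum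
  · intro j _
    exact add_le_add (Finset.card_le_card (hmono j)) (Finset.card_le_card (hmono' j))
  · refine ⟨i, Finset.mem_univ _, ?_⟩
    rcases h1.eq_or_lt with h | h
    · apply add_lt_add_of_lt_of_le _ (Finset.card_le_card (hmono' i))
      apply Finset.card_lt_card
      refine ⟨hmono i, fun hsub => ?_⟩
      have := hsub (Finset.mem_filter.mpr ⟨hmem, by linarith⟩)
      have := (Finset.mem_filter.mp this).2
      linarith
    · apply add_lt_add_of_le_of_lt (Finset.card_le_card (hmono i))
      apply Finset.card_lt_card
      refine ⟨hmono' i, fun hsub => ?_⟩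
      have := hsub (Finset.mem_filter.mpr ⟨hmem, h2⟩)
      have := (Finset.mem_filter.mp this).2
      linarith

lemma roots_iso (f g : Polynomial ℝ) (θ : ℝ ≃o ℝ)
    (h : ∀ t, SignType.sign (f.eval t) = SignType.sign (g.eval (θ t))) (r : ℝ) :
    r ∈ f.roots.toFinset ↔ θ r ∈ g.roots.toFinset := by
  have hz : ∀ t, f.eval t = 0 ↔ g.eval (θ t) = 0 := by
    intro t
    rw [← sign_eq_zero_iff, h t, sign_eq_zero_iff]
  have h0 : f = 0 ↔ g = 0 := by
    constructor
    · rintro rfl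
      apply Polynomial.funext
      intro t
      have := (hz (θ.symm t)).mp (by simp)
      simpa using this
    · rintro rfl
      apply Polynomial.funext
      intro t
      have := (hz t).mpr (by simp)
      simpa using this
  rw [Multiset.mem_toFinset, Multiset.mem_toFinset, Polynomial.mem_roots', Polynomial.mem_roots',
    Polynomial.IsRoot.def, Polynomial.IsRoot.def, hz r, Ne, Ne, h0]

lemma mpos_iso {ι : Type*} [Fintype ι] (a b : ι → Polynomial ℝ) (θ : ℝ ≃o ℝ)
    (h : ∀ i t, SignType.sign ((a i).eval t) = SignType.sign ((b i).eval (θ t))) (t : ℝ) :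
    mpos b (θ t) = mpos a t := by
  unfold mpos
  apply Finset.sum_congr rfl
  intro i _
  congr 1
  · symm
    apply Finset.card_bij (fun r _ => θ r)
    · intro r hr
      rw [Finset.mem_filter] at hr ⊢
      exact ⟨(roots_iso _ _ θ (h i) r).mp hr.1, θ.strictMono hr.2⟩
    · intro r _ s _ hrs
      exact θ.injective hrs
    · intro s hs
      rw [Finset.mem_filter] at hs
      refine ⟨θ.symm s, ?_, by simp⟩
      rw [Finset.mem_filter]
      refine ⟨(roots_iso _ _ θ (h i) _).mpr (by simpa using hs.1), ?_⟩
      rw [OrderIso.symm_apply_lt]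
      exact hs.2
  · symm
    apply Finset.card_bij (fun r _ => θ r)
    · intro r hr
      rw [Finset.mem_filter] at hr ⊢
      exact ⟨(roots_iso _ _ θ (h i) r).mp hr.1, θ.monotone hr.2⟩
    · intro r _ s _ hrs
      exact θ.injective hrs
    · intro s hs
      rw [Finset.mem_filter] at hs
      refine ⟨θ.symm s, ?_, by simp⟩
      rw [Finset.mem_filter]
      refine ⟨(roots_iso _ _ θ (h i) _).mpr (by simpa using hs.1), ?_⟩
      rw [OrderIso.symm_apply_le]
      exact hs.2

lemma mpos_sign {ι : Type*} [Fintype ι] (a : ι → Polynomial ℝ) (s t : ℝ)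
    (h : mpos a s = mpos a t) (i : ι) :
    SignType.sign ((a i).eval s) = SignType.sign ((a i).eval t) := by
  by_cases h0 : a i = 0
  · simp [h0]
  rcases lt_trichotomy s t with hst | rfl | hst
  · apply sgn_const _ _ _ hst.le
    intro r hr hz
    exact absurd h (mpos_lt a s t r i hst h0 hz hr.1 hr.2).ne
  · rfl
  · symm
    apply sgn_const _ _ _ hst.le
    intro r hr hz
    exact absurd h (mpos_lt a t s r i hst h0 hz hr.1 hr.2).ne'

lemma mpos_hit {ι : Type*} [Fintype ι] (a : ι → Polynomial ℝ) (s t s' t' : ℝ) (hst : s' ≤ t')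
    (hs : mpos a s = mpos a s') (ht : mpos a t = mpos a t') (i : ι)
    (h : ∃ r ∈ Set.Icc s t, (a i).eval r = 0) : ∃ r ∈ Set.Icc s' t', (a i).eval r = 0 := by
  by_cases h0 : a i = 0
  · exact ⟨s', ⟨le_rfl, hst⟩, by simp [h0]⟩
  obtain ⟨r, hr, hz⟩ := h
  refine ⟨r, ⟨?_, ?_⟩, hz⟩
  · by_contra hlt
    have hlt := not_le.mp hlt
    exact absurd hs (mpos_lt a s s' r i (hr.1.trans_lt hlt) h0 hz hr.1 hlt.le).ne
  · by_contra hlt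
    have hlt := not_le.mp hlt
    exact absurd ht (mpos_lt a t' t r i (hlt.trans_le hr.2) h0 hz hlt.le hr.2).ne'

lemma hit_transfer {ι : Type*} [Fintype ι] (a b : ι → Polynomial ℝ) (θ : ℝ ≃o ℝ)
    (h : ∀ i t, SignType.sign ((a i).eval t) = SignType.sign ((b i).eval (θ t)))
    (s t s' t' : ℝ) (hst : s' ≤ t')
    (hs : mpos a s = mpos b s') (ht : mpos a t = mpos b t') (i : ι)
    (hh : ∃ r ∈ Set.Icc s t, (a i).eval r = 0) : ∃ r ∈ Set.Icc s' t', (b i).eval r = 0 := by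
  apply mpos_hit b (θ s) (θ t) s' t' hst ((mpos_iso a b θ h s).trans hs)
    ((mpos_iso a b θ h t).trans ht)
  obtain ⟨r, hr, hz⟩ := hh
  refine ⟨θ r, ⟨θ.monotone hr.1, θ.monotone hr.2⟩, ?_⟩
  rw [← sign_eq_zero_iff, ← h i r, hz, sign_zero]

/-! ### The universal pair -/

open Polynomial in
lemma pair_univ (D : ℕ) : ∃ G : Finset (MvPolynomial (Fin 2 × ℕ) ℝ), G.Nonempty ∧
    ∀ q q' : Fin 2 → ℝ[X], (∀ s, (q s).natDegree ≤ D) → (∀ s, (q' s).natDegree ≤ D) →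
    (∀ γ ∈ G, SignType.sign (MvPolynomial.eval (fun s : Fin 2 × ℕ => (q s.1).coeff s.2) γ) =
      SignType.sign (MvPolynomial.eval (fun s : Fin 2 × ℕ => (q' s.1).coeff s.2) γ)) →
    ∃ θ : ℝ ≃o ℝ, ∀ s t, SignType.sign ((q s).eval t) = SignType.sign ((q' s).eval (θ t)) := by
  classical
  let U : Fin 2 → (MvPolynomial (Fin 2 × ℕ) ℝ)[X] := fun s =>
    ∑ j ∈ Finset.range (D + 1), monomial j (MvPolynomial.X (s, j))
  have hU : ∀ (q : Fin 2 → ℝ[X]), (∀ s, (q s).natDegree ≤ D) → ∀ s,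
      (U s).map (MvPolynomial.eval (fun s : Fin 2 × ℕ => (q s.1).coeff s.2)) = q s := by
    intro q hq s
    rw [(q s).as_sum_range' (D + 1) (Nat.lt_succ_of_le (hq s))]
    simp [U, Polynomial.map_sum]
  obtain ⟨G, hG⟩ := tame_all _ (Finset.univ.image U) (fun f hf => Finset.le_sup (f := natDegree) hf)
  refine ⟨insert 1 G, ⟨1, Finset.mem_insert_self _ _⟩, ?_⟩
  intro q q' hq hq' h
  obtain ⟨θ, hθ⟩ := hG _ _ (fun γ hγ => h γ (Finset.mem_insert_of_mem hγ))
  refine ⟨θ, fun s t => ?_⟩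
  have := hθ (U s) (Finset.mem_image_of_mem _ (Finset.mem_univ _)) t
  rwa [hU q hq, hU q' hq'] at this

lemma aeval_degree {σ τ : Type*} (D : ℕ) (γ : MvPolynomial σ ℝ) : ∃ E : ℕ,
    ∀ f : σ → MvPolynomial τ ℝ, (∀ s, (f s).totalDegree ≤ D) →
      (MvPolynomial.aeval f γ).totalDegree ≤ E := by
  induction γ using MvPolynomial.induction_on with
  | C c => exact ⟨0, fun f _ => by simp [MvPolynomial.algebraMap_eq]⟩
  | add p q hp hq =>
    obtain ⟨E, hE⟩ := hp
    obtain ⟨E', hE'⟩ := hq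
    refine ⟨max E E', fun f hf => ?_⟩
    rw [map_add]
    exact (MvPolynomial.totalDegree_add _ _).trans (max_le_max (hE f hf) (hE' f hf))
  | mul_X p s hp =>
    obtain ⟨E, hE⟩ := hp
    refine ⟨E + D, fun f hf => ?_⟩
    rw [map_mul, MvPolynomial.aeval_X]
    exact (MvPolynomial.totalDegree_mul _ _).trans (add_le_add (hE f hf) (hf s))

lemma eval_aeval {σ τ : Type*} (x : τ → ℝ) (f : σ → MvPolynomial τ ℝ) (γ : MvPolynomial σ ℝ) :
    MvPolynomial.eval x (MvPolynomial.aeval f γ) =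
      MvPolynomial.eval (fun s => MvPolynomial.eval x (f s)) γ := by
  induction γ using MvPolynomial.induction_on with
  | C c => simp [MvPolynomial.algebraMap_eq]
  | add p q hp hq => rw [map_add, map_add, map_add, hp, hq]
  | mul_X p s hp =>
    rw [map_mul, map_mul, map_mul, hp, MvPolynomial.aeval_X, MvPolynomial.eval_X]

/-- the univariate restriction of `Q` over the base point `x` -/
noncomputable def fib {p : ℕ} (Q : MvPolynomial (Fin (p + 1)) ℝ) (x : Fin p → ℝ) : Polynomial ℝ :=
  (MvPolynomial.finSuccEquiv ℝ p Q).map (MvPolynomial.eval x)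

lemma fib_natDegree {p : ℕ} (Q : MvPolynomial (Fin (p + 1)) ℝ) (x : Fin p → ℝ) :
    (fib Q x).natDegree ≤ Q.totalDegree := by
  unfold fib
  refine Polynomial.natDegree_map_le.trans ?_
  rw [MvPolynomial.natDegree_finSuccEquiv]
  exact MvPolynomial.degreeOf_le_totalDegree _ _

lemma class_lemma (p D : ℕ) : ∃ (κ : Type) (_ : Fintype κ) (_ : Nonempty κ) (E : ℕ),
    ∀ (ι : Type) [Fintype ι] (Q : ι → MvPolynomial (Fin (p + 1)) ℝ),
      (∀ i, (Q i).totalDegree ≤ D) →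
      ∃ P : ι × ι × κ → MvPolynomial (Fin p) ℝ, (∀ k, (P k).totalDegree ≤ E) ∧
        ∀ x y : Fin p → ℝ,
          (∀ k, SignType.sign (MvPolynomial.eval x (P k)) =
            SignType.sign (MvPolynomial.eval y (P k))) →
          ∃ θ : ℝ ≃o ℝ, ∀ i t, SignType.sign ((fib (Q i) x).eval t) =
            SignType.sign ((fib (Q i) y).eval (θ t)) := by
  obtain ⟨G, hne, hG⟩ := pair_univ D
  choose E hE using fun γ : MvPolynomial (Fin 2 × ℕ) ℝ =>
    aeval_degree (σ := Fin 2 × ℕ) (τ := Fin p) D γ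
  refine ⟨G, inferInstance, ⟨⟨_, hne.choose_spec⟩⟩, G.sup E, ?_⟩
  intro ι _ Q hQ
  let c : ι → ι → Fin 2 × ℕ → MvPolynomial (Fin p) ℝ := fun i j s =>
    (MvPolynomial.finSuccEquiv ℝ p (![Q i, Q j] s.1)).coeff s.2
  have hc : ∀ i j s, (c i j s).totalDegree ≤ D := by
    intro i j s
    by_cases h0 : c i j s = 0
    · simp [h0]
    have h1 := MvPolynomial.totalDegree_coeff_finSuccEquiv_add_le (![Q i, Q j] s.1) s.2 h0
    have h2 : (![Q i, Q j] s.1).totalDegree ≤ D := by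
      rcases s with ⟨s, m⟩
      fin_cases s
      · exact hQ i
      · exact hQ j
    have h3 : (c i j s).totalDegree + s.2 ≤ (![Q i, Q j] s.1).totalDegree := h1
    omega
  refine ⟨fun k => MvPolynomial.aeval (c k.1 k.2.1) k.2.2.1, ?_, ?_⟩
  · intro k
    exact (hE _ _ (hc _ _)).trans (Finset.le_sup (f := E) k.2.2.2)
  · intro x y hxy
    apply glue_pairs (fun i => fib (Q i) x) (fun i => fib (Q i) y)
    intro i j
    have hdeg : ∀ (x : Fin p → ℝ) (s : Fin 2), (fib (![Q i, Q j] s) x).natDegree ≤ D := by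
      intro x s
      refine (fib_natDegree _ _).trans ?_
      fin_cases s
      · exact hQ i
      · exact hQ j
    obtain ⟨θ, hθ⟩ := hG (fun s => fib (![Q i, Q j] s) x) (fun s => fib (![Q i, Q j] s) y)
      (hdeg x) (hdeg y) (by
        intro γ hγ
        have := hxy (i, j, ⟨γ, hγ⟩)
        simp only [eval_aeval] at this
        simpa [fib, Polynomial.coeff_map, c] using this)
    exact ⟨θ, hθ 0, hθ 1⟩

lemma ncard_factor {X U V : Type*} (κ : X → U) (f : X → V) (h : ∀ x y, κ x = κ y → f x = f y)
    (S : Set U) (hS : S.Finite) (hκ : ∀ x, κ x ∈ S) : (Set.range f).ncard ≤ S.ncard := by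
  classical
  rcases isEmpty_or_nonempty X with hX | hX
  · simp [Set.range_eq_empty]
  let g : U → V := fun u => f (Function.invFun κ u)
  have hsub : Set.range f ⊆ g '' S := by
    rintro _ ⟨x, rfl⟩
    refine ⟨κ x, hκ x, ?_⟩
    apply h
    exact Function.invFun_eq ⟨x, rfl⟩
  exact (Set.ncard_le_ncard hsub (hS.image g)).trans (Set.ncard_image_le hS)

lemma count_signs (p : ℕ) : ∀ D : ℕ, ∃ C : ℕ, ∀ (ι : Type) [Fintype ι] [Nonempty ι]
    (Q : ι → MvPolynomial (Fin p) ℝ), (∀ i, (Q i).totalDegree ≤ D) →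
    (Set.range (fun x : Fin p → ℝ => fun i => SignType.sign (MvPolynomial.eval x (Q i)))).ncard
      ≤ C * Fintype.card ι ^ (2 ^ p - 1) := by
  induction p with
  | zero =>
    intro D
    refine ⟨1, ?_⟩
    intro ι _ _ Q _
    simp only [pow_zero, Nat.sub_self, mul_one]
    have := ncard_factor (fun _ : Fin 0 → ℝ => ())
      (fun x : Fin 0 → ℝ => fun i => SignType.sign (MvPolynomial.eval x (Q i)))
      (fun x y _ => by rw [Subsingleton.elim x y]) {()} (Set.toFinite _) (by simp)
    simpa using this
  | succ p ih =>
    intro D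
    obtain ⟨κ, _, _, E, hκ⟩ := class_lemma p D
    obtain ⟨C, hC⟩ := ih E
    refine ⟨C * Fintype.card κ ^ (2 ^ p - 1) * (2 * D + 1), ?_⟩
    intro ι _ _ Q hQ
    obtain ⟨P, hP, hPQ⟩ := hκ ι Q hQ
    let cls : (Fin p → ℝ) → (ι × ι × κ → SignType) :=
      fun x k => SignType.sign (MvPolynomial.eval x (P k))
    let S : Set ((ι × ι × κ → SignType) × ℕ) :=
      Set.range cls ×ˢ Set.Iic (Fintype.card ι * (2 * D))
    have hdeg : ∀ (x : Fin p → ℝ) i, (fib (Q i) x).natDegree ≤ D :=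
      fun x i => (fib_natDegree _ _).trans (hQ i)
    have heval : ∀ (x : Fin (p + 1) → ℝ) i,
        MvPolynomial.eval x (Q i) = (fib (Q i) (Fin.tail x)).eval (x 0) := by
      intro x i
      rw [fib, ← MvPolynomial.eval_eq_eval_mv_eval', Fin.cons_self_tail]
    have key := ncard_factor
      (fun x : Fin (p + 1) → ℝ => (cls (Fin.tail x), mpos (fun i => fib (Q i) (Fin.tail x)) (x 0)))
      (fun x : Fin (p + 1) → ℝ => fun i => SignType.sign (MvPolynomial.eval x (Q i)))
      (by
        intro x y hxy
        obtain ⟨h1, h2⟩ := Prod.mk.inj hxy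
        obtain ⟨θ, hθ⟩ := hPQ _ _ (fun k => congrFun h1 k)
        funext i
        rw [heval, heval, hθ i]
        apply mpos_sign (fun i => fib (Q i) (Fin.tail y))
        rw [mpos_iso _ _ θ hθ]
        exact h2)
      S ((Set.toFinite _).prod (Set.toFinite _))
      (fun x => ⟨⟨_, rfl⟩, mpos_le _ D (hdeg _) _⟩)
    refine key.trans ?_
    have hk : 1 ≤ Fintype.card ι := Fintype.card_pos
    have h1 := hC (ι × ι × κ) P hP
    have h2 : (Set.Iic (Fintype.card ι * (2 * D))).ncard = Fintype.card ι * (2 * D) + 1 := by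
      rw [← Finset.coe_Iic, Set.ncard_coe_finset, Nat.card_Iic]
    have he : 2 ^ (p + 1) - 1 = (2 ^ p - 1) + (2 ^ p - 1) + 1 := by
      have : 1 ≤ 2 ^ p := Nat.one_le_two_pow
      rw [pow_succ]
      omega
    rw [Set.ncard_prod, h2, he]
    rw [Fintype.card_prod, Fintype.card_prod] at h1
    calc (Set.range cls).ncard * (Fintype.card ι * (2 * D) + 1)
        ≤ (C * (Fintype.card ι * (Fintype.card ι * Fintype.card κ)) ^ (2 ^ p - 1)) *
          (Fintype.card ι * (2 * D + 1)) := by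
          apply Nat.mul_le_mul h1
          rw [mul_add]
          omega
      _ = _ := by
          rw [mul_pow, mul_pow]
          ring

lemma count_hits (p : ℕ) : ∀ D : ℕ, ∃ C : ℕ, ∀ (ι : Type) [Fintype ι] [Nonempty ι]
    (Q : ι → MvPolynomial (Fin (p + 1)) ℝ), (∀ i, (Q i).totalDegree ≤ D) →
    (Set.range (fun z : {z : (Fin p → ℝ) × ℝ × ℝ // z.2.1 ≤ z.2.2} =>
      {i | ∃ r ∈ Set.Icc z.1.2.1 z.1.2.2, (fib (Q i) z.1.1).eval r = 0})).ncard
      ≤ C * Fintype.card ι ^ (2 ^ (p + 1)) := by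
  intro D
  obtain ⟨κ, _, _, E, hκ⟩ := class_lemma p D
  obtain ⟨C, hC⟩ := count_signs p E
  refine ⟨C * Fintype.card κ ^ (2 ^ p - 1) * (2 * D + 1) ^ 2, ?_⟩
  intro ι _ _ Q hQ
  obtain ⟨P, hP, hPQ⟩ := hκ ι Q hQ
  let cls : (Fin p → ℝ) → (ι × ι × κ → SignType) :=
    fun x k => SignType.sign (MvPolynomial.eval x (P k))
  let S : Set ((ι × ι × κ → SignType) × ℕ × ℕ) :=
    Set.range cls ×ˢ (Set.Iic (Fintype.card ι * (2 * D)) ×ˢ Set.Iic (Fintype.card ι * (2 * D)))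
  have hdeg : ∀ (x : Fin p → ℝ) i, (fib (Q i) x).natDegree ≤ D :=
    fun x i => (fib_natDegree _ _).trans (hQ i)
  have key := ncard_factor
    (fun z : {z : (Fin p → ℝ) × ℝ × ℝ // z.2.1 ≤ z.2.2} =>
      (cls z.1.1, mpos (fun i => fib (Q i) z.1.1) z.1.2.1, mpos (fun i => fib (Q i) z.1.1) z.1.2.2))
    (fun z : {z : (Fin p → ℝ) × ℝ × ℝ // z.2.1 ≤ z.2.2} =>
      {i | ∃ r ∈ Set.Icc z.1.2.1 z.1.2.2, (fib (Q i) z.1.1).eval r = 0})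
    (by
      intro z w hzw
      obtain ⟨h1, h2⟩ := Prod.mk.inj hzw
      obtain ⟨h2, h3⟩ := Prod.mk.inj h2
      obtain ⟨θ, hθ⟩ := hPQ _ _ (fun k => congrFun h1 k)
      obtain ⟨θ', hθ'⟩ := hPQ _ _ (fun k => (congrFun h1 k).symm)
      ext i
      constructor
      · exact hit_transfer _ _ θ hθ _ _ _ _ w.2 h2 h3 i
      · exact hit_transfer _ _ θ' hθ' _ _ _ _ z.2 h2.symm h3.symm i)
    S ((Set.toFinite _).prod ((Set.toFinite _).prod (Set.toFinite _)))
    (fun x => ⟨⟨_, rfl⟩, mpos_le _ D (hdeg _) _, mpos_le _ D (hdeg _) _⟩)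
  refine key.trans ?_
  have hk : 1 ≤ Fintype.card ι := Fintype.card_pos
  have h1 := hC (ι × ι × κ) P hP
  have h2 : (Set.Iic (Fintype.card ι * (2 * D))).ncard = Fintype.card ι * (2 * D) + 1 := by
    rw [← Finset.coe_Iic, Set.ncard_coe_finset, Nat.card_Iic]
  have he : 2 ^ (p + 1) = (2 ^ p - 1) + (2 ^ p - 1) + 2 := by
    have : 1 ≤ 2 ^ p := Nat.one_le_two_pow
    rw [pow_succ]
    omega
  rw [Set.ncard_prod, Set.ncard_prod, h2, he]
  rw [Fintype.card_prod, Fintype.card_prod] at h1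
  have h3 : Fintype.card ι * (2 * D) + 1 ≤ Fintype.card ι * (2 * D + 1) := by
    rw [mul_add]
    omega
  calc (Set.range cls).ncard * ((Fintype.card ι * (2 * D) + 1) * (Fintype.card ι * (2 * D) + 1))
      ≤ (C * (Fintype.card ι * (Fintype.card ι * Fintype.card κ)) ^ (2 ^ p - 1)) *
        ((Fintype.card ι * (2 * D + 1)) * (Fintype.card ι * (2 * D + 1))) := by
        exact Nat.mul_le_mul h1 (Nat.mul_le_mul h3 h3)
    _ = _ := by
        rw [mul_pow, mul_pow]
        ring

theorem hit_subsets_polynomially_many (d p : ℕ) (hd : 0 < d) (hp : 0 < p) :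
    ∃ C : ℕ, 0 < C ∧ ∀ k : ℕ, 0 < k → ∀ 𝒞 : Finset (Set (Fin p → ℝ)),
      𝒞.card = k → (∀ H ∈ 𝒞, IsAlgHypersurface d p H) →
      Nat.card {S : Finset (Set (Fin p → ℝ)) | S ⊆ 𝒞 ∧
          ∃ s : Set (Fin p → ℝ), IsAxisSegment p s ∧
            ∀ H ∈ 𝒞, (H ∈ S ↔ (H ∩ s).Nonempty)}
        ≤ C * k ^ (2 ^ p + 1) := by
  classical
  obtain ⟨q, rfl⟩ : ∃ q, p = q + 1 := ⟨p - 1, by omega⟩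
  obtain ⟨C, hC⟩ := count_hits q d
  refine ⟨(q + 1) * C + 1, by omega, ?_⟩
  intro k hk 𝒞 hcard hH
  choose F hF0 hFd hFz using fun H : 𝒞 => hH H.1 H.2
  have hcard' : Fintype.card 𝒞 = k := by rw [Fintype.card_coe, hcard]
  have : Nonempty 𝒞 := by
    rw [← Fintype.card_pos_iff]
    omega
  let Q : Fin (q + 1) → 𝒞 → MvPolynomial (Fin (q + 1)) ℝ := fun i H =>
    MvPolynomial.rename (Equiv.swap 0 i) (F H)
  have hQd : ∀ i H, (Q i H).totalDegree ≤ d := fun i H =>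
    (MvPolynomial.totalDegree_rename_le _ _).trans (hFd H)
  let R : Fin (q + 1) → Set (Set 𝒞) := fun i =>
    Set.range (fun z : {z : (Fin q → ℝ) × ℝ × ℝ // z.2.1 ≤ z.2.2} =>
      {H | ∃ r ∈ Set.Icc z.1.2.1 z.1.2.2, (fib (Q i H) z.1.1).eval r = 0})
  have hR : ∀ i, (R i).ncard ≤ C * k ^ (2 ^ (q + 1)) := by
    intro i
    have := hC 𝒞 (Q i) (hQd i)
    rwa [hcard'] at this
  let Φ : Set 𝒞 → Finset (Set (Fin (q + 1) → ℝ)) := fun A =>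
    𝒞.filter (fun H => ∃ h : H ∈ 𝒞, (⟨H, h⟩ : 𝒞) ∈ A)
  have hsub : {S : Finset (Set (Fin (q + 1) → ℝ)) | S ⊆ 𝒞 ∧
          ∃ s : Set (Fin (q + 1) → ℝ), IsAxisSegment (q + 1) s ∧
            ∀ H ∈ 𝒞, (H ∈ S ↔ (H ∩ s).Nonempty)} ⊆ ⋃ i, Φ '' R i := by
    rintro S ⟨hS, s, ⟨x, i, ℓ, hℓ, rfl⟩, hs⟩
    rw [Set.mem_iUnion]
    let x' : Fin q → ℝ := Fin.tail (fun j => x (Equiv.swap 0 i j))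
    refine ⟨i, _, ⟨⟨(x', x i, x i + ℓ), by simpa using hℓ⟩, rfl⟩, ?_⟩
    have hpt : ∀ t : ℝ, (Fin.cons (x i + t) x' : Fin (q + 1) → ℝ) ∘ (Equiv.swap 0 i) =
        x + t • (Pi.single i 1 : Fin (q + 1) → ℝ) := by
      intro t
      funext j
      simp only [Function.comp_apply, Pi.add_apply, Pi.smul_apply, smul_eq_mul]
      by_cases hj : j = i
      · subst hj
        simp
      · have hne : Equiv.swap 0 i j ≠ 0 := by
          intro h
          apply hj
          have := congrArg (Equiv.swap 0 i) h
          simpa using this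
        obtain ⟨m, hm⟩ := Fin.exists_succ_eq.mpr hne
        rw [← hm, Fin.cons_succ]
        simp only [x', Fin.tail, hm, Equiv.swap_apply_self, Pi.single_eq_of_ne hj]
        simp
    have hev : ∀ (H : 𝒞) (t : ℝ), (fib (Q i H) x').eval (x i + t) =
        MvPolynomial.eval (x + t • (Pi.single i 1 : Fin (q + 1) → ℝ)) (F H) := by
      intro H t
      rw [fib, ← MvPolynomial.eval_eq_eval_mv_eval', MvPolynomial.eval_rename, hpt]
    ext H
    simp only [Φ, Finset.mem_filter, Set.mem_ofPred_eq]
    constructor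
    · rintro ⟨hHC, _hHC2, r, hr, hz⟩
      rw [hs H hHC]
      refine ⟨x + (r - x i) • (Pi.single i 1 : Fin (q + 1) → ℝ), ?_, r - x i, ?_, rfl⟩
      · have h1 := hFz ⟨H, hHC⟩
        dsimp only at h1
        rw [h1, Set.mem_ofPred_eq, ← hev]
        simpa using hz
      · constructor
        · linarith [hr.1]
        · linarith [hr.2]
    · intro hHS
      have hHC := hS hHS
      obtain ⟨y, hy, t, ht, rfl⟩ := (hs H hHC).mp hHS
      refine ⟨hHC, hHC, x i + t, ⟨by linarith [ht.1], by linarith [ht.2]⟩, ?_⟩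
      rw [hev]
      have h1 := hFz ⟨H, hHC⟩
      dsimp only at h1
      rw [h1] at hy
      exact hy
  have hfin : ∀ i, (R i).Finite := fun i => Set.toFinite _
  rw [Nat.card_coe_set_eq]
  calc _ ≤ (⋃ i, Φ '' R i).ncard :=
        Set.ncard_le_ncard hsub (Set.finite_iUnion (fun i => (hfin i).image Φ))
    _ ≤ ∑ i, (Φ '' R i).ncard := Set.ncard_iUnion_le_of_fintype _
    _ ≤ ∑ _i : Fin (q + 1), C * k ^ (2 ^ (q + 1)) :=
        Finset.sum_le_sum (fun i _ => (Set.ncard_image_le (hfin i)).trans (hR i))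
    _ = ((q + 1) * C) * k ^ (2 ^ (q + 1)) := by simp [mul_assoc]
    _ ≤ ((q + 1) * C + 1) * k ^ (2 ^ (q + 1) + 1) :=
        Nat.mul_le_mul (by omega) (Nat.pow_le_pow_right hk (by omega))
end

section
/- Let d and p be positive integers. There exists a constant c depending only on d and p such that for every integer K ≥ 2 the following holds. Consider the class of binary functions F = {f_s}, indexed by axis-aligned line segments s in ℝ^p, on the domain of K-tuples γ = (γ_1,…,γ_K) of algebraic hypersurfaces of degree at most d in ℝ^p, where f_s(γ) = 1 if some γ_i intersects s and f_s(γ) = 0 otherwise. Then the VC dimension of F is at most c·log K; i.e., if m tuples γ^(1),…,γ^(m) are such that for every b ∈ {0,1}^m there is an axis-aligned segment s with f_s(γ^(j)) = b_j for all j, then m ≤ c·log K. -/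
namespace VCSeg
open Polynomial

/-- integer valued sign -/
noncomputable def sg (z : ℝ) : ℤ := ((SignType.sign z : SignType) : ℤ)

lemma sg_mul (a b : ℝ) : sg (a * b) = sg a * sg b := by
  simp [sg, sign_mul]

lemma sg_pos {a : ℝ} (h : 0 < a) : sg a = 1 := by simp [sg, sign_pos h]
lemma sg_neg {a : ℝ} (h : a < 0) : sg a = -1 := by simp [sg, sign_neg h]

lemma sg_neg_pow {a : ℝ} (h : a < 0) (n : ℕ) : sg (a ^ n) = (-1) ^ n := by
  induction n with
  | zero => simp [sg]
  | succ n ih => rw [pow_succ, sg_mul, ih, sg_neg h, pow_succ]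

lemma exists_factor (g : ℝ[X]) (hg : g ≠ 0) (x : ℝ) :
    ∃ n h, g = (X - C x) ^ n * h ∧ h.eval x ≠ 0 ∧ n = g.rootMultiplicity x := by
  obtain ⟨q, h1, h2⟩ := exists_eq_pow_rootMultiplicity_mul_and_not_dvd g hg x
  refine ⟨_, q, h1, ?_, rfl⟩
  rwa [dvd_iff_isRoot] at h2

lemma rootMult_factor (n : ℕ) (h : ℝ[X]) (x : ℝ) (hx : h.eval x ≠ 0) :
    rootMultiplicity x ((X - C x) ^ n * h) = n := by
  have h0 : h ≠ 0 := by rintro rfl; simp at hx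
  rw [mul_comm, rootMultiplicity_mul_X_sub_C_pow h0, rootMultiplicity_eq_zero hx, zero_add]

/-- half of the sign jump of `g` at `x` -/
noncomputable def J (x : ℝ) (g : ℝ[X]) : ℤ :=
  if Odd (g.rootMultiplicity x) then
    sg ((g /ₘ (X - C x) ^ (g.rootMultiplicity x)).eval x) else 0

lemma J_factor (n : ℕ) (h : ℝ[X]) (x : ℝ) (hx : h.eval x ≠ 0) :
    J x ((X - C x) ^ n * h) = if Odd n then sg (h.eval x) else 0 := by
  rw [J, rootMult_factor n h x hx]
  rw [mul_divByMonic_cancel_left _ ((monic_X_sub_C x).pow n)]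

open Classical in
/-- local Cauchy index of `Q/P` -/
noncomputable def indAt (x : ℝ) (Q P : ℝ[X]) : ℤ :=
  if (X - C x) ^ (P.rootMultiplicity x) ∣ Q then 0 else J x (P * Q)

/-- Cauchy index of `Q/P` on the line -/
noncomputable def ind (Q P : ℝ[X]) : ℤ := ∑ x ∈ P.roots.toFinset, indAt x Q P

lemma ind_zero_left (P : ℝ[X]) : ind 0 P = 0 := by simp [ind, indAt]
lemma ind_zero_right (Q : ℝ[X]) : ind Q 0 = 0 := by simp [ind]

lemma not_dvd_factor {n k : ℕ} {h : ℝ[X]} {x : ℝ} (hx : h.eval x ≠ 0) :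
    (X - C x) ^ k ∣ (X - C x) ^ n * h ↔ k ≤ n := by
  have h0 : h ≠ 0 := by rintro rfl; simp at hx
  have h1 : (X - C x) ^ n * h ≠ 0 := mul_ne_zero (pow_ne_zero _ (X_sub_C_ne_zero x)) h0
  rw [← le_rootMultiplicity_iff h1, rootMult_factor n h x hx]

lemma indAt_mod (x : ℝ) (P Q S : ℝ[X]) (c : ℝ) (hc : 0 < c) (hP : P ≠ 0) :
    indAt x (C c * Q + S * P) P = indAt x Q P := by
  obtain ⟨b, p, hPe, hp, hb⟩ := exists_factor P hP x
  have hdP : (X - C x) ^ b ∣ P := ⟨p, hPe⟩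
  have hiff : (X - C x) ^ b ∣ (C c * Q + S * P) ↔ (X - C x) ^ b ∣ Q := by
    rw [dvd_add_left (hdP.mul_left S)]
    have : IsUnit (C c : ℝ[X]) := isUnit_C.2 (isUnit_iff_ne_zero.2 hc.ne')
    exact this.dvd_mul_left
  unfold indAt
  rw [← hb]
  by_cases hd : (X - C x) ^ b ∣ Q
  · rw [if_pos hd, if_pos (hiff.2 hd)]
  · rw [if_neg hd, if_neg (fun h => hd (hiff.1 h))]
    have hQ : Q ≠ 0 := by rintro rfl; simp at hd
    obtain ⟨a, q, hQe, hq, -⟩ := exists_factor Q hQ x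
    rw [hQe, not_dvd_factor hq, not_le] at hd
    have e1 : P * Q = (X - C x) ^ (b + a) * (p * q) := by rw [hPe, hQe]; ring
    have e2 : P * (C c * Q + S * P) =
        (X - C x) ^ (b + a) * (p * (C c * q + S * (X - C x) ^ (b - a) * p)) := by
      obtain ⟨k, rfl⟩ := Nat.exists_eq_add_of_lt hd
      have : a + k + 1 - a = k + 1 := by omega
      rw [this, hPe, hQe]; ring
    have hba : b - a ≠ 0 := by omega
    have e3 : eval x (p * (C c * q + S * (X - C x) ^ (b - a) * p)) = c * (eval x (p * q)) := by
      simp [hba]; ring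
    have hpq : eval x (p * q) ≠ 0 := by simp [hp, hq]
    rw [e1, e2, J_factor _ _ _ hpq, J_factor _ _ _ (by rw [e3]; exact mul_ne_zero hc.ne' hpq), e3,
      sg_mul, sg_pos hc, one_mul]

lemma ind_mod (P Q S : ℝ[X]) (c : ℝ) (hc : 0 < c) :
    ind (C c * Q + S * P) P = ind Q P := by
  by_cases hP : P = 0
  · subst hP; simp [ind_zero_right]
  · exact Finset.sum_congr rfl fun x _ => indAt_mod x P Q S c hc hP

lemma indAt_add (x : ℝ) (P Q : ℝ[X]) (hP : P ≠ 0) (hQ : Q ≠ 0) :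
    indAt x Q P + indAt x P Q = J x (P * Q) := by
  obtain ⟨b, p, hPe, hp, hb⟩ := exists_factor P hP x
  obtain ⟨a, q, hQe, hq, ha⟩ := exists_factor Q hQ x
  have e1 : P * Q = (X - C x) ^ (b + a) * (p * q) := by rw [hPe, hQe]; ring
  have hpq : eval x (p * q) ≠ 0 := by simp [hp, hq]
  have d1 : (X - C x) ^ b ∣ Q ↔ b ≤ a := by rw [hQe, not_dvd_factor hq]
  have d2 : (X - C x) ^ a ∣ P ↔ a ≤ b := by rw [hPe, not_dvd_factor hp]
  unfold indAt
  rw [← ha, ← hb, mul_comm Q P]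
  simp only [d1, d2]
  rcases lt_trichotomy a b with h | h | h
  · rw [if_neg (by omega), if_pos (by omega), add_zero]
  · rw [if_pos (by omega), if_pos (by omega), e1, J_factor _ _ _ hpq, if_neg]
    · simp
    · rw [h]; simp
  · rw [if_pos (by omega), if_neg (by omega), zero_add]

lemma indAt_nonroot (x : ℝ) (P Q : ℝ[X]) (h : ¬ P.IsRoot x) : indAt x Q P = 0 := by
  simp [indAt, rootMultiplicity_eq_zero h]

lemma ind_add (P Q : ℝ[X]) (hP : P ≠ 0) (hQ : Q ≠ 0) :
    ind Q P + ind P Q = ∑ x ∈ (P * Q).roots.toFinset, J x (P * Q) := by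
  have hPQ := mul_ne_zero hP hQ
  have key : ∀ A B : ℝ[X], A ≠ 0 → A ∣ P * Q →
      ind B A = ∑ x ∈ (P * Q).roots.toFinset, indAt x B A := by
    intro A B hA hd
    apply Finset.sum_subset
    · intro x hx
      simp only [Multiset.mem_toFinset, mem_roots hA, mem_roots hPQ] at hx ⊢
      exact hx.dvd hd
    · intro x _ hx
      apply indAt_nonroot
      simpa [mem_roots hA, hA] using hx
  rw [key P Q hP (dvd_mul_right _ _), key Q P hQ (dvd_mul_left _ _), ← Finset.sum_add_distrib]
  exact Finset.sum_congr rfl fun x _ => indAt_add x P Q hP hQ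

lemma indAt_deriv (x : ℝ) (P : ℝ[X]) (hP : P ≠ 0) (hx : P.IsRoot x) :
    indAt x (derivative P) P = 1 := by
  obtain ⟨b, p, hPe, hp, hb⟩ := exists_factor P hP x
  have hb0 : 0 < b := by rw [hb]; exact (rootMultiplicity_pos hP).2 hx
  obtain ⟨k, rfl⟩ : ∃ k, b = k + 1 := ⟨b - 1, by omega⟩
  have e : derivative P = (X - C x) ^ k * (C ((k : ℝ) + 1) * p + (X - C x) * derivative p) := by
    rw [hPe, derivative_mul, derivative_X_sub_C_pow]
    simp only [Nat.add_sub_cancel, map_add, map_natCast, map_one, Nat.cast_add, Nat.cast_one]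
    ring
  have e3 : eval x (C ((k : ℝ) + 1) * p + (X - C x) * derivative p) = ((k : ℝ) + 1) * eval x p := by
    simp
  have hk : (0 : ℝ) < (k : ℝ) + 1 := by positivity
  have hne : eval x (C ((k : ℝ) + 1) * p + (X - C x) * derivative p) ≠ 0 := by
    rw [e3]; exact mul_ne_zero hk.ne' hp
  unfold indAt
  rw [← hb, if_neg (by rw [e, not_dvd_factor hne]; omega)]
  have e1 : P * derivative P = (X - C x) ^ (2 * k + 1) *
      (p * (C ((k : ℝ) + 1) * p + (X - C x) * derivative p)) := by
    rw [e]; nth_rewrite 1 [hPe]; ring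
  have e4 : eval x (p * (C ((k : ℝ) + 1) * p + (X - C x) * derivative p)) =
      ((k : ℝ) + 1) * (eval x p * eval x p) := by rw [eval_mul, e3]; ring
  have hpos : 0 < ((k : ℝ) + 1) * (eval x p * eval x p) :=
    mul_pos hk (mul_self_pos.2 hp)
  rw [e1, J_factor _ _ _ (by rw [e4]; exact hpos.ne'), if_pos (by simp), e4, sg_pos hpos]

lemma ind_deriv_ne_zero (P : ℝ[X]) (hP : P ≠ 0) :
    ind (derivative P) P ≠ 0 ↔ ∃ x, P.eval x = 0 := by
  have : ind (derivative P) P = (P.roots.toFinset.card : ℤ) := by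
    unfold ind
    rw [Finset.sum_congr rfl (g := fun _ => (1 : ℤ))]
    · simp
    · intro x hx
      apply indAt_deriv x P hP
      simpa [mem_roots hP, hP] using hx
  rw [this]
  simp only [ne_eq, Nat.cast_eq_zero, Finset.card_eq_zero, ← Finset.nonempty_iff_ne_empty]
  constructor
  · rintro ⟨x, hx⟩; exact ⟨x, by simpa [hP] using hx⟩
  · rintro ⟨x, hx⟩; exact ⟨x, by simpa [hP] using hx⟩

/-- no roots at or beyond `r`: sign is the sign of the leading coefficient -/
lemma sg_eval_of_no_roots (h : ℝ[X]) (r : ℝ) (hr : ∀ x, r ≤ x → h.eval x ≠ 0) :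
    sg (h.eval r) = sg h.leadingCoeff := by
  have main : ∀ g : ℝ[X], (∀ x, r ≤ x → g.eval x ≠ 0) → 0 < g.leadingCoeff → 0 < g.eval r := by
    intro g hg hl
    by_cases hd : 0 < g.degree
    · have ht := tendsto_atTop_of_leadingCoeff_nonneg g hd hl.le
      obtain ⟨y, hy1, hy2⟩ := ((ht.eventually_gt_atTop 0).and
        (Filter.eventually_ge_atTop r)).exists
      by_contra hneg
      have := intermediate_value_Icc hy2 (f := fun x => g.eval x) g.continuous.continuousOn
      obtain ⟨z, hz, hz0⟩ := this ⟨not_lt.1 hneg, hy1.le⟩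
      exact hg z hz.1 hz0
    · rw [eq_C_of_degree_le_zero (not_lt.1 hd)] at hl ⊢
      simpa using hl
  have h0 : h ≠ 0 := by rintro rfl; simpa using hr r le_rfl
  rcases lt_or_gt_of_ne (leadingCoeff_ne_zero.2 h0) with hl | hl
  · have := main (-h) (by simpa using hr) (by simpa using hl)
    rw [sg_neg hl, sg_neg (by simpa using this)]
  · rw [sg_pos hl, sg_pos (main h hr hl)]

lemma even_natDegree_of_no_roots (g : ℝ[X]) (hg : ∀ x, g.eval x ≠ 0) : ¬ Odd g.natDegree := by
  intro ho
  have h1 := sg_eval_of_no_roots g 0 (fun x _ => hg x)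
  have h2 := sg_eval_of_no_roots (g.comp (-X)) 0 (fun x _ => by simpa using hg (-x))
  rw [comp_neg_X_leadingCoeff_eq, ho.neg_one_pow] at h2
  have h0 : g ≠ 0 := by rintro rfl; simpa using hg 0
  have h3 : g.leadingCoeff ≠ 0 := leadingCoeff_ne_zero.2 h0
  simp only [eval_comp, eval_neg, eval_X, neg_zero] at h2
  rw [h1, sg_mul, sg_neg (show (-1 : ℝ) < 0 by norm_num)] at h2
  rcases lt_or_gt_of_ne h3 with hl | hl
  · rw [sg_neg hl] at h2; norm_num at h2
  · rw [sg_pos hl] at h2; norm_num at h2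

lemma sum_J (g : ℝ[X]) (hg : g ≠ 0) :
    ∑ x ∈ g.roots.toFinset, J x g = if Odd g.natDegree then sg g.leadingCoeff else 0 := by
  induction hN : g.natDegree using Nat.strong_induction_on generalizing g with
  | _ N ih =>
  by_cases hr : g.roots.toFinset.Nonempty
  · set r := g.roots.toFinset.max' hr with hrdef
    have hrm : r ∈ g.roots.toFinset := Finset.max'_mem _ _
    have hrroot : g.IsRoot r := by simpa [hg] using hrm
    have hmax : ∀ x, g.eval x = 0 → x ≤ r := fun x hx =>
      Finset.le_max' _ _ (by simpa [hg] using hx)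
    obtain ⟨v, h, hge, hh, hv⟩ := exists_factor g hg r
    have hv0 : 0 < v := by rw [hv]; exact (rootMultiplicity_pos hg).2 hrroot
    have hh0 : h ≠ 0 := by rintro rfl; simp at hh
    have hdeg : g.natDegree = v + h.natDegree := by
      rw [hge, natDegree_mul (pow_ne_zero _ (X_sub_C_ne_zero r)) hh0, natDegree_pow,
        natDegree_X_sub_C, mul_one]
    have hlc : g.leadingCoeff = h.leadingCoeff := by
      rw [hge, leadingCoeff_mul, leadingCoeff_pow, leadingCoeff_X_sub_C, one_pow, one_mul]
    have hroots : g.roots.toFinset = insert r h.roots.toFinset := by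
      ext x
      simp only [Finset.mem_insert, Multiset.mem_toFinset, mem_roots hg, mem_roots hh0, IsRoot.def]
      rw [hge]; simp [hv0.ne', sub_eq_zero]
    have hnot : r ∉ h.roots.toFinset := by simp [hh0, hh]
    have hlt : ∀ x ∈ h.roots.toFinset, x < r := by
      intro x hx
      have hx' : h.eval x = 0 := by simpa [hh0] using hx
      refine lt_of_le_of_ne (hmax x (by rw [hge]; simp [hx'])) ?_
      rintro rfl; exact hh hx'
    have hsgn : sg (h.eval r) = sg h.leadingCoeff := by
      apply sg_eval_of_no_roots
      intro x hx hx0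
      exact absurd (hlt x (by simpa [hh0] using hx0)) (not_lt.2 hx)
    have hJr : J r g = if Odd v then sg h.leadingCoeff else 0 := by
      rw [hge, J_factor _ _ _ hh, hsgn]
    have hJx : ∀ x ∈ h.roots.toFinset, J x g = (-1) ^ v * J x h := by
      intro x hx
      obtain ⟨n, k, hk, hkx, -⟩ := exists_factor h hh0 x
      have hxr : x - r < 0 := sub_neg.2 (hlt x hx)
      have e : g = (X - C x) ^ n * ((X - C r) ^ v * k) := by rw [hge, hk]; ring
      have e2 : eval x ((X - C r) ^ v * k) = (x - r) ^ v * eval x k := by simp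
      rw [e, J_factor _ _ _ (by rw [e2]; exact mul_ne_zero (pow_ne_zero _ hxr.ne) hkx), e2, hk,
        J_factor _ _ _ hkx, sg_mul, sg_neg_pow hxr]
      split_ifs <;> simp
    rw [hroots, Finset.sum_insert hnot, Finset.sum_congr rfl hJx, ← Finset.mul_sum,
      ih h.natDegree (by omega) h hh0 rfl, hJr, hlc, ← hN, hdeg]
    rcases Nat.even_or_odd v with hve | hvo
    · simp [hve, Nat.even_add, ← Nat.not_even_iff_odd]
    · rw [hvo.neg_one_pow]
      by_cases ho : Odd h.natDegree <;> simp [Nat.odd_add, hvo, ho, ← Nat.not_odd_iff_even]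
  · rw [Finset.not_nonempty_iff_eq_empty] at hr
    rw [hr, Finset.sum_empty, if_neg]
    rw [← hN]
    apply even_natDegree_of_no_roots
    intro x hx
    have : x ∈ g.roots.toFinset := by simpa [hg] using hx
    rw [hr] at this; simp at this

lemma ind_swap (P Q : ℝ[X]) (hP : P ≠ 0) (hQ : Q ≠ 0) :
    ind Q P = (if Odd (P.natDegree + Q.natDegree) then sg P.leadingCoeff * sg Q.leadingCoeff
      else 0) - ind P Q := by
  have h := ind_add P Q hP hQ
  rw [sum_J _ (mul_ne_zero hP hQ), natDegree_mul hP hQ, leadingCoeff_mul, sg_mul] at h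
  rw [← h]; ring

end VCSeg

namespace VCSeg
open Polynomial

lemma deg_aux {R : Type*} [Semiring R] {E P : R[X]} {n : ℕ} (h : P.degree < ((n + 1 : ℕ) : WithBot ℕ))
    (hE : E.degree < P.degree) : E.degree < (n : WithBot ℕ) := by
  have hP : P ≠ 0 := by rintro rfl; simp at hE
  rw [degree_eq_natDegree hP] at h hE
  refine lt_of_lt_of_le hE ?_
  have : P.natDegree < n + 1 := by exact_mod_cast h
  exact_mod_cast Nat.lt_succ_iff.1 this

lemma map_eraseLead_of {R : Type*} [CommRing R] (φ : R →+* ℝ) (P : R[X])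
    (h : φ P.leadingCoeff = 0) : P.map φ = P.eraseLead.map φ := by
  conv_lhs => rw [← eraseLead_add_C_mul_X_pow P]
  rw [Polynomial.map_add, Polynomial.map_mul, map_C, h, C_0, zero_mul, add_zero]

lemma degree_reduce {R : Type*} [CommRing R] (P Q : R[X]) (hQ : Q ≠ 0)
    (h : P.natDegree ≤ Q.natDegree) :
    (C (P.leadingCoeff ^ 2) * Q +
      (-(C (P.leadingCoeff * Q.leadingCoeff) * X ^ (Q.natDegree - P.natDegree))) * P).degree
      < Q.degree := by
  rw [degree_eq_natDegree hQ, degree_lt_iff_coeff_zero]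
  intro m hm
  have e : (-(C (P.leadingCoeff * Q.leadingCoeff) * X ^ (Q.natDegree - P.natDegree))) * P
      = -(C (P.leadingCoeff * Q.leadingCoeff) * (P * X ^ (Q.natDegree - P.natDegree))) := by ring
  rw [e, coeff_add, coeff_neg, coeff_C_mul, coeff_C_mul, coeff_mul_X_pow', if_pos (by omega)]
  rcases hm.eq_or_lt with rfl | hlt
  · have : Q.natDegree - (Q.natDegree - P.natDegree) = P.natDegree := by omega
    rw [this, coeff_natDegree, coeff_natDegree]; ring
  · rw [coeff_eq_zero_of_natDegree_lt hlt, coeff_eq_zero_of_natDegree_lt (by omega)]; simp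

lemma ind_reduce {R : Type*} [CommRing R] (P Q : R[X]) (φ : R →+* ℝ) (k : ℕ)
    (h : φ P.leadingCoeff ≠ 0) :
    ind ((C (P.leadingCoeff ^ 2) * Q +
      (-(C (P.leadingCoeff * Q.leadingCoeff) * X ^ k)) * P).map φ) (P.map φ)
      = ind (Q.map φ) (P.map φ) := by
  rw [Polynomial.map_add, Polynomial.map_mul, Polynomial.map_mul, map_C]
  apply ind_mod
  rw [map_pow]; positivity

/-- The Cauchy index of specializations is determined by finitely many signs. -/
lemma ind_uniform {R : Type*} [CommRing R] (N : ℕ) : ∀ (n m : ℕ), n + m ≤ N → ∀ (P Q : R[X]),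
    P.degree < (n : WithBot ℕ) → Q.degree < (m : WithBot ℕ) →
    ∃ G : Finset R, ∀ φ ψ : R →+* ℝ, (∀ g ∈ G, sg (φ g) = sg (ψ g)) →
      ind (Q.map φ) (P.map φ) = ind (Q.map ψ) (P.map ψ) := by
  classical
  have sgz : ∀ a b : ℝ, sg a = sg b → a = 0 → b = 0 := by
    intro a b h ha
    subst ha
    rcases lt_trichotomy b 0 with hb | hb | hb
    · rw [sg_neg hb] at h; simp [sg] at h
    · exact hb
    · rw [sg_pos hb] at h; simp [sg] at h
  induction N with
  | zero =>
    intro n m hnm P Q hP hQ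
    obtain rfl : n = 0 := by omega
    have : P = 0 := by
      by_contra h
      rw [degree_eq_natDegree h] at hP
      have : P.natDegree < 0 := by exact_mod_cast hP
      omega
    exact ⟨∅, fun φ ψ _ => by simp [this, ind_zero_right]⟩
  | succ N ih =>
    intro n m hnm P Q hP hQ
    by_cases hP0 : P = 0
    · exact ⟨∅, fun φ ψ _ => by simp [hP0, ind_zero_right]⟩
    by_cases hQ0 : Q = 0
    · exact ⟨∅, fun φ ψ _ => by simp [hQ0, ind_zero_left]⟩
    have posn : ∀ (A : R[X]) (k : ℕ), A ≠ 0 → A.degree < (k : WithBot ℕ) → ∃ l, k = l + 1 := by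
      intro A k hA hk
      rw [degree_eq_natDegree hA] at hk
      have : A.natDegree < k := by exact_mod_cast hk
      exact ⟨k - 1, by omega⟩
    obtain ⟨n, rfl⟩ := posn P n hP0 hP
    obtain ⟨m, rfl⟩ := posn Q m hQ0 hQ
    obtain ⟨G1, hG1⟩ := ih n (m + 1) (by omega) P.eraseLead Q
      (deg_aux hP (degree_eraseLead_lt hP0)) hQ
    obtain ⟨G2, hG2⟩ := ih (n + 1) m (by omega) P Q.eraseLead hP
      (deg_aux hQ (degree_eraseLead_lt hQ0))
    suffices hmain : ∃ G3 : Finset R, ∀ φ ψ : R →+* ℝ, (∀ g ∈ G3, sg (φ g) = sg (ψ g)) →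
        sg (φ P.leadingCoeff) = sg (ψ P.leadingCoeff) →
        sg (φ Q.leadingCoeff) = sg (ψ Q.leadingCoeff) →
        φ P.leadingCoeff ≠ 0 → φ Q.leadingCoeff ≠ 0 → ψ P.leadingCoeff ≠ 0 →
        ψ Q.leadingCoeff ≠ 0 → ind (Q.map φ) (P.map φ) = ind (Q.map ψ) (P.map ψ) by
      obtain ⟨G3, hG3⟩ := hmain
      refine ⟨{P.leadingCoeff, Q.leadingCoeff} ∪ G1 ∪ G2 ∪ G3, fun φ ψ h => ?_⟩
      have hp := h P.leadingCoeff (by simp)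
      have hq := h Q.leadingCoeff (by simp)
      by_cases h1 : φ P.leadingCoeff = 0
      · rw [map_eraseLead_of φ P h1, map_eraseLead_of ψ P (sgz _ _ hp h1)]
        exact hG1 φ ψ fun g hg => h g (by simp [hg])
      by_cases h2 : φ Q.leadingCoeff = 0
      · rw [map_eraseLead_of φ Q h2, map_eraseLead_of ψ Q (sgz _ _ hq h2)]
        exact hG2 φ ψ fun g hg => h g (by simp [hg])
      exact hG3 φ ψ (fun g hg => h g (by simp [hg])) hp hq h1 h2
        (fun h0 => h1 (sgz _ _ hp.symm h0)) (fun h0 => h2 (sgz _ _ hq.symm h0))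
    rcases le_total P.natDegree Q.natDegree with hle | hle
    · obtain ⟨G3, hG3⟩ := ih (n + 1) m (by omega) P _ hP (deg_aux hQ (degree_reduce P Q hQ0 hle))
      refine ⟨G3, fun φ ψ h _ _ h1 _ h3 _ => ?_⟩
      have := hG3 φ ψ h
      rwa [ind_reduce P Q φ _ h1, ind_reduce P Q ψ _ h3] at this
    · obtain ⟨G3, hG3⟩ := ih (m + 1) n (by omega) Q _ hQ (deg_aux hP (degree_reduce Q P hP0 hle))
      refine ⟨G3, fun φ ψ h hp hq h1 h2 h3 h4 => ?_⟩
      have := hG3 φ ψ h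
      rw [ind_reduce Q P φ _ h2, ind_reduce Q P ψ _ h4] at this
      have nz : ∀ (χ : R →+* ℝ) (A : R[X]), χ A.leadingCoeff ≠ 0 → A.map χ ≠ 0 := by
        intro χ A hA h0
        have := leadingCoeff_map_of_leadingCoeff_ne_zero χ hA
        rw [h0] at this
        exact hA (by rw [← this]; simp)
      rw [ind_swap _ _ (nz φ P h1) (nz φ Q h2), ind_swap _ _ (nz ψ P h3) (nz ψ Q h4), this,
        natDegree_map_of_leadingCoeff_ne_zero φ h1, natDegree_map_of_leadingCoeff_ne_zero φ h2,
        natDegree_map_of_leadingCoeff_ne_zero ψ h3, natDegree_map_of_leadingCoeff_ne_zero ψ h4,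
        leadingCoeff_map_of_leadingCoeff_ne_zero φ h1, leadingCoeff_map_of_leadingCoeff_ne_zero φ h2,
        leadingCoeff_map_of_leadingCoeff_ne_zero ψ h3, leadingCoeff_map_of_leadingCoeff_ne_zero ψ h4,
        hp, hq]

lemma eq_zero_of_sg {a b : ℝ} (h : sg a = sg b) (ha : a = 0) : b = 0 := by
  subst ha
  rcases lt_trichotomy b 0 with hb | hb | hb
  · rw [sg_neg hb] at h; simp [sg] at h
  · exact hb
  · rw [sg_pos hb] at h; simp [sg] at h

/-- Existence of a real root of a specialization is determined by finitely many signs. -/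
lemma root_uniform {R : Type*} [CommRing R] (P : R[X]) :
    ∃ G : Finset R, ∀ φ ψ : R →+* ℝ, (∀ g ∈ G, sg (φ g) = sg (ψ g)) →
      ((∃ s, (P.map φ).eval s = 0) → ∃ s, (P.map ψ).eval s = 0) := by
  classical
  obtain ⟨G, hG⟩ := ind_uniform (R := R) _ (P.natDegree + 1) ((derivative P).natDegree + 1) le_rfl
    P (derivative P) (lt_of_le_of_lt degree_le_natDegree (by exact_mod_cast Nat.lt_succ_self _))
      (lt_of_le_of_lt degree_le_natDegree (by exact_mod_cast Nat.lt_succ_self _))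
  refine ⟨G ∪ P.coeffs, fun φ ψ h hs => ?_⟩
  by_cases h0 : P.map ψ = 0
  · exact ⟨0, by simp [h0]⟩
  have h1 : P.map φ ≠ 0 := by
    intro h1
    apply h0
    ext k
    rw [coeff_map, coeff_zero]
    by_cases hk : P.coeff k = 0
    · simp [hk]
    · refine eq_zero_of_sg (h (P.coeff k) ?_) ?_
      · exact Finset.mem_union_right _ (coeff_mem_coeffs hk)
      · rw [← coeff_map, h1, coeff_zero]
  have := hG φ ψ fun g hg => h g (by simp [hg])
  rw [← derivative_map, ← derivative_map] at this
  rw [← ind_deriv_ne_zero _ h0, ← this, ind_deriv_ne_zero _ h1]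
  exact hs

end VCSeg

namespace VCSeg

lemma sum_choose_le (n b v : ℕ) (hv : v ≤ b) : ∑ k ∈ Finset.Iic v, n.choose k ≤ (n + 1) ^ b := by
  rw [add_pow]
  have hsub : Finset.Iic v ⊆ Finset.range (b + 1) := by
    intro k hk; simp at hk ⊢; omega
  refine (Finset.sum_le_sum_of_subset hsub).trans (Finset.sum_le_sum fun k hk => ?_)
  have hk' : k ≤ b := by simp at hk; omega
  rw [one_pow, mul_one]
  calc n.choose k ≤ n ^ k := Nat.choose_le_pow n k
    _ = n ^ k * 1 := (mul_one _).symm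
    _ ≤ n ^ k * b.choose k := Nat.mul_le_mul_left _ (Nat.choose_pos hk')

open Classical in
/-- Number of positivity patterns of linear functionals. -/
lemma card_patterns {T B : Type*} [Fintype T] [Fintype B] (L : T → B → ℝ)
    (𝒜 : Finset (Finset T))
    (h𝒜 : ∀ S ∈ 𝒜, ∃ v : B → ℝ, ∀ τ, τ ∈ S ↔ 0 < ∑ β, L τ β * v β) :
    𝒜.card ≤ (Fintype.card T + 1) ^ Fintype.card B := by
  refine (Finset.card_le_card_shatterer 𝒜).trans
    ((Finset.card_shatterer_le_sum_vcDim).trans (sum_choose_le _ _ _ ?_))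
  refine Finset.sup_le fun S hS => ?_
  rw [Finset.mem_shatterer] at hS
  by_contra hcard
  rw [not_le] at hcard
  have hdep : ¬ LinearIndependent ℝ (fun τ : S => L τ) := by
    intro hli
    have := hli.fintype_card_le_finrank
    simp at this
    omega
  rw [Fintype.not_linearIndependent_iff] at hdep
  obtain ⟨a, ha, τ0, hτ0⟩ := hdep
  have key : ∀ a : S → ℝ, ∑ τ, a τ • L τ = 0 → ∀ τ0, 0 < a τ0 → False := by
    intro a ha τ0 hτ0
    obtain ⟨U, hU, hSU⟩ := hS (t := S.filter fun τ => ∃ h : τ ∈ S, 0 < a ⟨τ, h⟩)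
      (Finset.filter_subset _ _)
    obtain ⟨v, hv⟩ := h𝒜 U hU
    have hiff : ∀ τ : S, (0 < ∑ β, L τ β * v β) ↔ 0 < a τ := by
      intro τ
      rw [← hv]
      have : (τ : T) ∈ S ∩ U ↔ (τ : T) ∈ S.filter fun τ => ∃ h : τ ∈ S, 0 < a ⟨τ, h⟩ := by
        rw [hSU]
      simpa using this
    have hzero : ∑ τ : S, a τ * ∑ β, L τ β * v β = 0 := by
      have e : ∑ τ : S, a τ * ∑ β, L τ β * v β = ∑ β, (∑ τ : S, a τ • L τ) β * v β := by
        simp only [Finset.mul_sum, Finset.sum_apply, Finset.sum_mul, Pi.smul_apply, smul_eq_mul]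
        rw [Finset.sum_comm]
        refine Finset.sum_congr rfl fun _ _ => Finset.sum_congr rfl fun _ _ => by ring
      rw [e, ha]; simp
    have hpos : 0 < ∑ τ : S, a τ * ∑ β, L τ β * v β := by
      apply Finset.sum_pos'
      · intro τ _
        by_cases h : 0 < a τ
        · exact (mul_pos h ((hiff τ).2 h)).le
        · have h' := fun hh => h ((hiff τ).1 hh)
          exact mul_nonneg_of_nonpos_of_nonpos (not_lt.1 h) (not_lt.1 h')
      · exact ⟨τ0, Finset.mem_univ _, mul_pos hτ0 ((hiff τ0).2 hτ0)⟩
    exact hpos.ne' hzero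
  rcases lt_or_gt_of_ne hτ0 with h | h
  · exact key (-a) (by simpa using ha) τ0 (by simpa using h)
  · exact key a ha τ0 h

lemma log_bound (g b : ℕ) : ∃ c : ℝ, 0 < c ∧ ∀ K : ℕ, 2 ≤ K → ∀ m : ℕ,
    2 ^ m ≤ (m * (K * (g * 2)) + 1) ^ b → (m : ℝ) ≤ c * Real.log K := by
  have hl2 : 0 < Real.log 2 := Real.log_pos (by norm_num)
  set b' : ℝ := (b : ℝ) + 1 with hb'
  have hb0 : 0 < b' := by positivity
  set a : ℝ := 2 * b' / Real.log 2 with ha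
  have ha0 : 0 < a := by positivity
  set D : ℝ := |Real.log (2 * g + 1)| + |Real.log a| with hD
  have hD0 : 0 ≤ D := by positivity
  refine ⟨2 / Real.log 2 * (b' * (D / Real.log 2 + 1)), by positivity, fun K hK m hm => ?_⟩
  have hK2 : (2 : ℝ) ≤ K := by exact_mod_cast hK
  have hlK : Real.log 2 ≤ Real.log K := Real.log_le_log (by norm_num) hK2
  rcases Nat.eq_zero_or_pos m with rfl | hm0
  · have : 0 < Real.log K := lt_of_lt_of_le hl2 hlK
    simp only [Nat.cast_zero]; positivity
  have hm1 : (1 : ℝ) ≤ m := by exact_mod_cast hm0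
  have h1 : (2 : ℝ) ^ m ≤ ((2 * g + 1) * m * K) ^ (b + 1) := by
    have h2 : (2 : ℝ) ^ m ≤ ((m : ℝ) * (K * (g * 2)) + 1) ^ b := by exact_mod_cast hm
    have hmK : (1 : ℝ) ≤ m * K := by nlinarith
    have h3 : (m : ℝ) * (K * (g * 2)) + 1 ≤ (2 * g + 1) * m * K := by nlinarith
    have h4 : (1 : ℝ) ≤ (2 * g + 1) * m * K := by
      refine le_trans ?_ h3
      have : (0 : ℝ) ≤ (m : ℝ) * (K * (g * 2)) := by positivity
      linarith
    calc _ ≤ _ := h2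
      _ ≤ ((2 * g + 1) * m * K : ℝ) ^ b := by gcongr
      _ ≤ _ := pow_le_pow_right₀ h4 (Nat.le_succ b)
  have h2 := Real.log_le_log (by positivity) h1
  rw [Real.log_pow, Real.log_pow, Real.log_mul (by positivity) (by positivity),
    Real.log_mul (by positivity) (by positivity)] at h2
  push_cast at h2
  rw [← hb'] at h2
  have h3 : Real.log m ≤ m / a + |Real.log a| := by
    have := Real.log_le_sub_one_of_pos (show 0 < (m : ℝ) / a by positivity)
    rw [Real.log_div (by positivity) (by positivity)] at this
    linarith [le_abs_self (Real.log a)]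
  have h4 := le_abs_self (Real.log (2 * g + 1))
  have h5 : b' * (m / a) = m * Real.log 2 / 2 := by
    rw [ha]; field_simp
  have h6 : (m : ℝ) * Real.log 2 ≤ b' * (D + Real.log K) + m * Real.log 2 / 2 := by
    rw [← h5, ← mul_add]
    refine h2.trans (mul_le_mul_of_nonneg_left ?_ hb0.le)
    rw [hD]; linarith
  have h7 : D ≤ D / Real.log 2 * Real.log K := by
    rw [div_mul_eq_mul_div, le_div_iff₀ hl2]
    exact mul_le_mul_of_nonneg_left hlK hD0
  have h8 : b' * (D + Real.log K) ≤ b' * ((D / Real.log 2 + 1) * Real.log K) :=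
    mul_le_mul_of_nonneg_left (by linarith) hb0.le
  have h9 : (m : ℝ) ≤ 2 / Real.log 2 * (b' * ((D / Real.log 2 + 1) * Real.log K)) := by
    rw [div_mul_eq_mul_div, le_div_iff₀ hl2]
    linarith
  linarith [h9]

end VCSeg

namespace VCSeg
open Polynomial

/-- coefficient ring: polynomials in the segment parameters (base point, direction) with
coefficients polynomial in the coefficients of the hypersurface -/
abbrev PR (p : ℕ) : Type := MvPolynomial (Fin p ⊕ Fin p) (MvPolynomial (Fin p →₀ ℕ) ℝ)

noncomputable def expo (d p : ℕ) : Finset (Fin p →₀ ℕ) :=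
  (Finsupp.finite_of_degree_le (σ := Fin p) d).toFinset

/-- universal restriction to a segment, reparametrized by the real line -/
noncomputable def univF (d p : ℕ) : (PR p)[X] :=
  ∑ α ∈ expo d p, C (MvPolynomial.C (MvPolynomial.X α)) *
    ∏ j, ((C (MvPolynomial.X (Sum.inl j)) * (2 * (1 + X ^ 2)) +
      C (MvPolynomial.X (Sum.inr j)) * (1 + X) ^ 2) ^ (α j) * (2 * (1 + X ^ 2)) ^ (d - α j))

noncomputable def spec {p : ℕ} (f : MvPolynomial (Fin p) ℝ) (y : Fin p ⊕ Fin p → ℝ) :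
    PR p →+* ℝ :=
  MvPolynomial.eval₂Hom (MvPolynomial.eval fun α => MvPolynomial.coeff α f) y

lemma eval_univF (d p : ℕ) (f : MvPolynomial (Fin p) ℝ) (hf : f.totalDegree ≤ d)
    (x w : Fin p → ℝ) (s : ℝ) :
    ((univF d p).map (spec f (Sum.elim x w))).eval s = ((2 * (1 + s ^ 2)) ^ d) ^ p *
      MvPolynomial.eval (fun j => x j + (1 + s) ^ 2 / (2 * (1 + s ^ 2)) * w j) f := by
  have hq : (2 * (1 + s ^ 2)) ≠ 0 := by positivity
  have hsub : f.support ⊆ expo d p := by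
    intro α hα
    have := (MvPolynomial.le_totalDegree hα).trans hf
    simp only [expo, Set.Finite.mem_toFinset]
    exact this
  rw [MvPolynomial.eval_eq', Finset.sum_subset hsub
    (fun α _ hα => by rw [MvPolynomial.notMem_support_iff.1 hα, zero_mul])]
  rw [univF, Polynomial.map_sum, eval_finsetSum, Finset.mul_sum]
  refine Finset.sum_congr rfl fun α hα => ?_
  have hαd : ∀ j, α j ≤ d := by
    intro j
    have h1 : α.degree ≤ d := by simpa [expo] using hα
    exact (Finsupp.le_degree j α).trans h1
  simp only [Polynomial.map_mul, Polynomial.map_prod, Polynomial.map_pow, Polynomial.map_add,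
    map_C, map_X, Polynomial.map_one, Polynomial.map_ofNat, eval_mul, eval_prod, eval_pow, eval_add, eval_C,
    eval_X, eval_one, eval_ofNat, spec, MvPolynomial.coe_eval₂Hom, MvPolynomial.eval₂_C,
    MvPolynomial.eval₂_X, MvPolynomial.eval_X, Sum.elim_inl, Sum.elim_inr]
  rw [mul_left_comm]
  congr 1
  have : ((2 * (1 + s ^ 2)) ^ d) ^ p = ∏ _j : Fin p, (2 * (1 + s ^ 2)) ^ d := by simp
  rw [this, ← Finset.prod_mul_distrib]
  refine Finset.prod_congr rfl fun j _ => ?_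
  have e : x j * (2 * (1 + s ^ 2)) + w j * (1 + s) ^ 2 =
      (2 * (1 + s ^ 2)) * (x j + (1 + s) ^ 2 / (2 * (1 + s ^ 2)) * w j) := by
    field_simp
  rw [e, mul_pow]
  have : (2 * (1 + s ^ 2)) ^ d = (2 * (1 + s ^ 2)) ^ (α j) * (2 * (1 + s ^ 2)) ^ (d - α j) := by
    rw [← pow_add, Nat.add_sub_cancel' (hαd j)]
  rw [this]; ring

lemma param_mem (s : ℝ) : (1 + s) ^ 2 / (2 * (1 + s ^ 2)) ∈ Set.Icc (0 : ℝ) 1 := by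
  refine ⟨by positivity, ?_⟩
  rw [div_le_one (by positivity)]
  nlinarith [sq_nonneg (1 - s)]

lemma param_surj (t : ℝ) (ht : t ∈ Set.Icc (0 : ℝ) 1) :
    ∃ s : ℝ, (1 + s) ^ 2 / (2 * (1 + s ^ 2)) = t := by
  have hc : Continuous fun s : ℝ => (1 + s) ^ 2 / (2 * (1 + s ^ 2)) := by
    apply Continuous.div (by fun_prop) (by fun_prop)
    intro s; positivity
  have := intermediate_value_Icc (show (-1 : ℝ) ≤ 1 by norm_num) hc.continuousOn
  norm_num at this
  obtain ⟨s, -, hs⟩ := this ht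
  exact ⟨s, hs⟩

lemma meets_iff (d p : ℕ) (f : MvPolynomial (Fin p) ℝ) (hf : f.totalDegree ≤ d)
    (x : Fin p → ℝ) (i : Fin p) (ℓ : ℝ) (hℓ : 0 ≤ ℓ) :
    ({x : Fin p → ℝ | MvPolynomial.eval x f = 0} ∩
      {y : Fin p → ℝ | ∃ t ∈ Set.Icc (0 : ℝ) ℓ, y = x + t • (Pi.single i 1 : Fin p → ℝ)}).Nonempty
    ↔ ∃ s, ((univF d p).map (spec f (Sum.elim x (ℓ • (Pi.single i 1 : Fin p → ℝ))))).eval s = 0 := by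
  simp only [eval_univF d p f hf]
  constructor
  · rintro ⟨y, hy, t, ht, rfl⟩
    obtain ⟨s, hs⟩ : ∃ s : ℝ, (1 + s) ^ 2 / (2 * (1 + s ^ 2)) * ℓ = t := by
      rcases hℓ.eq_or_lt with h | h
      · subst h
        exact ⟨0, by rw [mul_zero]; exact le_antisymm ht.1 ht.2⟩
      · obtain ⟨s, hs⟩ := param_surj (t / ℓ) ⟨div_nonneg ht.1 hℓ, (div_le_one h).2 ht.2⟩
        exact ⟨s, by rw [hs]; field_simp⟩
    refine ⟨s, mul_eq_zero_of_right _ ?_⟩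
    rw [Set.mem_ofPred_eq] at hy
    rw [← hy]
    congr 2
    funext j
    simp only [Pi.add_apply, Pi.smul_apply, smul_eq_mul]
    rw [← mul_assoc, hs]
  · rintro ⟨s, hs⟩
    have h0 : ((2 * (1 + s ^ 2)) ^ d) ^ p ≠ 0 := by positivity
    have hs' := (mul_eq_zero.1 hs).resolve_left h0
    obtain ⟨hp1, hp2⟩ := param_mem s
    refine ⟨_, hs', (1 + s) ^ 2 / (2 * (1 + s ^ 2)) * ℓ,
      ⟨mul_nonneg hp1 hℓ, mul_le_of_le_one_left hℓ hp2⟩, ?_⟩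
    funext j
    simp only [Pi.add_apply, Pi.smul_apply, smul_eq_mul]
    ring

lemma sg_eq_of_iff {a b : ℝ} (h1 : 0 < a ↔ 0 < b) (h2 : 0 < -a ↔ 0 < -b) : sg a = sg b := by
  simp only [neg_pos] at h2
  rcases lt_trichotomy a 0 with h | h | h
  · rw [sg_neg h, sg_neg (h2.1 h)]
  · have : b = 0 := le_antisymm (not_lt.1 fun hb => (h1.2 hb).ne' h)
      (not_lt.1 fun hb => (h2.2 hb).ne h)
    rw [h, this]
  · rw [sg_pos h, sg_pos (h1.1 h)]

lemma spec_eq {p : ℕ} (f : MvPolynomial (Fin p) ℝ) (y : Fin p ⊕ Fin p → ℝ) (g : PR p)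
    (B : Finset (Fin p ⊕ Fin p →₀ ℕ)) (hB : g.support ⊆ B) :
    spec f y g = ∑ β : B, MvPolynomial.eval (fun α => MvPolynomial.coeff α f)
      (MvPolynomial.coeff (β : Fin p ⊕ Fin p →₀ ℕ) g) * ∏ i, y i ^ (β : Fin p ⊕ Fin p →₀ ℕ) i := by
  rw [spec, MvPolynomial.coe_eval₂Hom, MvPolynomial.eval₂_eq', Finset.sum_subset hB
    (fun β _ hβ => by rw [MvPolynomial.notMem_support_iff.1 hβ, map_zero, zero_mul])]
  exact (Finset.sum_coe_sort B (fun β => MvPolynomial.eval (fun α => MvPolynomial.coeff α f)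
      (MvPolynomial.coeff β g) * ∏ i, y i ^ β i)).symm

end VCSeg

/-- The VC dimension of the class `{f_s}` of binary functions indexed by axis-aligned
segments `s`, acting on `K`-tuples of algebraic hypersurfaces of degree at most `d` in
`ℝ^p` by `f_s(γ) = 1` iff some `γ_k` intersects `s`, is at most `c·log K` for a constant
`c` depending only on `d` and `p`: any VC-shattered collection of `m` tuples has
`m ≤ c·log K`. -/
theorem vc_dim_of_segment_labelings_of_tuples (d p : ℕ) (hd : 0 < d) (hp : 0 < p) :
    ∃ c : ℝ, 0 < c ∧ ∀ K : ℕ, 2 ≤ K → ∀ m : ℕ,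
      ∀ γ : Fin m → Fin K → Set (Fin p → ℝ),
        (∀ j k, IsAlgHypersurface d p (γ j k)) →
        (∀ bvec : Fin m → Bool, ∃ s : Set (Fin p → ℝ), IsAxisSegment p s ∧
          ∀ j, ((∃ k, (γ j k ∩ s).Nonempty) ↔ bvec j = true)) →
        (m : ℝ) ≤ c * Real.log K := by
  classical
  obtain ⟨G, hG⟩ := VCSeg.root_uniform (VCSeg.univF d p)
  set B : Finset (Fin p ⊕ Fin p →₀ ℕ) := G.biUnion fun g => g.support with hB
  obtain ⟨c, hc, hcK⟩ := VCSeg.log_bound G.card B.card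
  refine ⟨c, hc, fun K hK m γ hγ hsh => hcK K hK m ?_⟩
  choose f _ hfd hfe using hγ
  choose s hs hlab using hsh
  choose x i ℓ hℓ hse using hs
  -- parameters of the segment
  let y : (Fin m → Bool) → (Fin p ⊕ Fin p → ℝ) := fun b =>
    Sum.elim (x b) (ℓ b • (Pi.single (i b) 1 : Fin p → ℝ))
  have hmeet : ∀ b j k, (γ j k ∩ s b).Nonempty ↔
      ∃ t, ((VCSeg.univF d p).map (VCSeg.spec (f j k) (y b))).eval t = 0 := by
    intro b j k
    rw [hfe, hse]
    exact VCSeg.meets_iff d p (f j k) (hfd j k) (x b) (i b) (ℓ b) (hℓ b)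
  let L : (Fin m × Fin K × G × Bool) → B → ℝ := fun τ β =>
    (if τ.2.2.2 then 1 else -1) *
      MvPolynomial.eval (fun α => MvPolynomial.coeff α (f τ.1 τ.2.1))
        (MvPolynomial.coeff (β : Fin p ⊕ Fin p →₀ ℕ) (τ.2.2.1 : VCSeg.PR p))
  let v : (Fin m → Bool) → B → ℝ := fun b β => ∏ i, y b i ^ (β : Fin p ⊕ Fin p →₀ ℕ) i
  have hL : ∀ b j k (g : G) (e : Bool), ∑ β, L (j, k, g, e) β * v b β =
      (if e then 1 else -1) * VCSeg.spec (f j k) (y b) (g : VCSeg.PR p) := by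
    intro b j k g e
    rw [VCSeg.spec_eq (f j k) (y b) g B (Finset.subset_biUnion_of_mem _ g.2), Finset.mul_sum]
    exact Finset.sum_congr rfl fun β _ => by simp only [L, v]; ring
  let S : (Fin m → Bool) → Finset (Fin m × Fin K × G × Bool) := fun b =>
    Finset.univ.filter fun τ => 0 < ∑ β, L τ β * v b β
  have hmem : ∀ b τ, τ ∈ S b ↔ 0 < ∑ β, L τ β * v b β := fun b τ =>
    Finset.mem_filter.trans (and_iff_right (Finset.mem_univ τ))
  have hinj : Function.Injective S := by
    intro b b' hbb
    have hsg : ∀ j k, ∀ g ∈ G, VCSeg.sg (VCSeg.spec (f j k) (y b) g) =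
        VCSeg.sg (VCSeg.spec (f j k) (y b') g) := by
      intro j k g hg
      have key : ∀ e : Bool, (0 < ∑ β, L (j, k, ⟨g, hg⟩, e) β * v b β) ↔
          (0 < ∑ β, L (j, k, ⟨g, hg⟩, e) β * v b' β) := by
        intro e
        have : (j, k, ⟨g, hg⟩, e) ∈ S b ↔ (j, k, ⟨g, hg⟩, e) ∈ S b' := by rw [hbb]
        rwa [hmem, hmem] at this
      have k1 := key true
      have k2 := key false
      rw [hL, hL] at k1 k2
      simp only [if_true, one_mul] at k1
      simp only [Bool.false_eq_true, if_false, neg_one_mul] at k2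
      exact VCSeg.sg_eq_of_iff k1 k2
    funext j
    rw [Bool.eq_iff_iff, ← hlab b j, ← hlab b' j]
    refine exists_congr fun k => ?_
    rw [hmeet, hmeet]
    exact ⟨hG _ _ (hsg j k), hG _ _ fun g hg => (hsg j k g hg).symm⟩
  have hcard := VCSeg.card_patterns L (Finset.univ.image S) (by
    intro U hU
    obtain ⟨b, -, rfl⟩ := Finset.mem_image.1 hU
    exact ⟨v b, hmem b⟩)
  rw [Finset.card_image_of_injective _ hinj] at hcard
  simpa using hcard
end
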